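/- Let n ≥ 2, N ≥ 2, T > 0, m_1,…,m_N > 0, and let V(t, x_1,…,x_N) = (1/2) Σ_{1≤i≠j≤N} V_{ij}(t, x_i − x_j) where each V_{ij} : ℝ × (ℝ^n \ {0}) → ℝ is twice continuously differentiable and satisfies: (V3) V_{ij}(t, ξ) → −∞ uniformly in t as |ξ| → 0; (V4) V_{ij}(t, ξ) ≤ 0 for all t and ξ ≠ 0; (V5) V_{ij} satisfies Gordon's strong force condition uniformly in t: there exist r₀ > 0 and a C¹ function U on {ξ : 0 < |ξ| < r₀} with U(ξ) → −∞ as ξ → 0 and −V_{ij}(t,ξ) ≥ |∇U(ξ)|² for all t and 0 < |ξ| < r₀. Suppose there is a linear isometry g of ℝ^n and an integer s ≥ 1 with g^s = identity, g v ≠ v for every v ≠ 0, and V(t + T/s, g x_1,…,g x_N) = V(t, x_1,…,x_N) for all t and all non-collision configurations. Then the system m_i ẍ_i(t) + ∇_{x_i} V(t, x_1(t),…,x_N(t)) = 0 (i = 1,…,N) has infinitely many pairwise distinct T-periodic non-collision solutions x = (x_1,…,x_N) satisfying the symmetry x_i(t + T/s) = g x_i(t) for all i and t. -/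

import Mathlib

/-!
The solutions are critical points of the action. Put `P = T / s`. In the mass-weighted coordinates
`Y i = √(m i) x i`, a symmetric solution is a path on `[0, P]` with the twisted boundary condition
`Y P = A (Y 0)`, where `A` applies `g` to every particle. Since `g` has no nonzero fixed vector,
`A - 1` is invertible, so that a twisted path is determined by its velocity `u` (the map `X`), and
the action `½ ∫ |u|² - ∫ W` with `W ≤ 0` controls the whole path. By Gordon's strong force estimate
(`strong_force_bound`, `strong_cfg`), twisted paths of bounded action stay in a compact set of
non-collision configurations. Critical points extend to global `T`-periodic symmetric solutions
(`exists_solution`, `solution_of_crit`), and the action is a function of the solution. It therefore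
suffices to find critical points of arbitrarily high action (`exists_high_crit`).

Suppose that every critical value is smaller than `c`. The Palais–Smale condition (`palais_smale`)
and gradient descent with a uniform step (`descent_step`) deform every compact family of twisted
non-collision paths below the level `c` (`exists_deform`). Below that level the relative position
`ζ` of two particles has norm at least some `δ > 0` and length at most some `C`. A path `ζ` that
alternates `k` times between the half-lines spanned by `-ζ 0` and `ζ 0` has length at least
`2 δ (k - 1)` (`alternation_bound`), so `k` is bounded.

On the other hand, for every even `k` there is a family of twisted nonvanishing paths,
parametrized by a torus, such that every family homotopic to it contains a path with `k`
alternations (`alternating_family`). Alternating times are encoded as the zeros of a map defined on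
the product of a cube and a torus; for the explicit family all zeros lie in a small box, on which
the map has mod 2 degree one. A zero therefore persists under homotopy by
`degree_obstruction`, a combinatorial degree argument resting on the parity lemma for labelled
Kuhn triangulations (`kuhn_parity`). Working with large `k` gives the contradiction.
-/

namespace ZhangZhou

set_option linter.unusedSectionVars false

/-! ### Kuhn's parity lemma -/

/-- Over `ZMod 2`, the indicator that the labels `l 0, …, l M` are pairwise distinct. -/
def fullDet {M : ℕ} (l : Fin (M + 1) → Fin (M + 1)) : ZMod 2 :=
  (Matrix.of fun j a => if l j = a then (1 : ZMod 2) else 0).det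

lemma fullDet_eq_zero {M : ℕ} {l : Fin (M + 1) → Fin (M + 1)} {a : Fin (M + 1)}
    (h : ∀ j, l j ≠ a) : fullDet l = 0 :=
  Matrix.det_eq_zero_of_column_eq_zero a fun j => by simp [h j]

lemma surjective_of_fullDet_ne_zero {M : ℕ} {l : Fin (M + 1) → Fin (M + 1)}
    (h : fullDet l ≠ 0) : Function.Surjective l := by
  intro a
  by_contra hc
  push Not at hc
  exact h (fullDet_eq_zero hc)

lemma fullDet_id {M : ℕ} : fullDet (fun j : Fin (M + 1) => j) = 1 := by
  unfold fullDet
  convert Matrix.det_one (n := Fin (M + 1)) (R := ZMod 2)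
  ext i j
  simp [Matrix.one_apply]

/-- Each labelled `(M+1)`-simplex has an even number of fully labelled facets. -/
lemma sum_fullDet_succAbove {M : ℕ} (l : Fin (M + 2) → Fin (M + 1)) :
    ∑ j : Fin (M + 2), fullDet (fun i => l (j.succAbove i)) = 0 := by
  let B : Matrix (Fin (M + 2)) (Fin (M + 2)) (ZMod 2) :=
    Matrix.of fun j a => Fin.cases 1 (fun a' => if l j = a' then (1 : ZMod 2) else 0) a
  have hB : B.det = 0 := by
    -- the first column of `B` is the sum of the others
    rw [← Matrix.exists_mulVec_eq_zero_iff]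
    refine ⟨fun _ => 1, fun h => by simpa using congrFun h 0, ?_⟩
    ext j
    simp only [Matrix.mulVec, dotProduct, B]
    rw [Fin.sum_univ_succ]
    simp only [Matrix.of_apply, Fin.cases_zero, Fin.cases_succ, mul_one, Finset.sum_ite_eq,
      Finset.mem_univ, if_true, Pi.zero_apply]
    decide
  rw [Matrix.det_succ_column_zero] at hB
  rw [← hB]
  refine Finset.sum_congr rfl fun j _ => ?_
  have h1 : (-1 : ZMod 2) = 1 := by decide
  rw [h1, one_pow]
  simp only [B, Matrix.of_apply, Fin.cases_zero, one_mul, fullDet]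
  congr 1

/-- The `j`-th vertex of the Kuhn simplex with lowest vertex `v` and direction order `π`. -/
def kv {M : ℕ} (v : Fin (M + 1) → ℕ) (π : Equiv.Perm (Fin (M + 1))) (j : Fin (M + 2)) :
    Fin (M + 1) → ℕ :=
  fun a => v a + if (π.symm a).val < j.val then 1 else 0

/-- Whether the facet of a Kuhn simplex opposite to its top vertex is fully labelled. -/
def topFacet {M : ℕ} (lab : (Fin (M + 1) → ℕ) → Fin (M + 1)) (v : Fin (M + 1) → ℕ)
    (π : Equiv.Perm (Fin (M + 1))) : ZMod 2 :=
  fullDet fun i : Fin (M + 1) => lab (kv v π i.castSucc)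

/-- Facets opposite to an intermediate vertex cancel in pairs, by transposing two consecutive
directions. -/
lemma sum_interior {M : ℕ} (lab : (Fin (M + 1) → ℕ) → Fin (M + 1)) (v : Fin (M + 1) → ℕ)
    (j : Fin (M + 2)) (h0 : j ≠ 0) (hl : j ≠ Fin.last _) :
    ∑ π : Equiv.Perm (Fin (M + 1)), fullDet (fun i => lab (kv v π (j.succAbove i))) = 0 := by
  have h0' : 0 < j.val := Nat.pos_of_ne_zero fun h => h0 (Fin.ext h)
  have hl' : j.val < M + 1 := by
    have := j.is_lt
    have : j.val ≠ M + 1 := fun h => hl (Fin.ext h)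
    omega
  let p : Fin (M + 1) := ⟨j.val - 1, by omega⟩
  let q : Fin (M + 1) := ⟨j.val, hl'⟩
  have hpq : p ≠ q := by
    intro h
    have := congrArg Fin.val h
    simp [p, q] at this
    omega
  have key : ∀ π : Equiv.Perm (Fin (M + 1)), ∀ i : Fin (M + 1),
      kv v (π * Equiv.swap p q) (j.succAbove i) = kv v π (j.succAbove i) := by
    intro π i
    have hne : (j.succAbove i).val ≠ j.val := fun h => Fin.succAbove_ne j i (Fin.ext h)
    funext a
    simp only [kv]
    have : (π * Equiv.swap p q).symm a = Equiv.swap p q (π.symm a) := by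
      rw [Equiv.symm_apply_eq]; simp
    rw [this]
    generalize (j.succAbove i).val = r at hne
    generalize π.symm a = x
    congr 1
    by_cases hx : x = p
    · subst hx
      rw [Equiv.swap_apply_left]
      simp only [p, q]
      split_ifs <;> omega
    · by_cases hx' : x = q
      · subst hx'
        rw [Equiv.swap_apply_right]
        simp only [p, q]
        split_ifs <;> omega
      · rw [Equiv.swap_apply_of_ne_of_ne hx hx']
  refine Finset.sum_involution (fun π _ => π * Equiv.swap p q) ?_ ?_ ?_ ?_
  · intro π _
    simp only [key]
    exact CharTwo.add_self_eq_zero _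
  · intro π _ _ h
    have : Equiv.swap p q = 1 := by simpa using h
    exact hpq (Equiv.swap_eq_one_iff.1 this)
  · intro π _; exact Finset.mem_univ _
  · intro π _; simp [mul_assoc]

lemma kv_succ {M : ℕ} (v : Fin (M + 1) → ℕ) (π : Equiv.Perm (Fin (M + 1))) (i : Fin (M + 1)) :
    kv v π i.succ = kv (v + Pi.single (π 0) 1) (π * finRotate (M + 1)) i.castSucc := by
  funext a
  simp only [kv, Pi.add_apply]
  obtain ⟨x, rfl⟩ := π.surjective a
  have e1 : π.symm (π x) = x := by simp
  have e2 : (π * finRotate (M + 1)).symm (π x) = (finRotate (M + 1)).symm x := by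
    rw [Equiv.symm_apply_eq]; simp
  rw [e1, e2]
  obtain ⟨y, rfl⟩ := (finRotate (M + 1)).surjective x
  rw [Equiv.symm_apply_apply]
  rw [Pi.single_apply]
  simp only [EmbeddingLike.apply_eq_iff_eq]
  induction y using Fin.lastCases with
  | last =>
    rw [finRotate_last]
    simp
    omega
  | cast y =>
    have : finRotate (M + 1) y.castSucc = y.succ := by
      ext
      rw [coe_finRotate_of_ne_last (Fin.castSucc_lt_last y).ne]
      simp
    rw [this]
    simp [Fin.succ_ne_zero]

lemma telescope {M L : ℕ} (h : (Fin (M + 1) → ℕ) → ZMod 2) (a : Fin (M + 1)) :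
    ∑ v : Fin (M + 1) → Fin L, (h ((fun b => (v b : ℕ)) + Pi.single a 1) + h (fun b => (v b : ℕ)))
      = ∑ r : Fin M → Fin L, (h (a.insertNth (α := fun _ => ℕ) L (fun b => (r b : ℕ)))
          + h (a.insertNth (α := fun _ => ℕ) 0 (fun b => (r b : ℕ)))) := by
  rw [← (Fin.insertNthEquiv (fun _ => Fin L) a).sum_comp, Fintype.sum_prod_type, Finset.sum_comm]
  refine Finset.sum_congr rfl fun r _ => ?_
  have e1 : ∀ c : Fin L, (fun b => ((Fin.insertNthEquiv (fun _ => Fin L) a (c, r)) b : ℕ))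
      = a.insertNth (α := fun _ => ℕ) (c : ℕ) (fun b => (r b : ℕ)) := by
    intro c
    funext b
    induction b using Fin.succAboveCases a with
    | x => simp
    | p i => simp
  have e2 : ∀ c : ℕ, a.insertNth (α := fun _ => ℕ) c (fun b => (r b : ℕ)) + Pi.single a 1
      = a.insertNth (α := fun _ => ℕ) (c + 1) (fun b => (r b : ℕ)) := by
    intro c
    funext b
    induction b using Fin.succAboveCases a with
    | x => simp
    | p i => simp
  simp only [e1, e2]
  rw [Fin.sum_univ_eq_sum_range (fun c => h (a.insertNth (α := fun _ => ℕ) (c + 1)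
    (fun b => (r b : ℕ))) + h (a.insertNth (α := fun _ => ℕ) c (fun b => (r b : ℕ)))) L]
  have := Finset.sum_range_sub
    (fun c => h (a.insertNth (α := fun _ => ℕ) c (fun b => (r b : ℕ)))) L
  simpa only [CharTwo.sub_eq_add] using this

/-- The parity lemma: on the Kuhn triangulation of a grid, the number of fully labelled
boundary facets is even. -/
theorem kuhn_parity {M L : ℕ} (lab : (Fin (M + 1) → ℕ) → Fin (M + 1)) :
    ∑ π : Equiv.Perm (Fin (M + 1)), ∑ r : Fin M → Fin L,
      (topFacet lab ((π (Fin.last M)).insertNth (α := fun _ => ℕ) L (fun b => (r b : ℕ))) π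
        + topFacet lab ((π (Fin.last M)).insertNth (α := fun _ => ℕ) 0 (fun b => (r b : ℕ))) π)
      = 0 := by
  have h1 : ∑ v : Fin (M + 1) → Fin L, ∑ π : Equiv.Perm (Fin (M + 1)), ∑ j : Fin (M + 2),
      fullDet (fun i => lab (kv (fun b => (v b : ℕ)) π (j.succAbove i))) = 0 :=
    Finset.sum_eq_zero fun v _ => Finset.sum_eq_zero fun π _ =>
      sum_fullDet_succAbove (fun j => lab (kv (fun b => (v b : ℕ)) π j))
  have h2 : ∀ v : Fin (M + 1) → Fin L,
      ∑ π : Equiv.Perm (Fin (M + 1)), ∑ j : Fin (M + 2),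
        fullDet (fun i => lab (kv (fun b => (v b : ℕ)) π (j.succAbove i)))
      = ∑ π : Equiv.Perm (Fin (M + 1)),
        (topFacet lab ((fun b => (v b : ℕ)) + Pi.single (π (Fin.last M)) 1) π
          + topFacet lab (fun b => (v b : ℕ)) π) := by
    intro v
    rw [Finset.sum_comm, Fin.sum_univ_succ, Fin.sum_univ_castSucc]
    rw [Finset.sum_eq_zero (s := Finset.univ (α := Fin M))]
    · rw [zero_add, Finset.sum_add_distrib]
      congr 1
      · refine Eq.trans ?_ (Equiv.sum_comp (Equiv.mulRight (finRotate (M + 1)))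
          (fun π => topFacet lab ((fun b => (v b : ℕ)) + Pi.single (π (Fin.last M)) 1) π))
        refine Finset.sum_congr rfl fun π _ => ?_
        simp only [Fin.zero_succAbove, kv_succ, topFacet]
        simp
      · refine Finset.sum_congr rfl fun π _ => ?_
        simp only [topFacet, Fin.succ_last, Fin.succAbove_last]
    · intro j _
      refine sum_interior lab _ _ (Fin.succ_ne_zero _) ?_
      intro h
      have := congrArg Fin.val h
      simp at this
      omega
  simp only [h2] at h1
  rw [Finset.sum_comm] at h1
  rw [← h1]
  exact Finset.sum_congr rfl fun π _ => (telescope (fun v => topFacet lab v π) _).symm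

/-! ### A mod 2 degree obstruction -/

lemma exists_label {M : ℕ} (x : Fin M → ℝ) : ∃ l : Fin (M + 1),
    (∀ a : Fin M, l = a.castSucc → x a < 0) ∧ (∀ a : Fin M, a.castSucc < l → 0 ≤ x a) := by
  classical
  by_cases h : ∃ a, x a < 0
  · obtain ⟨a, ha, hmin⟩ := Finset.exists_min_image (Finset.univ.filter fun a => x a < 0) id
      (by obtain ⟨a, ha⟩ := h; exact ⟨a, by simpa using ha⟩)
    refine ⟨a.castSucc, fun b hb => ?_, fun b hb => ?_⟩
    · rw [← Fin.castSucc_injective _ hb]; simpa using ha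
    · by_contra hneg
      push Not at hneg
      have := hmin b (by simpa using hneg)
      simp only [id] at this
      exact absurd (Fin.castSucc_lt_castSucc_iff.1 hb) (not_lt.2 this)
  · push Not at h
    exact ⟨Fin.last M, fun a ha => absurd ha (Fin.castSucc_lt_last a).ne', fun a _ => h a⟩

/-- The label of a vector: the first negative coordinate, or `Fin.last M` if there is none. -/
noncomputable def label {M : ℕ} (x : Fin M → ℝ) : Fin (M + 1) := (exists_label x).choose

lemma label_neg {M : ℕ} {x : Fin M → ℝ} {a : Fin M} (h : label x = a.castSucc) : x a < 0 :=
  (exists_label x).choose_spec.1 a h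

lemma label_nonneg {M : ℕ} {x : Fin M → ℝ} {a : Fin M} (h : a.castSucc < label x) : 0 ≤ x a :=
  (exists_label x).choose_spec.2 a h

/-- If vectors of small mutual distance carry all labels, then they are all small. -/
lemma norm_lt_of_full {M : ℕ} {z : Fin (M + 1) → Fin M → ℝ} {ε : ℝ} (hε : 0 < ε)
    (hosc : ∀ i j, dist (z i) (z j) < ε)
    (hfull : fullDet (fun i => label (z i)) ≠ 0) (i : Fin (M + 1)) : ‖z i‖ < ε := by
  have hs := surjective_of_fullDet_ne_zero hfull
  rw [pi_norm_lt_iff hε]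
  intro a
  obtain ⟨j, hj⟩ := hs a.castSucc
  obtain ⟨j', hj'⟩ := hs (Fin.last M)
  have h1 := label_neg hj
  have h2 : 0 ≤ z j' a := label_nonneg (by
    simp only at hj'
    rw [hj']; exact Fin.castSucc_lt_last a)
  have h3 := (dist_le_pi_dist (z i) (z j) a).trans_lt (hosc i j)
  have h4 := (dist_le_pi_dist (z i) (z j') a).trans_lt (hosc i j')
  rw [Real.dist_eq, abs_lt] at h3 h4
  rw [Real.norm_eq_abs, abs_lt]
  constructor <;> linarith

/-- Mod 2 degree obstruction. Consider a deformation `F τ` of maps on the unit cube, periodic in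
some of the coordinates and without zeros on the faces of the other ones. If the zeros at time `0`
lie in a small box around `c`, in which every coordinate of `F 0 x` changes sign exactly where the
same coordinate of `x - c` does, then `F 1` cannot be free of zeros. -/
theorem degree_obstruction {M : ℕ} (per : Fin M → Prop) (F : ℝ → (Fin M → ℝ) → (Fin M → ℝ))
    (hF : Continuous (Function.uncurry F))
    (hper : ∀ τ x a, per a → F τ (Function.update x a 1) = F τ (Function.update x a 0))
    (hside : ∀ τ ∈ Set.Icc (0 : ℝ) 1, ∀ x : Fin M → ℝ, (∀ b, x b ∈ Set.Icc (0 : ℝ) 1) →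
      ∀ a, ¬ per a → (x a = 0 ∨ x a = 1) → F τ x ≠ 0)
    (hend : ∀ x : Fin M → ℝ, (∀ b, x b ∈ Set.Icc (0 : ℝ) 1) → F 1 x ≠ 0)
    (c : Fin M → ℝ) (hc : ∀ a, c a ∈ Set.Ioo (0 : ℝ) 1) (r : ℝ) (hr : 0 < r)
    (h_start : ∀ x : Fin M → ℝ, (∀ b, x b ∈ Set.Icc (0 : ℝ) 1) → F 0 x = 0 → ∀ a, |x a - c a| < r)
    (hsign : ∀ x : Fin M → ℝ, (∀ b, |x b - c b| < r) → ∀ a, F 0 x a < 0 ↔ x a < c a) :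
    False := by
  classical
  -- a uniform lower bound for `‖F‖` away from the zero
  let box : Set (ℝ × (Fin M → ℝ)) := Set.Icc 0 1 ×ˢ Set.pi Set.univ (fun _ => Set.Icc (0 : ℝ) 1)
  have hbox : IsCompact box := isCompact_Icc.prod (isCompact_univ_pi fun _ => isCompact_Icc)
  let Z : Set (ℝ × (Fin M → ℝ)) := box ∩ ((⋃ a : {a // ¬ per a}, {p | p.2 a = 0 ∨ p.2 a = 1}) ∪
    {p | p.1 = 1} ∪ ({p | p.1 = 0} ∩ ⋃ a : Fin M, {p | r ≤ |p.2 a - c a|}))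
  have hZ : IsCompact Z := by
    refine hbox.inter_right (((isClosed_iUnion_of_finite fun a => ?_).union ?_).union
      (IsClosed.inter ?_ (isClosed_iUnion_of_finite fun a => ?_)))
    · exact (isClosed_eq (by fun_prop) continuous_const).union
        (isClosed_eq (by fun_prop) continuous_const)
    · exact isClosed_eq (by fun_prop) continuous_const
    · exact isClosed_eq (by fun_prop) continuous_const
    · exact isClosed_le continuous_const (by fun_prop)
  have hZ0 : ∀ p ∈ Z, 0 < ‖F p.1 p.2‖ := by
    rintro ⟨τ, x⟩ ⟨⟨hτ, hx⟩, h⟩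
    have hx' : ∀ b, x b ∈ Set.Icc (0 : ℝ) 1 := fun b => hx b (Set.mem_univ _)
    rw [norm_pos_iff]
    rcases h with (h | h) | ⟨h0, h⟩
    · obtain ⟨a, ha⟩ := Set.mem_iUnion.1 h
      exact hside τ hτ x hx' a a.2 ha
    · simp only [Set.mem_ofPred_eq] at h
      simpa [h] using hend x hx'
    · obtain ⟨a, ha⟩ := Set.mem_iUnion.1 h
      simp only [Set.mem_ofPred_eq] at h0 ha
      intro hz
      simp only [h0] at hz
      exact absurd (h_start x hx' hz a) (not_lt.2 ha)
  obtain ⟨ε, hε, hεZ⟩ : ∃ ε > 0, ∀ p ∈ Z, ε ≤ ‖F p.1 p.2‖ := by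
    rcases Z.eq_empty_or_nonempty with h | h
    · exact ⟨1, one_pos, by simp [h]⟩
    · obtain ⟨p, hp, hmin⟩ := hZ.exists_isMinOn h
        (f := fun p : ℝ × (Fin M → ℝ) => ‖F p.1 p.2‖) (hF.norm.continuousOn)
      exact ⟨_, hZ0 p hp, fun q hq => hmin hq⟩
  -- mesh size
  obtain ⟨δ, hδ, hδF⟩ := Metric.uniformContinuousOn_iff.1
    (hbox.uniformContinuousOn_of_continuous hF.continuousOn) ε hε
  obtain ⟨L, hL⟩ := exists_nat_gt (max (1 / δ) (1 / r))
  have hL0 : (0 : ℝ) < L := lt_of_le_of_lt (le_trans (by positivity) (le_max_left _ _)) hL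
  have hLδ : 1 / (L : ℝ) < δ := by
    rw [div_lt_comm₀ hL0 hδ]; exact lt_of_le_of_lt (le_max_left _ _) hL
  have hLr : 1 / (L : ℝ) < r := by
    rw [div_lt_comm₀ hL0 hr]; exact lt_of_le_of_lt (le_max_right _ _) hL
  have hL0' : 0 < L := by exact_mod_cast hL0
  let X : (Fin (M + 1) → ℕ) → Fin M → ℝ := fun v a => (v a.castSucc : ℝ) / L
  let Θ : (Fin (M + 1) → ℕ) → ℝ := fun v => (v (Fin.last M) : ℝ) / L
  let Fv : (Fin (M + 1) → ℕ) → Fin M → ℝ := fun v => F (Θ v) (X v)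
  let lab : (Fin (M + 1) → ℕ) → Fin (M + 1) := fun v => label (Fv v)
  have unit : ∀ m : ℕ, m ≤ L → (m : ℝ) / L ∈ Set.Icc (0 : ℝ) 1 := fun m hm =>
    ⟨by positivity, by rw [div_le_one hL0]; exact_mod_cast hm⟩
  -- vertices of a top facet
  have vert_le : ∀ (π : Equiv.Perm (Fin (M + 1))) (R : Fin M → Fin L) (q : ℕ), q ≤ L →
      ∀ i : Fin (M + 1), ∀ b, kv ((π (Fin.last M)).insertNth (α := fun _ => ℕ) q
        (fun b => (R b : ℕ))) π i.castSucc b ≤ L := by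
    intro π R q hq i b
    unfold kv
    induction b using Fin.succAboveCases (π (Fin.last M)) with
    | x =>
      have := i.is_lt
      simp
      split_ifs <;> omega
    | p b =>
      simp only [Fin.insertNth_apply_succAbove]
      have := (R b).is_lt
      split_ifs <;> omega
  have vert_last : ∀ (π : Equiv.Perm (Fin (M + 1))) (R : Fin M → Fin L) (q : ℕ),
      ∀ i : Fin (M + 1), kv ((π (Fin.last M)).insertNth (α := fun _ => ℕ) q
        (fun b => (R b : ℕ))) π i.castSucc (π (Fin.last M)) = q := by
    intro π R q i
    simp [kv]
    omega
  have mem_box : ∀ (w : Fin (M + 1) → ℕ), (∀ b, w b ≤ L) → (Θ w, X w) ∈ box := fun w hw =>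
    ⟨unit _ (hw _), fun b _ => unit _ (hw _)⟩
  have small : ∀ (π : Equiv.Perm (Fin (M + 1))) (R : Fin M → Fin L) (q : ℕ), q ≤ L →
      topFacet lab ((π (Fin.last M)).insertNth (α := fun _ => ℕ) q (fun b => (R b : ℕ))) π ≠ 0 →
      ∀ i : Fin (M + 1), ‖Fv (kv ((π (Fin.last M)).insertNth (α := fun _ => ℕ) q
        (fun b => (R b : ℕ))) π i.castSucc)‖ < ε := by
    intro π R q hq hne i
    refine norm_lt_of_full (z := fun i : Fin (M + 1) => Fv (kv _ π i.castSucc)) hε ?_ hne i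
    intro i j
    refine hδF (Θ _, X _) (mem_box _ (vert_le π R q hq i)) (Θ _, X _)
      (mem_box _ (vert_le π R q hq j)) ?_
    refine lt_of_le_of_lt ?_ hLδ
    have coord : ∀ b, dist ((kv ((π (Fin.last M)).insertNth (α := fun _ => ℕ) q
        (fun b => (R b : ℕ))) π i.castSucc b : ℝ) / L)
        ((kv ((π (Fin.last M)).insertNth (α := fun _ => ℕ) q
        (fun b => (R b : ℕ))) π j.castSucc b : ℝ) / L) ≤ 1 / L := by
      intro b
      rw [Real.dist_eq, ← sub_div, abs_div, abs_of_pos hL0]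
      gcongr
      simp only [kv]
      push_cast
      split_ifs <;> simp
    rw [Prod.dist_eq]
    exact max_le (coord _) ((dist_pi_le_iff (by positivity)).2 fun b => coord _)
  -- the grid point below `c`
  have hexR : ∀ a, ∃ R : Fin L, (R : ℝ) / L < c a ∧ c a ≤ ((R : ℝ) + 1) / L := by
    intro a
    have hca := hc a
    have hpos : 0 < c a * L := mul_pos hca.1 hL0
    have hlt : c a * L < L := by nlinarith [hca.2]
    have hceil : 0 < ⌈c a * L⌉₊ := Nat.ceil_pos.2 hpos
    have hle : ⌈c a * L⌉₊ ≤ L := Nat.ceil_le.2 hlt.le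
    obtain ⟨R, hR⟩ : ∃ R, ⌈c a * L⌉₊ = R + 1 := ⟨_, (Nat.succ_pred_eq_of_pos hceil).symm⟩
    refine ⟨⟨R, by omega⟩, ?_, ?_⟩
    · rw [div_lt_iff₀ hL0]
      exact Nat.lt_ceil.1 (by simp; omega)
    · rw [le_div_iff₀ hL0]
      have := Nat.le_ceil (c a * L)
      rw [hR] at this
      push_cast at this
      exact this
  choose Rs hRs1 hRs2 using hexR
  have main : ∀ (π : Equiv.Perm (Fin (M + 1))) (R : Fin M → Fin L),
      (topFacet lab ((π (Fin.last M)).insertNth (α := fun _ => ℕ) L (fun b => (R b : ℕ))) π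
        + topFacet lab ((π (Fin.last M)).insertNth (α := fun _ => ℕ) 0 (fun b => (R b : ℕ))) π)
      = if π = 1 ∧ R = Rs then 1 else 0 := by
    intro π R
    have inZ : ∀ q : ℕ, q ≤ L → (∃ i : Fin (M + 1), (Θ (kv ((π (Fin.last M)).insertNth
        (α := fun _ => ℕ) q (fun b => (R b : ℕ))) π i.castSucc), X (kv ((π (Fin.last M)).insertNth
        (α := fun _ => ℕ) q (fun b => (R b : ℕ))) π i.castSucc)) ∈ Z) →
        topFacet lab ((π (Fin.last M)).insertNth (α := fun _ => ℕ) q (fun b => (R b : ℕ))) π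
          = 0 := by
      rintro q hq ⟨i, hi⟩
      by_contra hne
      exact absurd (hεZ _ hi) (not_le.2 (small π R q hq hne i))
    rcases Fin.eq_castSucc_or_eq_last (π (Fin.last M)) with ⟨a, ha⟩ | ha
    · have hπ : π ≠ 1 := by
        rintro rfl
        exact (Fin.castSucc_lt_last a).ne' (by simpa using ha)
      rw [if_neg (fun h => hπ h.1)]
      by_cases hpa : per a
      · -- periodic face: both facets carry the same labels
        have : ∀ i : Fin (M + 1),
            lab (kv ((π (Fin.last M)).insertNth (α := fun _ => ℕ) L (fun b => (R b : ℕ))) π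
              i.castSucc) =
            lab (kv ((π (Fin.last M)).insertNth (α := fun _ => ℕ) 0 (fun b => (R b : ℕ))) π
              i.castSucc) := by
          intro i
          have hother : ∀ b, b ≠ π (Fin.last M) →
              kv ((π (Fin.last M)).insertNth (α := fun _ => ℕ) L (fun b => (R b : ℕ))) π
                i.castSucc b =
              kv ((π (Fin.last M)).insertNth (α := fun _ => ℕ) 0 (fun b => (R b : ℕ))) π
                i.castSucc b := by
            intro b hb
            obtain ⟨b', rfl⟩ := Fin.exists_succAbove_eq hb
            simp [kv]
          have hL1 := vert_last π R L i
          have h01 := vert_last π R 0 i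
          set w := kv ((π (Fin.last M)).insertNth (α := fun _ => ℕ) L (fun b => (R b : ℕ))) π
              i.castSucc
          set w' := kv ((π (Fin.last M)).insertNth (α := fun _ => ℕ) 0 (fun b => (R b : ℕ))) π
              i.castSucc
          have e1 : Θ w = Θ w' := by
            simp only [Θ]
            rw [hother _ (by rw [ha]; exact (Fin.castSucc_lt_last a).ne')]
          have e2 : X w = Function.update (X w) a 1 := by
            rw [eq_comm, Function.update_eq_self_iff]
            simp only [X, ← ha, hL1]
            field_simp
          have e3 : X w' = Function.update (X w) a 0 := by
            funext b
            by_cases hb : b = a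
            · subst hb
              simp only [X, Function.update_self, ← ha, h01]
              simp
            · rw [Function.update_of_ne hb]
              simp only [X]
              rw [hother]
              rw [ha]
              exact fun h => hb (Fin.castSucc_injective _ h)
          simp only [lab, Fv]
          rw [e3, e1]
          nth_rewrite 1 [e2]
          rw [hper _ _ _ hpa]
        simp only [topFacet, this]
        exact CharTwo.add_self_eq_zero _
      · have hz : ∀ q, (q = L ∨ q = 0) → topFacet lab ((π (Fin.last M)).insertNth
            (α := fun _ => ℕ) q (fun b => (R b : ℕ))) π = 0 := by
          intro q hq
          have hq' : q ≤ L := by rcases hq with rfl | rfl <;> omega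
          refine inZ q hq' ⟨0, mem_box _ (vert_le π R q hq' 0), Or.inl (Or.inl ?_)⟩
          refine Set.mem_iUnion.2 ⟨⟨a, hpa⟩, ?_⟩
          simp only [X, ← ha, vert_last, Set.mem_ofPred_eq]
          rcases hq with rfl | rfl
          · right; field_simp
          · left; simp
        rw [hz L (Or.inl rfl), hz 0 (Or.inr rfl), add_zero]
    · have htop : topFacet lab ((π (Fin.last M)).insertNth (α := fun _ => ℕ) L
          (fun b => (R b : ℕ))) π = 0 := by
        refine inZ L le_rfl ⟨0, mem_box _ (vert_le π R L le_rfl 0), Or.inl (Or.inr ?_)⟩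
        have := vert_last π R L 0
        simp only [Θ, Set.mem_ofPred_eq]
        nth_rewrite 2 [← ha]
        rw [this]
        field_simp
      rw [htop, zero_add]
      have hΘ : ∀ i : Fin (M + 1), Θ (kv ((π (Fin.last M)).insertNth (α := fun _ => ℕ) 0
          (fun b => (R b : ℕ))) π i.castSucc) = 0 := by
        intro i
        have := vert_last π R 0 i
        simp only [Θ]
        nth_rewrite 2 [← ha]
        rw [this]
        simp
      have hcoord : ∀ (i : Fin (M + 1)) (b : Fin M), kv ((π (Fin.last M)).insertNth
          (α := fun _ => ℕ) 0 (fun b => (R b : ℕ))) π i.castSucc b.castSucc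
          = R b + if (π.symm b.castSucc).val < i.val then 1 else 0 := by
        intro i b
        simp only [kv, ha]
        have : b.castSucc = (Fin.last M).succAbove b := (Fin.succAbove_last_apply b).symm
        rw [this, Fin.insertNth_apply_succAbove]
        simp
      by_cases hcase : π = 1 ∧ R = Rs
      · rw [if_pos hcase]
        obtain ⟨rfl, rfl⟩ := hcase
        rw [← fullDet_id (M := M)]
        unfold topFacet
        congr 1
        funext i
        have hx : ∀ b : Fin M, X (kv (((1 : Equiv.Perm (Fin (M + 1))) (Fin.last M)).insertNth
          (α := fun _ => ℕ) 0 (fun b => (R b : ℕ))) 1 i.castSucc) b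
          = ((R b : ℝ) + if b.val < i.val then 1 else 0) / L := by
          intro b
          simp only [X]
          rw [hcoord i b]
          push_cast
          rfl
        set w := kv (((1 : Equiv.Perm (Fin (M + 1))) (Fin.last M)).insertNth
          (α := fun _ => ℕ) 0 (fun b => (R b : ℕ))) 1 i.castSucc
        have hdiv : ∀ b, ((R b : ℝ) + 1) / L = (R b : ℝ) / L + 1 / L := fun b => add_div _ _ _
        have near : ∀ b, |X w b - c b| < r := by
          intro b
          have h1 := hRs1 b
          have h2 := hRs2 b
          rw [hdiv] at h2
          rw [hx, abs_lt]
          split_ifs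
          · rw [hdiv]; constructor <;> linarith
          · rw [add_zero]; constructor <;> linarith
        have hs : ∀ b, Fv w b < 0 ↔ ¬ b.val < i.val := by
          intro b
          have := hsign _ near b
          simp only [Fv]
          rw [hΘ i, this, hx]
          have h1 := hRs1 b
          have h2 := hRs2 b
          split_ifs with hb
          · simp [hb, h2]
          · simp [hb, h1]
        refine le_antisymm ?_ ?_
        · by_contra hlt
          push Not at hlt
          rcases Fin.eq_castSucc_or_eq_last i with ⟨j, rfl⟩ | rfl
          · have := label_nonneg hlt
            exact absurd ((hs j).2 (by simp)) (not_lt.2 this)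
          · exact absurd hlt (not_lt.2 (Fin.le_last _))
        · rcases Fin.eq_castSucc_or_eq_last (lab w) with ⟨j, hj⟩ | hj
          · have := (hs j).1 (label_neg hj)
            rw [hj, Fin.le_iff_val_le_val]
            simpa using this
          · rw [hj]; exact Fin.le_last _
      · rw [if_neg hcase]
        by_contra hne
        apply hcase
        have hsm := small π R 0 (Nat.zero_le _) hne
        have hsurj := surjective_of_fullDet_ne_zero hne
        have hx : ∀ (i : Fin (M + 1)) (b : Fin M), X (kv ((π (Fin.last M)).insertNth
          (α := fun _ => ℕ) 0 (fun b => (R b : ℕ))) π i.castSucc) b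
          = ((R b : ℝ) + if (π.symm b.castSucc).val < i.val then 1 else 0) / L := by
          intro i b
          simp only [X]
          rw [hcoord i b]
          push_cast
          rfl
        have hbx := fun i => mem_box _ (vert_le π R 0 (Nat.zero_le _) i)
        set w : Fin (M + 1) → Fin (M + 1) → ℕ := fun i => kv ((π (Fin.last M)).insertNth
          (α := fun _ => ℕ) 0 (fun b => (R b : ℕ))) π i.castSucc with hw
        have near : ∀ i b, |X (w i) b - c b| < r := by
          intro i b
          by_contra hge
          push Not at hge
          refine absurd (hεZ (Θ (w i), X (w i)) ⟨hbx i, Or.inr ⟨hΘ i, ?_⟩⟩) (not_le.2 (hsm i))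
          exact Set.mem_iUnion.2 ⟨b, hge⟩
        have hs : ∀ i b, Fv (w i) b < 0 ↔ X (w i) b < c b := by
          intro i b
          simp only [Fv]
          rw [hΘ i]
          exact hsign _ (near i) b
        have hmono : Monotone fun i => lab (w i) := by
          intro i j hij
          by_contra hlt
          push Not at hlt
          obtain ⟨b, hb⟩ : ∃ b : Fin M, lab (w j) = b.castSucc := by
            rcases Fin.eq_castSucc_or_eq_last (lab (w j)) with h | h
            · exact h
            · rw [h] at hlt; exact absurd hlt (not_lt.2 (Fin.le_last _))
          have h1 := (hs j b).1 (label_neg hb)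
          rw [hb] at hlt
          have h2 := label_nonneg hlt
          refine absurd ((hs i b).2 (lt_of_le_of_lt ?_ h1)) (not_lt.2 h2)
          rw [hx i b, hx j b]
          gcongr
          have : i.val ≤ j.val := hij
          split_ifs <;> first | omega | norm_num
        have hid : (fun i => lab (w i)) = id := by
          refine (StrictMono.range_inj (hmono.strictMono_of_injective
            (Finite.injective_iff_surjective.2 hsurj)) strictMono_id).1 ?_
          rw [hsurj.range_eq, Set.range_id]
        have hidj : ∀ i, lab (w i) = i := fun i => congrFun hid i
        have step : ∀ b : Fin M, (π.symm b.castSucc).val = b.val ∧ (R b : ℝ) / L < c b ∧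
            c b ≤ ((R b : ℝ) + 1) / L := by
          intro b
          have h1 := (hs _ b).1 (label_neg (hidj b.castSucc))
          have h2 : ¬ (X (w b.succ) b < c b) := by
            rw [← hs, not_lt]
            apply label_nonneg
            have := hidj b.succ
            simp only [lab] at this
            rw [this]
            exact Fin.castSucc_lt_succ
          rw [hx] at h1 h2
          simp only [Fin.val_castSucc, Fin.val_succ, not_lt] at h1 h2
          have hp1 : ¬ (π.symm b.castSucc).val < b.val := by
            intro h
            rw [if_pos h] at h1
            rw [if_pos (by omega)] at h2
            linarith
          rw [if_neg hp1, add_zero] at h1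
          have hp2 : (π.symm b.castSucc).val < b.val + 1 := by
            by_contra h
            rw [if_neg h, add_zero] at h2
            linarith
          rw [if_pos hp2] at h2
          exact ⟨by omega, h1, h2⟩
        constructor
        · ext b
          rcases Fin.eq_castSucc_or_eq_last b with ⟨j, rfl⟩ | rfl
          · have : π.symm j.castSucc = j.castSucc := Fin.ext (step j).1
            rw [Equiv.symm_apply_eq] at this
            rw [← this]; rfl
          · rw [ha]; rfl
        · funext b
          obtain ⟨-, h1, h2⟩ := step b
          have h3 := hRs1 b
          have h4 := hRs2 b
          have h5 : (R b : ℝ) < Rs b + 1 := by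
            have := h1.trans_le h4
            rwa [div_lt_div_iff_of_pos_right hL0] at this
          have h6 : (Rs b : ℝ) < R b + 1 := by
            have := h3.trans_le h2
            rwa [div_lt_div_iff_of_pos_right hL0] at this
          have h7 : (R b : ℕ) < Rs b + 1 := by exact_mod_cast h5
          have h8 : (Rs b : ℕ) < R b + 1 := by exact_mod_cast h6
          exact Fin.ext (by omega)
  have hsum := kuhn_parity (L := L) lab
  simp only [main] at hsum
  rw [Finset.sum_eq_single 1, Finset.sum_eq_single Rs] at hsum
  · simp at hsum
  · intro R _ hR; simp [hR]
  · simp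
  · intro π _ hπ; simp [hπ]
  · simp

/-! ### The obstruction for finite index types, and bump functions -/

/-- `degree_obstruction` with coordinates indexed by an arbitrary finite type. -/
theorem degree_obstruction_fintype {ι : Type*} [Fintype ι] [DecidableEq ι]
    (per : ι → Prop) (F : ℝ → (ι → ℝ) → (ι → ℝ))
    (hF : Continuous (Function.uncurry F))
    (hper : ∀ τ x a, per a → F τ (Function.update x a 1) = F τ (Function.update x a 0))
    (hside : ∀ τ ∈ Set.Icc (0 : ℝ) 1, ∀ x : ι → ℝ, (∀ b, x b ∈ Set.Icc (0 : ℝ) 1) →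
      ∀ a, ¬ per a → (x a = 0 ∨ x a = 1) → F τ x ≠ 0)
    (hend : ∀ x : ι → ℝ, (∀ b, x b ∈ Set.Icc (0 : ℝ) 1) → F 1 x ≠ 0)
    (c : ι → ℝ) (hc : ∀ a, c a ∈ Set.Ioo (0 : ℝ) 1) (r : ℝ) (hr : 0 < r)
    (h_start : ∀ x : ι → ℝ, (∀ b, x b ∈ Set.Icc (0 : ℝ) 1) → F 0 x = 0 → ∀ a, |x a - c a| < r)
    (hsign : ∀ x : ι → ℝ, (∀ b, |x b - c b| < r) → ∀ a, F 0 x a < 0 ↔ x a < c a) :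
    False := by
  let e := Fintype.equivFin ι
  have key : ∀ z : ι → ℝ, (fun a => z (e.symm a)) = 0 → z = 0 := by
    intro z h
    funext i
    simpa using congrFun h (e i)
  have upd : ∀ (x : Fin (Fintype.card ι) → ℝ) a (q : ℝ),
      (fun i => Function.update x a q (e i)) = Function.update (fun i => x (e i)) (e.symm a) q := by
    intro x a q
    funext i
    by_cases h : i = e.symm a
    · subst h; simp
    · rw [Function.update_of_ne h, Function.update_of_ne]
      intro h'
      exact h (by rw [← h']; simp)
  refine degree_obstruction (fun a => per (e.symm a))
    (fun τ x a => F τ (fun i => x (e i)) (e.symm a)) ?_ ?_ ?_ ?_ (fun a => c (e.symm a)) ?_ r hr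
    ?_ ?_
  · refine continuous_pi fun a => ?_
    have : Continuous fun p : ℝ × (Fin (Fintype.card ι) → ℝ) =>
        Function.uncurry F (p.1, fun i => p.2 (e i)) := hF.comp (by fun_prop)
    exact (continuous_apply (e.symm a)).comp this
  · intro τ x a ha
    funext b
    simp only [upd]
    rw [hper _ _ _ ha]
  · intro τ hτ x hx a ha h h0
    exact hside τ hτ (fun i => x (e i)) (fun b => hx _) (e.symm a) ha (by simpa using h) (key _ h0)
  · intro x hx h0
    exact hend _ (fun b => hx _) (key _ h0)
  · intro a; exact hc _
  · intro x hx h0 a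
    simpa using h_start _ (fun b => hx _) (key _ h0) (e.symm a)
  · intro x hx a
    simpa using hsign (fun i => x (e i)) (fun b => by simpa using hx (e b)) (e.symm a)

lemma hasDerivAt_comp_min {Q Q' : ℝ → ℝ} (hQ : ∀ u, HasDerivAt Q (Q' u) u) {a : ℝ}
    (ha : Q' a = 0) (s : ℝ) : HasDerivAt (fun s => Q (min s a)) (Q' (min s a)) s := by
  rcases lt_trichotomy s a with h | h | h
  · rw [min_eq_left h.le]
    refine (hQ s).congr_of_eventuallyEq ?_
    filter_upwards [Iio_mem_nhds h] with u hu
    rw [min_eq_left (le_of_lt hu)]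
  · subst h
    rw [min_self, ← hasDerivWithinAt_univ, ← Set.Iic_union_Ici (a := s)]
    refine HasDerivWithinAt.union ?_ ?_
    · exact (hQ s).hasDerivWithinAt.congr (fun u hu => by rw [min_eq_left hu]) (by simp)
    · rw [ha]
      exact (hasDerivWithinAt_const s _ (Q s)).congr (fun u hu => by rw [min_eq_right hu])
        (by simp)
  · rw [min_eq_right h.le, ha]
    refine (hasDerivAt_const s (Q a)).congr_of_eventuallyEq ?_
    filter_upwards [Ioi_mem_nhds h] with u hu
    rw [min_eq_right (le_of_lt hu)]

lemma hasDerivAt_comp_max {Q Q' : ℝ → ℝ} (hQ : ∀ u, HasDerivAt Q (Q' u) u) {a : ℝ}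
    (ha : Q' a = 0) (s : ℝ) : HasDerivAt (fun s => Q (max s a)) (Q' (max s a)) s := by
  have h1 : ∀ u, HasDerivAt (fun u => Q (-u)) (-Q' (-u)) u := by
    intro u
    have := (hQ (-u)).comp u (hasDerivAt_neg u)
    simpa [Function.comp_def] using this
  have h2 := hasDerivAt_comp_min (Q := fun u => Q (-u)) (Q' := fun u => -Q' (-u)) h1 (a := -a)
    (by simp [ha]) (-s)
  have h3 := h2.comp s (hasDerivAt_neg s)
  have e : ∀ u : ℝ, -(min (-u) (-a)) = max u a := by
    intro u; rw [min_neg_neg, neg_neg]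
  simpa [Function.comp_def, e] using h3

/-- A `C¹` bump: equal to `1` on `[i+1/4, i+3/4]` and to `0` outside `[i, i+1]`. -/
noncomputable def bump (i : ℕ) (s : ℝ) : ℝ :=
  Real.sin (2 * Real.pi * max (min s (i + 1 / 4)) i) ^ 2
    + Real.sin (2 * Real.pi * max (min s (i + 1)) (i + 3 / 4)) ^ 2 - 1

/-- The derivative of `sin² (2πu)`. -/
noncomputable def sinSqDeriv (u : ℝ) : ℝ :=
  2 * Real.sin (2 * Real.pi * u) * (Real.cos (2 * Real.pi * u) * (2 * Real.pi))

/-- The derivative of `bump i`. -/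
noncomputable def bumpDeriv (i : ℕ) (s : ℝ) : ℝ :=
  sinSqDeriv (max (min s (i + 1 / 4)) i) + sinSqDeriv (max (min s (i + 1)) (i + 3 / 4))

lemma hasDerivAt_sinSq (u : ℝ) :
    HasDerivAt (fun u => Real.sin (2 * Real.pi * u) ^ 2) (sinSqDeriv u) u := by
  have h := (((hasDerivAt_id u).const_mul (2 * Real.pi)).sin).pow 2
  refine HasDerivAt.congr_deriv h ?_
  simp [sinSqDeriv]

lemma sin_two_pi_nat (i : ℕ) : Real.sin (2 * Real.pi * i) = 0 := by
  rw [mul_comm, mul_comm 2, ← mul_assoc]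
  have := Real.sin_nat_mul_pi (i * 2)
  push_cast at this
  rw [← this]; ring_nf

lemma cos_two_pi_nat (i : ℕ) : Real.cos (2 * Real.pi * i) = 1 := by
  rw [mul_comm]; exact Real.cos_nat_mul_two_pi i

lemma sin_quarter (i : ℕ) : Real.sin (2 * Real.pi * (i + 1 / 4)) = 1 ∧
    Real.cos (2 * Real.pi * (i + 1 / 4)) = 0 := by
  have e : 2 * Real.pi * ((i : ℝ) + 1 / 4) = 2 * Real.pi * i + Real.pi / 2 := by ring
  rw [e, Real.sin_add_pi_div_two, Real.cos_add_pi_div_two, sin_two_pi_nat, cos_two_pi_nat]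
  simp

lemma sin_three_quarter (i : ℕ) : Real.sin (2 * Real.pi * (i + 3 / 4)) = -1 ∧
    Real.cos (2 * Real.pi * (i + 3 / 4)) = 0 := by
  have e : 2 * Real.pi * ((i : ℝ) + 3 / 4) = 2 * Real.pi * (i + 1 / 4) + Real.pi := by ring
  rw [e, Real.sin_add_pi, Real.cos_add_pi, (sin_quarter i).1, (sin_quarter i).2]
  simp

lemma sin_one (i : ℕ) : Real.sin (2 * Real.pi * (i + 1)) = 0 := by
  have := sin_two_pi_nat (i + 1)
  push_cast at this
  exact this

lemma hasDerivAt_clamp {lo hi : ℝ} (h : lo ≤ hi) (h1 : sinSqDeriv lo = 0) (h2 : sinSqDeriv hi = 0)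
    (s : ℝ) : HasDerivAt (fun s => Real.sin (2 * Real.pi * max (min s hi) lo) ^ 2)
      (sinSqDeriv (max (min s hi) lo)) s :=
  hasDerivAt_comp_min (Q := fun u => Real.sin (2 * Real.pi * max u lo) ^ 2)
    (Q' := fun u => sinSqDeriv (max u lo))
    (hasDerivAt_comp_max (Q := fun u => Real.sin (2 * Real.pi * u) ^ 2) hasDerivAt_sinSq h1)
    (by simpa [max_eq_left h] using h2) s

lemma hasDerivAt_bump (i : ℕ) (s : ℝ) : HasDerivAt (bump i) (bumpDeriv i s) s := by
  have h1 := hasDerivAt_clamp (lo := i) (hi := i + 1 / 4) (by linarith)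
    (by simp [sinSqDeriv, sin_two_pi_nat]) (by simp only [sinSqDeriv, (sin_quarter i).2]; ring) s
  have h2 := hasDerivAt_clamp (lo := i + 3 / 4) (hi := i + 1) (by linarith)
    (by simp only [sinSqDeriv, (sin_three_quarter i).2]; ring)
    (by simp only [sinSqDeriv, sin_one i]; ring) s
  exact (h1.add h2).sub_const 1

lemma continuous_bumpDeriv (i : ℕ) : Continuous (bumpDeriv i) := by
  unfold bumpDeriv sinSqDeriv; fun_prop

lemma bump_of_le {i : ℕ} {s : ℝ} (h : s ≤ i) : bump i s = 0 := by
  have e1 : max (min s (i + 1 / 4)) (i : ℝ) = i := by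
    rw [max_eq_right]; exact (min_le_left _ _).trans h
  have e2 : max (min s ((i : ℝ) + 1)) (i + 3 / 4) = i + 3 / 4 := by
    rw [max_eq_right]; exact (min_le_left _ _).trans (by linarith)
  rw [bump, e1, e2, sin_two_pi_nat, (sin_three_quarter i).1]
  norm_num

lemma bump_of_ge {i : ℕ} {s : ℝ} (h : (i : ℝ) + 1 ≤ s) : bump i s = 0 := by
  have e1 : max (min s (i + 1 / 4)) (i : ℝ) = i + 1 / 4 := by
    rw [min_eq_right (by linarith), max_eq_left (by linarith)]
  have e2 : max (min s ((i : ℝ) + 1)) (i + 3 / 4) = i + 1 := by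
    rw [min_eq_right (by linarith), max_eq_left (by linarith)]
  rw [bump, e1, e2, sin_one, (sin_quarter i).1]
  norm_num

lemma bump_of_mid {i : ℕ} {s : ℝ} (h : (i : ℝ) + 1 / 4 ≤ s) (h' : s ≤ i + 3 / 4) :
    bump i s = 1 := by
  have e1 : max (min s (i + 1 / 4)) (i : ℝ) = i + 1 / 4 := by
    rw [min_eq_right (by linarith), max_eq_left (by linarith)]
  have e2 : max (min s ((i : ℝ) + 1)) (i + 3 / 4) = i + 3 / 4 := by
    rw [max_eq_right]; exact (min_le_left _ _).trans h'
  rw [bump, e1, e2, (sin_three_quarter i).1, (sin_quarter i).1]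
  norm_num

/-! ### Zeros encoding alternating times -/

/-- The alternating sign `-1, +1, -1, …`, indexed from `0`. -/
noncomputable def sgn (i : ℕ) : ℝ := (-1) ^ (i + 1)

lemma sgn_mul_self (i : ℕ) : sgn i * sgn i = 1 := by
  rw [sgn, ← mul_pow]; norm_num

lemma sgn_ne_zero (i : ℕ) : sgn i ≠ 0 := by
  intro h; have := sgn_mul_self i; rw [h] at this; norm_num at this

lemma sgn_succ (i : ℕ) : sgn (i + 1) = -sgn i := by
  rw [sgn, sgn, pow_succ]; ring

/-- The running minimum from the right of the time coordinates of `x`; it is monotone in `i`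
for arbitrary `x`. -/
noncomputable def tmin {k q : ℕ} (x : Fin k × Fin (q + 2) → ℝ) (i : Fin k) : ℝ :=
  (Finset.Ici i).inf' ⟨i, by simp⟩ (fun j => x (j, 1))

/-- The point of the parameter torus with angular coordinates `x`. -/
noncomputable def wmap {k q : ℕ} (x : Fin k × Fin (q + 2) → ℝ) (i : Fin k) (j : Fin (q + 2)) :
    Circle :=
  Circle.exp (2 * Real.pi * x (i, j))

/-- Sign of the `j`-th coordinate; the coordinate of index `1` is oriented by `σ`. -/
def eta {q : ℕ} (σ : ℝ) (j : Fin (q + 2)) : ℝ := if j = 1 then σ else 1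

/-- The map whose zeros are the alternating configurations of the path family `H`: at a zero,
`H (w) (t_i)` is a positive multiple of `± H (w) 0` with alternating signs. -/
noncomputable def fmap {k q : ℕ} (σ : ℝ)
    (H : (Fin k → Fin (q + 2) → Circle) → ℝ → EuclideanSpace ℝ (Fin (q + 2)))
    (x : Fin k × Fin (q + 2) → ℝ) (p : Fin k × Fin (q + 2)) : ℝ :=
  sgn p.1 * eta σ p.2 * (x (p.1, 0) * H (wmap x) (tmin x p.1) p.2
    - (1 - x (p.1, 0)) * sgn p.1 * H (wmap x) 0 p.2)

lemma eta_ne_zero {q : ℕ} {σ : ℝ} (hσ : σ ^ 2 = 1) (j : Fin (q + 2)) : eta σ j ≠ 0 := by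
  unfold eta
  split_ifs
  · rintro rfl; norm_num at hσ
  · exact one_ne_zero

lemma tmin_le {k q : ℕ} (x : Fin k × Fin (q + 2) → ℝ) {i j : Fin k} (h : i ≤ j) :
    tmin x i ≤ x (j, 1) :=
  Finset.inf'_le _ (by simpa using h)

lemma exists_tmin {k q : ℕ} (x : Fin k × Fin (q + 2) → ℝ) (i : Fin k) :
    ∃ j, i ≤ j ∧ tmin x i = x (j, 1) := by
  obtain ⟨j, hj, h⟩ := Finset.exists_mem_eq_inf' (s := Finset.Ici i) ⟨i, by simp⟩
    (fun j => x (j, 1))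
  exact ⟨j, by simpa using hj, h⟩

lemma tmin_mono {k q : ℕ} (x : Fin k × Fin (q + 2) → ℝ) : Monotone (tmin x) := by
  intro i j h
  obtain ⟨l, hl, e⟩ := exists_tmin x j
  rw [e]
  exact tmin_le x (h.trans hl)

/-- At a zero of `fmap` in the unit box, no coordinate of index `0` or `1` lies on the boundary of
the box and the times are strictly increasing. -/
lemma zero_analysis {k q : ℕ} (hk : Even k) {σ : ℝ} (hσ : σ ^ 2 = 1)
    (g : EuclideanSpace ℝ (Fin (q + 2)) ≃ₗᵢ[ℝ] EuclideanSpace ℝ (Fin (q + 2)))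
    (hg : ∀ v, v ≠ 0 → g v ≠ v)
    (H : (Fin k → Fin (q + 2) → Circle) → ℝ → EuclideanSpace ℝ (Fin (q + 2)))
    (hne : ∀ w, ∀ t ∈ Set.Icc (0 : ℝ) 1, H w t ≠ 0) (hbd : ∀ w, H w 1 = g (H w 0))
    (x : Fin k × Fin (q + 2) → ℝ) (hx : ∀ b, x b ∈ Set.Icc (0 : ℝ) 1) (h0 : fmap σ H x = 0) :
    (∀ i, x (i, 0) ∈ Set.Ioo (0 : ℝ) 1) ∧ (∀ i, x (i, 1) ∈ Set.Ioo (0 : ℝ) 1) ∧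
      StrictMono (fun i => x (i, 1)) ∧
      ∀ i : Fin k, x (i, 0) • H (wmap x) (x (i, 1))
        = ((1 - x (i, 0)) * sgn i) • H (wmap x) 0 := by
  set G := H (wmap x) with hG
  have hG0 : G 0 ≠ 0 := hne _ _ (by simp)
  have hvec : ∀ i : Fin k, x (i, 0) • G (tmin x i) = ((1 - x (i, 0)) * sgn i) • G 0 := by
    intro i
    ext j
    have h := congrFun h0 (i, j)
    simp only [fmap, Pi.zero_apply] at h
    have := (mul_eq_zero.1 h).resolve_left (mul_ne_zero (sgn_ne_zero _) (eta_ne_zero hσ j))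
    simp only [PiLp.smul_apply, smul_eq_mul]
    linarith
  have htm : ∀ i, tmin x i ∈ Set.Icc (0 : ℝ) 1 := by
    intro i
    obtain ⟨j, -, e⟩ := exists_tmin x i
    rw [e]; exact hx _
  have ha : ∀ i, x (i, 0) ∈ Set.Ioo (0 : ℝ) 1 := by
    intro i
    refine ⟨lt_of_le_of_ne (hx _).1 fun h => ?_, lt_of_le_of_ne (hx _).2 fun h => ?_⟩
    · have := hvec i
      rw [← h] at this
      simp only [zero_smul, sub_zero, one_mul] at this
      exact (smul_ne_zero (sgn_ne_zero _) hG0) this.symm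
    · have := hvec i
      rw [h] at this
      simp only [one_smul, sub_self, zero_mul, zero_smul] at this
      exact hne _ _ (htm i) this
  have hmu : ∀ i : Fin k, ∃ μ : ℝ, 0 < μ ∧ G (tmin x i) = (μ * sgn i) • G 0 := by
    intro i
    refine ⟨(1 - x (i, 0)) / x (i, 0), div_pos (by linarith [(ha i).2]) (ha i).1, ?_⟩
    have h := congrArg (fun v => (x (i, 0))⁻¹ • v) (hvec i)
    simp only [smul_smul, inv_mul_cancel₀ (ha i).1.ne', one_smul] at h
    rw [h]; congr 1; ring
  have hstep : ∀ i j : Fin k, (j : ℕ) = i + 1 → tmin x i ≠ tmin x j := by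
    intro i j hij h
    obtain ⟨μ, hμ, e1⟩ := hmu i
    obtain ⟨ν, hν, e2⟩ := hmu j
    rw [h, e2, hij, sgn_succ] at e1
    have := smul_left_injective ℝ hG0 e1
    have h3 : sgn i * (μ + ν) = 0 := by linarith
    rcases mul_eq_zero.1 h3 with h3 | h3
    · exact sgn_ne_zero _ h3
    · linarith
  have hstrict : StrictMono (tmin x) := by
    intro i j hij
    have hij' : (i : ℕ) < j := hij
    let i' : Fin k := ⟨i + 1, by omega⟩
    have h1 : tmin x i ≤ tmin x i' := tmin_mono x (Fin.mk_le_mk.2 (by simp))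
    have h2 : tmin x i' ≤ tmin x j := tmin_mono x (Fin.mk_le_mk.2 (by omega))
    exact (lt_of_le_of_ne h1 (hstep i i' rfl)).trans_le h2
  have heq : ∀ i, tmin x i = x (i, 1) := by
    intro i
    obtain ⟨j, hij, e⟩ := exists_tmin x i
    rcases hij.eq_or_lt with h | h
    · rw [e, h]
    · have h1 := hstrict h
      have h2 := tmin_le x (le_refl j)
      linarith
  have hlow : ∀ i, 0 < tmin x i := by
    intro i
    let z : Fin k := ⟨0, i.pos⟩
    have h1 : tmin x z ≤ tmin x i := tmin_mono x (Fin.mk_le_mk.2 (by simp))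
    refine lt_of_lt_of_le (lt_of_le_of_ne (htm z).1 fun h => ?_) h1
    obtain ⟨μ, hμ, e1⟩ := hmu z
    rw [← h] at e1
    have e2 : (1 : ℝ) • G 0 = (μ * sgn z) • G 0 := by rw [one_smul]; exact e1
    have := smul_left_injective ℝ hG0 e2
    simp only [z, sgn] at this
    norm_num at this
    linarith
  have hhigh : ∀ i, tmin x i < 1 := by
    intro i
    let z : Fin k := ⟨k - 1, by have := i.pos; omega⟩
    have h1 : tmin x i ≤ tmin x z := tmin_mono x (Fin.mk_le_mk.2 (by omega))
    refine lt_of_le_of_lt h1 (lt_of_le_of_ne (htm z).2 fun h => ?_)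
    obtain ⟨μ, hμ, e1⟩ := hmu z
    have hs : sgn z = 1 := by
      have : (z : ℕ) + 1 = k := by have := i.pos; simp only [z]; omega
      rw [sgn, this, hk.neg_one_pow]
    rw [h, hs, mul_one] at e1
    have e2 : g (G 0) = μ • G 0 := by rw [← e1]; exact (hbd _).symm
    have e3 := congrArg norm e2
    rw [LinearIsometryEquiv.norm_map, norm_smul, Real.norm_of_nonneg hμ.le] at e3
    have e4 : μ = 1 := by
      have := norm_pos_iff.2 hG0
      have h5 : (μ - 1) * ‖G 0‖ = 0 := by linarith
      rcases mul_eq_zero.1 h5 with h5 | h5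
      · linarith
      · linarith
    rw [e4, one_smul] at e2
    exact hg _ hG0 e2
  refine ⟨ha, fun i => heq i ▸ ⟨hlow i, hhigh i⟩, ?_, fun i => by rw [← heq]; exact hvec i⟩
  intro i j hij
  simpa only [heq] using hstrict hij

lemma continuous_tmin {k q : ℕ} (i : Fin k) :
    Continuous fun x : Fin k × Fin (q + 2) → ℝ => tmin x i := by
  unfold tmin
  exact Continuous.finset_inf'_apply _ fun j _ => continuous_apply _

lemma continuous_wmap {k q : ℕ} :
    Continuous fun x : Fin k × Fin (q + 2) → ℝ => wmap x := by
  unfold wmap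
  refine continuous_pi fun i => continuous_pi fun j => ?_
  exact Circle.exp.continuous.comp (by fun_prop)

lemma continuous_fmap {k q : ℕ} (σ : ℝ)
    (H : ℝ → (Fin k → Fin (q + 2) → Circle) → ℝ → EuclideanSpace ℝ (Fin (q + 2)))
    (hH : Continuous fun p : ℝ × (Fin k → Fin (q + 2) → Circle) × ℝ => H p.1 p.2.1 p.2.2) :
    Continuous (Function.uncurry fun τ => fmap σ (H τ)) := by
  refine continuous_pi fun p => ?_
  have c1 : Continuous fun y : ℝ × (Fin k × Fin (q + 2) → ℝ) =>
      H y.1 (wmap y.2) (tmin y.2 p.1) :=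
    hH.comp (continuous_fst.prodMk ((continuous_wmap.comp continuous_snd).prodMk
      ((continuous_tmin p.1).comp continuous_snd)))
  have c2 : Continuous fun y : ℝ × (Fin k × Fin (q + 2) → ℝ) =>
      H y.1 (wmap y.2) 0 :=
    hH.comp (continuous_fst.prodMk ((continuous_wmap.comp continuous_snd).prodMk
      continuous_const))
  have c3 : Continuous fun y : ℝ × (Fin k × Fin (q + 2) → ℝ) =>
      H y.1 (wmap y.2) (tmin y.2 p.1) p.2 := (EuclideanSpace.proj (𝕜 := ℝ) p.2).continuous.comp c1
  have c4 : Continuous fun y : ℝ × (Fin k × Fin (q + 2) → ℝ) =>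
      H y.1 (wmap y.2) 0 p.2 := (EuclideanSpace.proj (𝕜 := ℝ) p.2).continuous.comp c2
  have c5 : Continuous fun y : ℝ × (Fin k × Fin (q + 2) → ℝ) => y.2 (p.1, 0) := by fun_prop
  exact continuous_const.mul ((c5.mul c3).sub
    (((continuous_const.sub c5).mul continuous_const).mul c4))

lemma fmap_periodic {k q : ℕ} (σ : ℝ)
    (H : (Fin k → Fin (q + 2) → Circle) → ℝ → EuclideanSpace ℝ (Fin (q + 2)))
    (x : Fin k × Fin (q + 2) → ℝ) (a : Fin k × Fin (q + 2)) (ha : 2 ≤ (a.2 : ℕ)) :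
    fmap σ H (Function.update x a 1) = fmap σ H (Function.update x a 0) := by
  have hw : wmap (Function.update x a 1) = wmap (Function.update x a 0) := by
    funext i j
    unfold wmap
    by_cases h : (i, j) = a
    · subst h; simp
    · rw [Function.update_of_ne h, Function.update_of_ne h]
  have hz : ∀ (i : Fin k) (v : ℝ), Function.update x a v (i, 0) = x (i, 0) := by
    intro i v
    apply Function.update_of_ne
    rintro rfl
    simp at ha
  have ho : ∀ (i : Fin k) (v : ℝ), Function.update x a v (i, 1) = x (i, 1) := by
    intro i v
    apply Function.update_of_ne
    rintro rfl
    simp at ha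
  funext p
  simp only [fmap, hw, hz, tmin, ho]

/-! ### An explicit family of paths -/

/-- `1 - 2 ∑ max (Re u_j) 0` over the indices `j ≥ 2`; it is an odd integer when all these
`u_j` are real. -/
noncomputable def rho {q : ℕ} (u : Fin (q + 2) → Circle) : ℝ :=
  1 - 2 * ∑ j : Fin (q + 2), if 2 ≤ (j : ℕ) then max ((u j : ℂ).re) 0 else 0

/-- The vector added at the crossing of index `i`, as a function of the torus parameter. -/
noncomputable def beta {q : ℕ} (i : ℕ) (u : Fin (q + 2) → Circle) :
    EuclideanSpace ℝ (Fin (q + 2)) :=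
  WithLp.toLp 2 fun j => sgn i *
    if (j : ℕ) = 0 then rho u else if (j : ℕ) = 1 then 0 else -((u j : ℂ).im)

lemma rho_odd {q : ℕ} (u : Fin (q + 2) → Circle)
    (h : ∀ j : Fin (q + 2), 2 ≤ (j : ℕ) → (u j : ℂ).im = 0) :
    ∃ m : ℕ, rho u = 1 - 2 * m ∧
      (m = 0 → ∀ j : Fin (q + 2), 2 ≤ (j : ℕ) → (u j : ℂ).re = -1) := by
  have hre : ∀ j : Fin (q + 2), 2 ≤ (j : ℕ) → (u j : ℂ).re = 1 ∨ (u j : ℂ).re = -1 := by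
    intro j hj
    have h1 := Circle.normSq_coe (u j)
    rw [Complex.normSq_apply, h j hj] at h1
    have : ((u j : ℂ).re - 1) * ((u j : ℂ).re + 1) = 0 := by linarith
    rcases mul_eq_zero.1 this with h2 | h2
    · left; linarith
    · right; linarith
  classical
  refine ⟨(Finset.univ.filter fun j : Fin (q + 2) => 2 ≤ (j : ℕ) ∧ (u j : ℂ).re = 1).card,
    ?_, ?_⟩
  · rw [rho, Finset.card_filter]
    push_cast
    congr 2
    refine Finset.sum_congr rfl fun j _ => ?_
    by_cases hj : 2 ≤ (j : ℕ)
    · rcases hre j hj with h2 | h2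
      · simp [hj, h2]
      · simp only [hj, h2, if_true, true_and]; norm_num
    · simp [hj]
  · intro hc j hj
    rw [Finset.card_eq_zero, Finset.filter_eq_empty_iff] at hc
    refine (hre j hj).resolve_left fun h2 => hc (Finset.mem_univ j) ⟨hj, h2⟩

lemma continuous_rho {q : ℕ} : Continuous (rho (q := q)) := by
  unfold rho
  refine continuous_const.sub (continuous_const.mul (continuous_finsetSum _ fun j _ => ?_))
  split_ifs
  · exact (Complex.continuous_re.comp
      (continuous_subtype_val.comp (continuous_apply j))).max continuous_const
  · exact continuous_const

lemma continuous_beta {q : ℕ} (i : ℕ) : Continuous (beta (q := q) i) := by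
  unfold beta
  refine (PiLp.continuous_toLp 2 _).comp (continuous_pi fun j => continuous_const.mul ?_)
  split_ifs
  · exact continuous_rho
  · exact continuous_const
  · exact (Complex.continuous_im.comp (continuous_subtype_val.comp (continuous_apply j))).neg

/-- The initial family of paths on `[-1/2, k+1]`. Its component along the axis of index `1` is
`± cos (π s)` on `[-1/2, k]`, so that the line spanned by the axis of index `0` can only be met at
half-integers, where the position is `beta`. -/
noncomputable def path {k q : ℕ} (σ : ℝ) (e0 e1 v : EuclideanSpace ℝ (Fin (q + 2)))
    (w : Fin k → Fin (q + 2) → Circle) (s : ℝ) : EuclideanSpace ℝ (Fin (q + 2)) :=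
  ((Real.cos (Real.pi * min s k) - (max s k - k) ^ 2) * σ) • e1
    + (Real.sin (Real.pi * min s 0) ^ 2) • e0
    + ∑ i : Fin k, bump i s • beta i (w i) + ((max s k - k) ^ 2) • v

/-- The derivative of `path` with respect to `s`. -/
noncomputable def pathDeriv {k q : ℕ} (σ : ℝ) (e0 e1 v : EuclideanSpace ℝ (Fin (q + 2)))
    (w : Fin k → Fin (q + 2) → Circle) (s : ℝ) : EuclideanSpace ℝ (Fin (q + 2)) :=
  ((-(Real.sin (Real.pi * min s k) * Real.pi) - 2 * (max s k - k)) * σ) • e1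
    + (2 * Real.sin (Real.pi * min s 0) * (Real.cos (Real.pi * min s 0) * Real.pi)) • e0
    + ∑ i : Fin k, bumpDeriv i s • beta i (w i) + (2 * (max s k - k)) • v

lemma hasDerivAt_path {k q : ℕ} (σ : ℝ) (e0 e1 v : EuclideanSpace ℝ (Fin (q + 2)))
    (w : Fin k → Fin (q + 2) → Circle) (s : ℝ) :
    HasDerivAt (path σ e0 e1 v w) (pathDeriv σ e0 e1 v w s) s := by
  have hc : HasDerivAt (fun s : ℝ => Real.cos (Real.pi * min s k))
      (-(Real.sin (Real.pi * min s k) * Real.pi)) s := by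
    refine hasDerivAt_comp_min (Q := fun u => Real.cos (Real.pi * u))
      (Q' := fun u => -(Real.sin (Real.pi * u) * Real.pi)) (fun u => ?_) ?_ s
    · have := ((hasDerivAt_id u).const_mul Real.pi).cos
      simpa using this
    · simp only [mul_comm Real.pi (k : ℝ), Real.sin_nat_mul_pi]; simp
  have hm : HasDerivAt (fun s : ℝ => (max s k - k) ^ 2) (2 * (max s k - k)) s := by
    refine hasDerivAt_comp_max (Q := fun u => (u - k) ^ 2)
      (Q' := fun u => 2 * (u - k)) (fun u => ?_) ?_ s
    · refine (((hasDerivAt_id u).sub_const (k : ℝ)).pow 2).congr_deriv ?_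
      simp
    · simp
  have hs : HasDerivAt (fun s : ℝ => Real.sin (Real.pi * min s 0) ^ 2)
      (2 * Real.sin (Real.pi * min s 0) * (Real.cos (Real.pi * min s 0) * Real.pi)) s := by
    refine hasDerivAt_comp_min (Q := fun u => Real.sin (Real.pi * u) ^ 2)
      (Q' := fun u => 2 * Real.sin (Real.pi * u) * (Real.cos (Real.pi * u) * Real.pi))
      (fun u => ?_) ?_ s
    · refine (((hasDerivAt_id u).const_mul Real.pi).sin.pow 2).congr_deriv ?_
      simp
    · simp
  exact (((((hc.sub hm).mul_const σ).smul_const e1).add (hs.smul_const e0)).add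
    (HasDerivAt.fun_sum fun (i : Fin k) _ =>
      (hasDerivAt_bump i s).smul_const (beta i (w i)))).add
    (hm.smul_const v)

lemma continuous_path {k q : ℕ} (σ : ℝ) (e0 e1 v : EuclideanSpace ℝ (Fin (q + 2))) :
    Continuous fun p : (Fin k → Fin (q + 2) → Circle) × ℝ => path σ e0 e1 v p.1 p.2 := by
  unfold path
  have h : Continuous fun p : (Fin k → Fin (q + 2) → Circle) × ℝ =>
      ∑ i : Fin k, bump i p.2 • beta i (p.1 i) := by
    refine continuous_finsetSum _ fun i _ => ?_
    have hβ : Continuous fun p : (Fin k → Fin (q + 2) → Circle) × ℝ => beta i (p.1 i) :=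
      (continuous_beta (i : ℕ)).comp
        (((continuous_apply i).comp continuous_fst :
          Continuous fun p : (Fin k → Fin (q + 2) → Circle) × ℝ => p.1 i))
    have hb : Continuous (bump i) := by unfold bump; fun_prop
    exact (hb.comp continuous_snd).smul hβ
  refine ((Continuous.add ?_ ?_).add h).add ?_ <;> fun_prop

lemma continuous_pathDeriv {k q : ℕ} (σ : ℝ) (e0 e1 v : EuclideanSpace ℝ (Fin (q + 2))) :
    Continuous fun p : (Fin k → Fin (q + 2) → Circle) × ℝ => pathDeriv σ e0 e1 v p.1 p.2 := by
  unfold pathDeriv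
  have h : Continuous fun p : (Fin k → Fin (q + 2) → Circle) × ℝ =>
      ∑ i : Fin k, bumpDeriv i p.2 • beta i (p.1 i) := by
    refine continuous_finsetSum _ fun i _ => ?_
    have hβ : Continuous fun p : (Fin k → Fin (q + 2) → Circle) × ℝ => beta i (p.1 i) :=
      (continuous_beta (i : ℕ)).comp
        (((continuous_apply i).comp continuous_fst :
          Continuous fun p : (Fin k → Fin (q + 2) → Circle) × ℝ => p.1 i))
    exact ((continuous_bumpDeriv i).comp continuous_snd).smul hβ
  refine ((Continuous.add ?_ ?_).add h).add ?_ <;> fun_prop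

section

variable {k q : ℕ} {σ : ℝ} {v : EuclideanSpace ℝ (Fin (q + 2))}

/-- `path` with the first two standard basis vectors. -/
noncomputable abbrev pth (σ : ℝ) (v : EuclideanSpace ℝ (Fin (q + 2)))
    (w : Fin k → Fin (q + 2) → Circle) (s : ℝ) : EuclideanSpace ℝ (Fin (q + 2)) :=
  path σ (EuclideanSpace.single 0 1) (EuclideanSpace.single 1 1) v w s

lemma bump_sum_mid (w : Fin k → Fin (q + 2) → Circle) (i : Fin k) {s : ℝ}
    (h : (i : ℝ) + 1 / 4 ≤ s) (h' : s ≤ i + 3 / 4) :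
    ∑ l : Fin k, bump l s • beta l (w l) = beta i (w i) := by
  rw [Finset.sum_eq_single i, bump_of_mid h h', one_smul]
  · intro l _ hl
    rcases lt_or_gt_of_ne hl with h1 | h1
    · have : ((l : ℕ) : ℝ) + 1 ≤ (i : ℕ) := by exact_mod_cast h1
      rw [bump_of_ge (by linarith), zero_smul]
    · have : ((i : ℕ) : ℝ) + 1 ≤ (l : ℕ) := by exact_mod_cast h1
      rw [bump_of_le (by linarith), zero_smul]
  · simp

lemma path_mid (w : Fin k → Fin (q + 2) → Circle) (i : Fin k) {s : ℝ}
    (h : (i : ℝ) + 1 / 4 ≤ s) (h' : s ≤ i + 3 / 4) :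
    pth σ v w s = (Real.cos (Real.pi * s) * σ) • EuclideanSpace.single 1 1 + beta i (w i) := by
  have hi : ((i : ℕ) : ℝ) + 1 ≤ k := by exact_mod_cast i.2
  have hi0 : (0 : ℝ) ≤ (i : ℕ) := Nat.cast_nonneg _
  rw [pth, path, bump_sum_mid w i h h', min_eq_left (by linarith), max_eq_right (by linarith),
    min_eq_right (by linarith)]
  simp

lemma path_start (w : Fin k → Fin (q + 2) → Circle) :
    pth σ v w (-1 / 2) = EuclideanSpace.single 0 1 := by
  have hk : (0 : ℝ) ≤ k := Nat.cast_nonneg _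
  have e : Real.pi * (-1 / 2) = -(Real.pi / 2) := by ring
  rw [pth, path, min_eq_left (by linarith), max_eq_right (by linarith), min_eq_left (by norm_num),
    Finset.sum_eq_zero, e]
  · simp
  · intro l _
    have hl : (0 : ℝ) ≤ (l : ℕ) := Nat.cast_nonneg _
    rw [bump_of_le (by linarith), zero_smul]

lemma cos_pi_even (hk : Even k) : Real.cos (Real.pi * k) = 1 := by
  rw [mul_comm, Real.cos_nat_mul_pi, hk.neg_one_pow]

lemma path_late (hk : Even k) (w : Fin k → Fin (q + 2) → Circle) {s : ℝ} (hs : (k : ℝ) ≤ s) :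
    pth σ v w s = ((1 - (s - k) ^ 2) * σ) • EuclideanSpace.single 1 1 + ((s - k) ^ 2) • v := by
  have hk0 : (0 : ℝ) ≤ k := Nat.cast_nonneg _
  rw [pth, path, min_eq_right hs, max_eq_left hs, min_eq_right (by linarith),
    Finset.sum_eq_zero, cos_pi_even hk]
  · simp
  · intro l _
    have hl : ((l : ℕ) : ℝ) + 1 ≤ k := by exact_mod_cast l.2
    rw [bump_of_ge (by linarith), zero_smul]

lemma beta_one (i : ℕ) (u : Fin (q + 2) → Circle) : beta i u 1 = 0 := by
  simp [beta]

lemma beta_zero (i : ℕ) (u : Fin (q + 2) → Circle) : beta i u 0 = sgn i * rho u := by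
  simp [beta]

lemma beta_other (i : ℕ) (u : Fin (q + 2) → Circle) (j : Fin (q + 2)) (hj : 2 ≤ (j : ℕ)) :
    beta i u j = sgn i * -((u j : ℂ).im) := by
  have h0 : (j : ℕ) ≠ 0 := by omega
  have h1 : (j : ℕ) ≠ 1 := by omega
  simp only [beta, h0, h1, if_false]

/-- The coordinate of index `1` of `path` vanishes, away from the end points, only at
half-integers. -/
lemma path_crossing (hk : Even k) (hσ : σ ^ 2 = 1) (hv : 0 ≤ σ * v 1)
    (w : Fin k → Fin (q + 2) → Circle) {s : ℝ} (h1 : -1 / 2 < s) (h2 : s < k + 1)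
    (h : pth σ v w s 1 = 0) : ∃ i : Fin k, s = i + 1 / 2 := by
  have hσ0 : σ ≠ 0 := by rintro rfl; norm_num at hσ
  have hk0 : (0 : ℝ) ≤ k := Nat.cast_nonneg _
  rcases lt_or_ge s k with hsk | hsk
  · have e : pth σ v w s 1 = Real.cos (Real.pi * s) * σ := by
      rw [pth, path, min_eq_left hsk.le, max_eq_right hsk.le]
      simp [beta_one]
    rw [e] at h
    have h3 := (mul_eq_zero.1 h).resolve_right hσ0
    obtain ⟨m, hm⟩ := Real.cos_eq_zero_iff.1 h3
    have h4 : s = m + 1 / 2 := by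
      have hp := Real.pi_pos
      have : Real.pi * (s - (m + 1 / 2)) = 0 := by linarith
      rcases mul_eq_zero.1 this with h5 | h5
      · exact absurd h5 hp.ne'
      · linarith
    have hm0 : (-1 : ℤ) < m := by
      have : ((-1 : ℤ) : ℝ) < m := by push_cast; linarith
      exact_mod_cast this
    have hmk : m < (k : ℤ) := by
      have : (m : ℝ) < ((k : ℤ) : ℝ) := by push_cast; linarith
      exact_mod_cast this
    lift m to ℕ using by omega
    exact ⟨⟨m, by exact_mod_cast hmk⟩, by simpa using h4⟩
  · exfalso
    rw [path_late hk w hsk] at h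
    simp only [PiLp.add_apply, PiLp.smul_apply, PiLp.single_apply, smul_eq_mul, if_true,
      mul_one] at h
    have hm1 : (s - k) ^ 2 < 1 := by nlinarith
    have hm0 : 0 ≤ (s - k) ^ 2 := sq_nonneg _
    have : σ * ((1 - (s - k) ^ 2) * σ + (s - k) ^ 2 * v 1)
        = (1 - (s - k) ^ 2) * σ ^ 2 + (s - k) ^ 2 * (σ * v 1) := by ring
    rw [h, hσ] at this
    have := mul_nonneg hm0 hv
    linarith

lemma beta_ne_zero (i : ℕ) (u : Fin (q + 2) → Circle) : beta i u ≠ 0 := by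
  intro h
  have him : ∀ j : Fin (q + 2), 2 ≤ (j : ℕ) → (u j : ℂ).im = 0 := by
    intro j hj
    have h1 := beta_other i u j hj
    rw [h] at h1
    simpa [sgn_ne_zero] using h1
  obtain ⟨m, hm, -⟩ := rho_odd u him
  have h1 := beta_zero i u
  rw [h, hm] at h1
  have h2 : (1 - 2 * (m : ℝ)) = 0 := by
    have h3 : sgn i * (1 - 2 * (m : ℝ)) = 0 := h1.symm
    exact (mul_eq_zero.1 h3).resolve_left (sgn_ne_zero i)
  have h3 : (2 * m : ℕ) = 1 := by
    have : ((2 * m : ℕ) : ℝ) = (1 : ℕ) := by push_cast; linarith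
    exact_mod_cast this
  omega

lemma cos_half (i : ℕ) : Real.cos (Real.pi * (i + 1 / 2)) = 0 := by
  have : Real.pi * ((i : ℝ) + 1 / 2) = i * Real.pi + Real.pi / 2 := by ring
  rw [this, Real.cos_add_pi_div_two, Real.sin_nat_mul_pi, neg_zero]

lemma path_half (w : Fin k → Fin (q + 2) → Circle) (i : Fin k) :
    pth σ v w (i + 1 / 2) = beta i (w i) := by
  rw [path_mid w i (by linarith) (by linarith), cos_half]
  simp

lemma path_end (hk : Even k) (w : Fin k → Fin (q + 2) → Circle) :
    pth σ v w (k + 1) = v := by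
  rw [path_late hk w (by linarith)]
  simp

lemma path_ne_zero (hk : Even k) (hσ : σ ^ 2 = 1) (hv : 0 ≤ σ * v 1) (hv0 : v ≠ 0)
    (w : Fin k → Fin (q + 2) → Circle) {s : ℝ} (h1 : -1 / 2 ≤ s) (h2 : s ≤ k + 1) :
    pth σ v w s ≠ 0 := by
  rcases h1.eq_or_lt with h1 | h1
  · rw [← h1, path_start]
    simp
  rcases h2.eq_or_lt with h2 | h2
  · rw [h2, path_end hk]; exact hv0
  intro h
  obtain ⟨i, hi⟩ := path_crossing hk hσ hv w h1 h2 (by rw [h]; rfl)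
  rw [hi, path_half] at h
  exact beta_ne_zero _ _ h

end

/-! ### Alternations survive homotopies -/

lemma mul_neg_iff_pos {a b : ℝ} (ha : 0 < a) : a * b < 0 ↔ b < 0 := by
  rw [mul_neg_iff]
  constructor
  · rintro (h | h)
    · exact h.2
    · linarith [h.1]
  · exact fun h => Or.inl ⟨ha, h⟩

lemma sgn_mul_cos (i : ℕ) (d : ℝ) :
    sgn i * Real.cos (Real.pi * (i + 1 / 2 + d)) = Real.sin (Real.pi * d) := by
  have : Real.pi * ((i : ℝ) + 1 / 2 + d) = (Real.pi * d + Real.pi / 2) + i * Real.pi := by ring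
  rw [this, Real.cos_add_nat_mul_pi, Real.cos_add_pi_div_two, sgn, ← mul_assoc, ← pow_add]
  have : i + 1 + i = 2 * i + 1 := by ring
  rw [this, pow_succ, pow_mul]
  norm_num

lemma sin_pi_neg_iff {d : ℝ} (h : |d| < 1 / 2) : Real.sin (Real.pi * d) < 0 ↔ d < 0 := by
  have hp := Real.pi_pos
  rw [abs_lt] at h
  constructor
  · intro h1
    by_contra h2
    push Not at h2
    have := Real.sin_nonneg_of_nonneg_of_le_pi (x := Real.pi * d) (by positivity) (by nlinarith)
    linarith
  · intro h1
    exact Real.sin_neg_of_neg_of_neg_pi_lt (by nlinarith) (by nlinarith)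

lemma wmap_re {k q : ℕ} (x : Fin k × Fin (q + 2) → ℝ) (i : Fin k) (j : Fin (q + 2)) :
    (wmap x i j : ℂ).re = Real.cos (2 * Real.pi * x (i, j)) := by
  rw [wmap, Circle.coe_exp, Complex.exp_ofReal_mul_I_re]

lemma wmap_im {k q : ℕ} (x : Fin k × Fin (q + 2) → ℝ) (i : Fin k) (j : Fin (q + 2)) :
    (wmap x i j : ℂ).im = Real.sin (2 * Real.pi * x (i, j)) := by
  rw [wmap, Circle.coe_exp, Complex.exp_ofReal_mul_I_im]

lemma fin_cases_two {q : ℕ} (j : Fin (q + 2)) : j = 0 ∨ j = 1 ∨ 2 ≤ (j : ℕ) := by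
  rcases j with ⟨j, hj⟩
  rcases j with _ | _ | j
  · left; rfl
  · right; left; rfl
  · right; right; simp

/-- The reparametrization of `[0, 1]` by `[-1/2, k+1]`. -/
noncomputable def tim (k : ℕ) (t : ℝ) : ℝ := -1 / 2 + (k + 3 / 2) * t

lemma tim_zero (k : ℕ) : tim k 0 = -1 / 2 := by simp [tim]

lemma tim_one (k : ℕ) : tim k 1 = k + 1 := by simp only [tim]; ring

lemma continuous_tim (k : ℕ) : Continuous (tim k) := by unfold tim; fun_prop

lemma hasDerivAt_tim (k : ℕ) (t : ℝ) : HasDerivAt (tim k) (k + 3 / 2 : ℝ) t := by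
  refine (((hasDerivAt_id t).const_mul (k + 3 / 2 : ℝ)).const_add (-1 / 2)).congr_deriv ?_
  simp

/-- The homotopy invariance behind `alternating_family`: the zeros of `fmap` survive a homotopy
of the explicit family. -/
lemma exists_alternating {k q : ℕ} (hk : Even k)
    (g : EuclideanSpace ℝ (Fin (q + 2)) ≃ₗᵢ[ℝ] EuclideanSpace ℝ (Fin (q + 2)))
    (hg : ∀ v, v ≠ 0 → g v ≠ v) {σ : ℝ} (hσ : σ ^ 2 = 1) (v0 : EuclideanSpace ℝ (Fin (q + 2)))
    (hσv : 0 ≤ σ * v0 1)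
    (H : ℝ → (Fin k → Fin (q + 2) → Circle) → ℝ → EuclideanSpace ℝ (Fin (q + 2)))
    (hH : Continuous fun p : ℝ × (Fin k → Fin (q + 2) → Circle) × ℝ => H p.1 p.2.1 p.2.2)
    (hH0 : ∀ w, ∀ t ∈ Set.Icc (0 : ℝ) 1, H 0 w t = pth σ v0 w (tim k t))
    (hHne : ∀ τ ∈ Set.Icc (0 : ℝ) 1, ∀ w, ∀ t ∈ Set.Icc (0 : ℝ) 1, H τ w t ≠ 0)
    (hHbd : ∀ τ ∈ Set.Icc (0 : ℝ) 1, ∀ w, H τ w 1 = g (H τ w 0)) :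
    ∃ (w : Fin k → Fin (q + 2) → Circle) (t : Fin k → ℝ), StrictMono t ∧
      (∀ i, t i ∈ Set.Icc (0 : ℝ) 1) ∧
      ∀ i, ∃ μ : ℝ, 0 < μ ∧ H 1 w (t i) = (sgn i * μ) • H 1 w 0 := by
  have hk0 : (0 : ℝ) ≤ k := Nat.cast_nonneg _
  have hK : (0 : ℝ) < k + 3 / 2 := by linarith
  have ht0 := tim_zero k
  by_contra hcon
  let c : Fin k × Fin (q + 2) → ℝ := fun p =>
    if p.2 = 1 then ((p.1 : ℕ) + 1 : ℝ) / (k + 3 / 2) else 1 / 2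
  let r : ℝ := 1 / (4 * (k + 3 / 2))
  have hr : 0 < r := by positivity
  have hr4 : r ≤ 1 / 4 := by
    apply one_div_le_one_div_of_le <;> linarith
  have hrK : r * (k + 3 / 2) = 1 / 4 := by simp only [r]; field_simp
  have hcm : ∀ i : Fin k, c (i, 1) * (k + 3 / 2) = (i : ℕ) + 1 := by
    intro i; simp only [c, if_true]; field_simp
  have hik : ∀ i : Fin k, ((i : ℕ) : ℝ) + 1 ≤ k := by intro i; exact_mod_cast i.2
  have hi0 : ∀ i : Fin k, (0 : ℝ) ≤ (i : ℕ) := fun i => Nat.cast_nonneg _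
  refine degree_obstruction_fintype (fun a : Fin k × Fin (q + 2) => 2 ≤ (a.2 : ℕ))
    (fun τ => fmap σ (H τ)) (continuous_fmap σ H hH)
    (fun τ x a ha => fmap_periodic σ (H τ) x a ha) ?_ ?_ c ?_ r hr ?_ ?_
  · intro τ hτ x hx a ha hxa h0
    obtain ⟨h1, h2, -, -⟩ := zero_analysis hk hσ g hg (H τ) (hHne τ hτ) (hHbd τ hτ) x hx h0
    obtain ⟨i, j⟩ := a
    rcases fin_cases_two j with rfl | rfl | hj
    · rcases hxa with h | h
      · exact (h1 i).1.ne' h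
      · exact (h1 i).2.ne h
    · rcases hxa with h | h
      · exact (h2 i).1.ne' h
      · exact (h2 i).2.ne h
    · exact ha hj
  · intro x hx h0
    obtain ⟨h1, h2, h3, h4⟩ := zero_analysis hk hσ g hg (H 1) (hHne 1 (by simp))
      (hHbd 1 (by simp)) x hx h0
    refine hcon ⟨wmap x, fun i => x (i, 1), h3, fun i => Set.Ioo_subset_Icc_self (h2 i), fun i =>
      ⟨(1 - x (i, 0)) / x (i, 0), div_pos (by linarith [(h1 i).2]) (h1 i).1, ?_⟩⟩
    have h := congrArg (fun v => (x (i, 0))⁻¹ • v) (h4 i)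
    simp only [smul_smul, inv_mul_cancel₀ (h1 i).1.ne', one_smul] at h
    rw [h]; congr 1; ring
  · rintro ⟨i, j⟩
    by_cases hj : j = 1
    · have h1 := hcm i
      subst hj
      constructor
      · by_contra hc
        push Not at hc
        nlinarith [hi0 i]
      · by_contra hc
        push Not at hc
        nlinarith [hik i]
    · simp only [c, hj, if_false]
      norm_num
  · intro x hx h0
    obtain ⟨h1, h2, h3, h4⟩ := zero_analysis hk hσ g hg (H 0) (hHne 0 (by simp))
      (hHbd 0 (by simp)) x hx h0
    have h5 : ∀ i : Fin k, x (i, 0) • pth σ v0 (wmap x) (tim k (x (i, 1)))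
        = ((1 - x (i, 0)) * sgn i) • EuclideanSpace.single 0 1 := by
      intro i
      have := h4 i
      rw [hH0 _ _ (Set.Ioo_subset_Icc_self (h2 i)), hH0 _ 0 (by simp)] at this
      simp only [ht0, path_start] at this
      exact this
    have h6 : ∀ i : Fin k, ∃ l : Fin k, tim k (x (i, 1)) = l + 1 / 2 := by
      intro i
      refine path_crossing hk hσ hσv (wmap x) ?_ ?_ ?_
      · unfold tim; nlinarith [(h2 i).1]
      · unfold tim; nlinarith [(h2 i).2]
      · have := congrArg (fun v : EuclideanSpace ℝ (Fin (q + 2)) => v 1) (h5 i)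
        simp only [PiLp.smul_apply, PiLp.single_apply, smul_eq_mul] at this
        rw [if_neg (by simp)] at this
        rw [mul_zero] at this
        exact (mul_eq_zero.1 this).resolve_left (h1 i).1.ne'
    choose l hl using h6
    have hlm : StrictMono l := by
      intro i j hij
      have h7 : x (i, 1) < x (j, 1) := h3 hij
      have h8 := hl i
      have h9 := hl j
      simp only [tim] at h8 h9
      have : ((l i : ℕ) : ℝ) < (l j : ℕ) := by nlinarith
      exact Fin.lt_def.2 (by exact_mod_cast this)
    have hlid : l = id := by
      apply (StrictMono.range_inj hlm strictMono_id).1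
      rw [(Finite.surjective_of_injective hlm.injective).range_eq, Set.range_id]
    have hb : ∀ i : Fin k, x (i, 0) • beta i (wmap x i)
        = ((1 - x (i, 0)) * sgn i) • EuclideanSpace.single 0 1 := by
      intro i
      have := h5 i
      rw [hl i, hlid] at this
      rw [← this]
      congr 1
      exact (path_half (wmap x) i).symm
    have him : ∀ (i : Fin k) (j : Fin (q + 2)), 2 ≤ (j : ℕ) → (wmap x i j : ℂ).im = 0 := by
      intro i j hj
      have := congrArg (fun v : EuclideanSpace ℝ (Fin (q + 2)) => v j) (hb i)
      have hj0 : j ≠ 0 := by rintro rfl; simp at hj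
      simp only [PiLp.smul_apply, PiLp.single_apply, smul_eq_mul, beta_other _ _ _ hj, if_neg hj0,
        mul_zero] at this
      have h7 := (mul_eq_zero.1 ((mul_eq_zero.1 this).resolve_left (h1 i).1.ne')).resolve_left
        (sgn_ne_zero _)
      linarith
    have hrho : ∀ i : Fin k, x (i, 0) * rho (wmap x i) = 1 - x (i, 0) := by
      intro i
      have := congrArg (fun v : EuclideanSpace ℝ (Fin (q + 2)) => v 0) (hb i)
      simp only [PiLp.smul_apply, PiLp.single_apply, smul_eq_mul, beta_zero, if_true] at this
      have h7 : sgn i * (x (i, 0) * rho (wmap x i) - (1 - x (i, 0))) = 0 := by linarith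
      have := (mul_eq_zero.1 h7).resolve_left (sgn_ne_zero _)
      linarith
    have hfin : ∀ i : Fin k, x (i, 0) = 1 / 2 ∧
        ∀ j : Fin (q + 2), 2 ≤ (j : ℕ) → (wmap x i j : ℂ).re = -1 := by
      intro i
      obtain ⟨m, hm, hm'⟩ := rho_odd (wmap x i) (him i)
      have h7 := hrho i
      have hm0 : m = 0 := by
        by_contra hne
        have : (1 : ℝ) ≤ m := by exact_mod_cast Nat.one_le_iff_ne_zero.2 hne
        have h8 : rho (wmap x i) < 0 := by rw [hm]; linarith
        nlinarith [(h1 i).1, (h1 i).2]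
      refine ⟨?_, hm' hm0⟩
      rw [hm, hm0] at h7
      push_cast at h7
      linarith
    rintro ⟨i, j⟩
    have hz : x (i, j) = c (i, j) := by
      rcases fin_cases_two j with rfl | rfl | hj
      · simp only [c]
        rw [if_neg (by simp)]
        exact (hfin i).1
      · have h7 := hl i
        rw [hlid] at h7
        simp only [tim, id] at h7
        have h8 := hcm i
        have : (k + 3 / 2 : ℝ) * (x (i, 1) - c (i, 1)) = 0 := by linarith
        have := (mul_eq_zero.1 this).resolve_left hK.ne'
        linarith
      · have h7 := (hfin i).2 j hj
        rw [wmap_re] at h7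
        have hj1 : j ≠ 1 := by rintro rfl; simp at hj
        simp only [c, if_neg hj1]
        obtain ⟨m, hm⟩ := Real.cos_eq_neg_one_iff.1 h7
        have hp := Real.pi_pos
        have h8 : Real.pi * (1 + 2 * m - 2 * x (i, j)) = 0 := by linarith
        have h9 := (mul_eq_zero.1 h8).resolve_left hp.ne'
        have hb0 := hx (i, j)
        have : m = 0 := by
          have ha : (-1 : ℝ) < m := by linarith [hb0.1]
          have hb : (m : ℝ) < 1 := by linarith [hb0.2]
          have ha' : -1 < m := by exact_mod_cast ha
          have hb' : m < 1 := by exact_mod_cast hb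
          omega
        rw [this] at h9
        push_cast at h9
        linarith
    rw [hz]; simpa using hr
  · intro x hx
    have hxt : ∀ i : Fin k, |(k + 3 / 2) * x (i, 1) - ((i : ℕ) + 1)| < 1 / 4 := by
      intro i
      rw [← hcm i]
      have : (k + 3 / 2 : ℝ) * x (i, 1) - c (i, 1) * (k + 3 / 2)
        = (k + 3 / 2) * (x (i, 1) - c (i, 1)) := by ring
      rw [this, abs_mul, abs_of_pos hK, ← hrK, mul_comm]
      exact mul_lt_mul_of_pos_right (hx _) hK
    have htm : ∀ i, tmin x i = x (i, 1) := by
      intro i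
      refine le_antisymm (tmin_le x le_rfl) ?_
      obtain ⟨j, hij, e⟩ := exists_tmin x i
      rw [e]
      rcases hij.eq_or_lt with h | h
      · rw [h]
      · have h7 := abs_lt.1 (hxt i)
        have h8 := abs_lt.1 (hxt j)
        have h9 : ((i : ℕ) : ℝ) + 1 ≤ (j : ℕ) := by exact_mod_cast h
        by_contra hcc
        push Not at hcc
        nlinarith
    have hx0 : ∀ i : Fin k, |x (i, 0) - 1 / 2| < 1 / 4 := by
      intro i
      have := hx (i, 0)
      simp only [c] at this
      rw [if_neg (by simp)] at this
      linarith
    have hxj : ∀ (i : Fin k) (j : Fin (q + 2)), 2 ≤ (j : ℕ) → |x (i, j) - 1 / 2| < 1 / 4 := by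
      intro i j hj
      have := hx (i, j)
      have hj1 : j ≠ 1 := by rintro rfl; simp at hj
      simp only [c, if_neg hj1] at this
      linarith
    rintro ⟨i, j⟩
    have h7 := abs_lt.1 (hxt i)
    have hx01 : x (i, 1) ∈ Set.Icc (0 : ℝ) 1 := by
      constructor
      · by_contra hcc
        push Not at hcc
        nlinarith [hi0 i]
      · by_contra hcc
        push Not at hcc
        nlinarith [hik i]
    have hmid := path_mid (σ := σ) (v := v0) (wmap x) i (s := tim k (x (i, 1)))
      (by unfold tim; linarith) (by unfold tim; linarith)
    have ha := abs_lt.1 (hx0 i)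
    simp only [fmap]
    rw [htm, hH0 _ _ hx01, hH0 _ 0 (by simp), ht0, path_start, hmid]
    simp only [PiLp.add_apply, PiLp.smul_apply, PiLp.single_apply, smul_eq_mul]
    rcases fin_cases_two j with rfl | rfl | hj
    · have hr1 : rho (wmap x i) = 1 := by
        rw [rho, Finset.sum_eq_zero]
        · simp
        · intro j _
          split_ifs with hj
          · rw [max_eq_right]
            rw [wmap_re]
            have h8 := abs_lt.1 (hxj i j hj)
            have hp := Real.pi_pos
            refine Real.cos_nonpos_of_pi_div_two_le_of_le ?_ ?_ <;> nlinarith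
          · rfl
      rw [beta_zero, hr1, if_neg (by simp), if_pos rfl]
      have hc0 : c (i, 0) = 1 / 2 := by simp [c]
      have he : eta (q := q) σ 0 = 1 := by simp [eta]
      have : sgn i * eta (q := q) σ 0 * (x (i, 0) * (Real.cos (Real.pi * tim k (x (i, 1))) * σ * 0
          + sgn i * 1) - (1 - x (i, 0)) * sgn i * 1)
          = (sgn i * sgn i) * (2 * x (i, 0) - 1) := by rw [he]; ring
      rw [this, sgn_mul_self, hc0]
      constructor <;> intro h <;> linarith
    · rw [beta_one, if_pos rfl, if_neg (by simp)]
      have he : eta (q := q) σ 1 = σ := by simp [eta]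
      set d : ℝ := (k + 3 / 2) * x (i, 1) - ((i : ℕ) + 1) with hd
      have htd : tim k (x (i, 1)) = (i : ℕ) + 1 / 2 + d := by rw [hd]; unfold tim; ring
      have : sgn i * eta (q := q) σ 1 * (x (i, 0) * (Real.cos (Real.pi * tim k (x (i, 1))) * σ * 1
          + 0) - (1 - x (i, 0)) * sgn i * 0)
          = σ ^ 2 * (x (i, 0) * (sgn i * Real.cos (Real.pi * tim k (x (i, 1))))) := by
        rw [he]; ring
      rw [this, hσ, one_mul, htd, sgn_mul_cos]
      have hx0p : 0 < x (i, 0) := by linarith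
      rw [mul_neg_iff_pos hx0p, sin_pi_neg_iff (by linarith [hxt i])]
      have h8 := hcm i
      have hd' : d = (k + 3 / 2) * (x (i, 1) - c (i, 1)) := by rw [hd]; linarith
      rw [hd', mul_neg_iff_pos hK, sub_neg]
    · have hj1 : j ≠ 1 := by rintro rfl; simp at hj
      have hj0 : j ≠ 0 := by rintro rfl; simp at hj
      have he : eta σ j = 1 := by simp [eta, hj1]
      have h8 := abs_lt.1 (hxj i j hj)
      have hcj : c (i, j) = 1 / 2 := by simp [c, hj1]
      rw [beta_other _ _ _ hj, if_neg hj0, if_neg hj1, wmap_im, he, hcj]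
      have e1 : 2 * Real.pi * x (i, j) = Real.pi * (2 * (x (i, j) - 1 / 2)) + Real.pi := by ring
      rw [e1, Real.sin_add_pi]
      have : sgn i * 1 * (x (i, 0) * (Real.cos (Real.pi * tim k (x (i, 1))) * σ * 0
          + sgn i * - -Real.sin (Real.pi * (2 * (x (i, j) - 1 / 2))))
          - (1 - x (i, 0)) * sgn i * 0)
          = (sgn i * sgn i) * (x (i, 0) * Real.sin (Real.pi * (2 * (x (i, j) - 1 / 2)))) := by ring
      rw [this, sgn_mul_self, one_mul]
      have hx0p : 0 < x (i, 0) := by linarith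
      rw [mul_neg_iff_pos hx0p, sin_pi_neg_iff (by rw [abs_lt]; constructor <;> linarith)]
      constructor <;> intro h <;> linarith

/-- A torus of paths such that every homotopic torus of paths contains a path which meets
alternately, `k` times, the two rays spanned by its initial point and the opposite point. -/
theorem alternating_family {k q : ℕ} (hk : Even k)
    (g : EuclideanSpace ℝ (Fin (q + 2)) ≃ₗᵢ[ℝ] EuclideanSpace ℝ (Fin (q + 2)))
    (hg : ∀ v, v ≠ 0 → g v ≠ v) :
    ∃ y v : (Fin k → Fin (q + 2) → Circle) → ℝ → EuclideanSpace ℝ (Fin (q + 2)),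
      (Continuous fun p : (Fin k → Fin (q + 2) → Circle) × ℝ => y p.1 p.2) ∧
      (Continuous fun p : (Fin k → Fin (q + 2) → Circle) × ℝ => v p.1 p.2) ∧
      (∀ w t, HasDerivAt (y w) (v w t) t) ∧
      (∀ w, ∀ t ∈ Set.Icc (0 : ℝ) 1, y w t ≠ 0) ∧
      (∀ w, y w 1 = g (y w 0)) ∧
      ∀ H : ℝ → (Fin k → Fin (q + 2) → Circle) → ℝ → EuclideanSpace ℝ (Fin (q + 2)),
        (Continuous fun p : ℝ × (Fin k → Fin (q + 2) → Circle) × ℝ => H p.1 p.2.1 p.2.2) →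
        (∀ w, ∀ t ∈ Set.Icc (0 : ℝ) 1, H 0 w t = y w t) →
        (∀ τ ∈ Set.Icc (0 : ℝ) 1, ∀ w, ∀ t ∈ Set.Icc (0 : ℝ) 1, H τ w t ≠ 0) →
        (∀ τ ∈ Set.Icc (0 : ℝ) 1, ∀ w, H τ w 1 = g (H τ w 0)) →
        ∃ (w : Fin k → Fin (q + 2) → Circle) (t : Fin k → ℝ), StrictMono t ∧
          (∀ i, t i ∈ Set.Icc (0 : ℝ) 1) ∧
          ∀ i, ∃ μ : ℝ, 0 < μ ∧ H 1 w (t i) = (sgn i * μ) • H 1 w 0 := by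
  set v0 : EuclideanSpace ℝ (Fin (q + 2)) := g (EuclideanSpace.single 0 1) with hv0
  have hv0' : v0 ≠ 0 := by
    rw [hv0]; intro h
    have := congrArg norm h
    rw [LinearIsometryEquiv.norm_map] at this
    simp at this
  obtain ⟨σ, hσ, hσv⟩ : ∃ σ : ℝ, σ ^ 2 = 1 ∧ 0 ≤ σ * v0 1 := by
    rcases le_total 0 (v0 1) with h | h
    · exact ⟨1, by norm_num, by linarith⟩
    · exact ⟨-1, by norm_num, by linarith⟩
  have hk0 : (0 : ℝ) ≤ k := Nat.cast_nonneg _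
  have hp : Continuous fun p : (Fin k → Fin (q + 2) → Circle) × ℝ => (p.1, tim k p.2) :=
    continuous_fst.prodMk ((continuous_tim k).comp continuous_snd)
  have c1 := (continuous_path (k := k) σ (EuclideanSpace.single 0 1) (EuclideanSpace.single 1 1)
    v0).comp hp
  have c2 := ((continuous_pathDeriv (k := k) σ (EuclideanSpace.single 0 1)
    (EuclideanSpace.single 1 1) v0).comp hp).const_smul (k + 3 / 2 : ℝ)
  refine ⟨fun w t => pth σ v0 w (tim k t), fun w t => (k + 3 / 2 : ℝ) •
      pathDeriv σ (EuclideanSpace.single 0 1) (EuclideanSpace.single 1 1) v0 w (tim k t),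
    c1, c2, ?_, ?_, ?_, ?_⟩
  · intro w t
    exact (hasDerivAt_path σ (EuclideanSpace.single 0 1) (EuclideanSpace.single 1 1) v0 w
      (tim k t)).scomp t (hasDerivAt_tim k t)
  · intro w t ht
    refine path_ne_zero hk hσ hσv hv0' w ?_ ?_
    · unfold tim; nlinarith [ht.1]
    · unfold tim; nlinarith [ht.2]
  · intro w
    simp only [tim_zero, tim_one]
    rw [path_start, path_end hk]
  · exact fun H hH hH0 hHne hHbd => exists_alternating hk g hg hσ v0 hσv H hH hH0 hHne hHbd

/-! ### Twisted paths -/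

section Paths

variable {E : Type*} [NormedAddCommGroup E] [InnerProductSpace ℝ E] [ProperSpace E]

open ContinuousLinearMap (adjoint)

/-- The path with velocity `u` on `[0, P]` whose initial point is `B (∫ u)`. When
`(A - 1) B = 1` it satisfies the twisted boundary condition `x P = A (x 0)`. -/
noncomputable def X (P : ℝ) (B : E →L[ℝ] E) (u : ℝ → E) (t : ℝ) : E :=
  B (∫ s in (0 : ℝ)..P, u s) + ∫ s in (0 : ℝ)..t, u s

/-- The `L²(0, P)`-adjoint of the linear map `u ↦ X P B u`. -/
noncomputable def KS (P : ℝ) (B : E →L[ℝ] E) (p : ℝ → E) (s : ℝ) : E :=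
  adjoint B (∫ t in (0 : ℝ)..P, p t) + ∫ t in s..P, p t

/-- The retraction of `ℝ` onto `[0, P]`. -/
noncomputable def cl (P t : ℝ) : ℝ := max 0 (min t P)

lemma cl_mem {P : ℝ} (hP : 0 ≤ P) (t : ℝ) : cl P t ∈ Set.Icc 0 P :=
  ⟨le_max_left _ _, max_le hP (min_le_right _ _)⟩

lemma cl_eq {P t : ℝ} (h : t ∈ Set.Icc 0 P) : cl P t = t := by
  rw [cl, min_eq_left h.2, max_eq_right h.1]

lemma continuous_cl (P : ℝ) : Continuous (cl P) := by unfold cl; fun_prop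

variable {P : ℝ} {B : E →L[ℝ] E}

lemma hasDerivAt_X {u : ℝ → E} (hu : Continuous u) (t : ℝ) : HasDerivAt (X P B u) (u t) t :=
  ((hu.integral_hasStrictDerivAt 0 t).hasDerivAt).const_add _

lemma continuous_X {u : ℝ → E} (hu : Continuous u) : Continuous (X P B u) :=
  continuous_iff_continuousAt.2 fun t => (hasDerivAt_X hu t).continuousAt

lemma X_congr (hP : 0 ≤ P) {u v : ℝ → E} (h : ∀ t ∈ Set.Icc 0 P, u t = v t) {t : ℝ}
    (ht : t ∈ Set.Icc 0 P) : X P B u t = X P B v t := by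
  unfold X
  congr 1
  · congr 1
    refine intervalIntegral.integral_congr fun s hs => h s ?_
    rwa [Set.uIcc_of_le hP] at hs
  · refine intervalIntegral.integral_congr fun s hs => h s ?_
    rw [Set.uIcc_of_le ht.1] at hs
    exact ⟨hs.1, hs.2.trans ht.2⟩

lemma X_sub_smul {u v : ℝ → E} (hu : Continuous u) (hv : Continuous v) (a t : ℝ) :
    X P B (fun s => u s - a • v s) t = X P B u t - a • X P B v t := by
  unfold X
  have h1 : ∀ b c : ℝ, ∫ s in b..c, (u s - a • v s)
      = (∫ s in b..c, u s) - a • ∫ s in b..c, v s := by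
    intro b c
    rw [intervalIntegral.integral_sub, intervalIntegral.integral_smul]
    all_goals exact Continuous.intervalIntegrable (by fun_prop) _ _
  rw [h1, h1, map_sub, map_smul, smul_add]
  abel

lemma X_twist (A : E ≃ₗᵢ[ℝ] E) (hB : ∀ v, A (B v) = B v + v) (u : ℝ → E) :
    X P B u P = A (X P B u 0) := by
  simp [X, hB]

lemma sq_integral_norm_le (hP : 0 < P) {v : ℝ → E} (hv : Continuous v) :
    (∫ s in (0 : ℝ)..P, ‖v s‖) ^ 2 ≤ P * ∫ s in (0 : ℝ)..P, ‖v s‖ ^ 2 := by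
  set m := (∫ s in (0 : ℝ)..P, ‖v s‖) with hm
  have h : 0 ≤ ∫ s in (0 : ℝ)..P, (‖v s‖ - m / P) ^ 2 :=
    intervalIntegral.integral_nonneg hP.le fun s _ => sq_nonneg _
  have e : ∫ s in (0 : ℝ)..P, (‖v s‖ - m / P) ^ 2
      = (∫ s in (0 : ℝ)..P, ‖v s‖ ^ 2) - m ^ 2 / P := by
    have e1 : ∀ s, (‖v s‖ - m / P) ^ 2 = ‖v s‖ ^ 2 - (2 * (m / P)) * ‖v s‖ + (m / P) ^ 2 := by
      intro s; ring
    simp only [e1]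
    rw [intervalIntegral.integral_add, intervalIntegral.integral_sub,
      intervalIntegral.integral_const_mul, intervalIntegral.integral_const, ← hm]
    · simp only [smul_eq_mul, sub_zero]; field_simp; ring
    all_goals exact Continuous.intervalIntegrable (by fun_prop) _ _
  rw [e] at h
  have h2 : m ^ 2 / P ≤ ∫ s in (0 : ℝ)..P, ‖v s‖ ^ 2 := by linarith
  rw [div_le_iff₀ hP] at h2
  linarith

lemma norm_X_le (hP : 0 < P) {v : ℝ → E} (hv : Continuous v) {t : ℝ} (ht : t ∈ Set.Icc 0 P) :
    ‖X P B v t‖ ≤ (‖B‖ + 1) * ∫ s in (0 : ℝ)..P, ‖v s‖ := by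
  have h1 : ‖∫ s in (0 : ℝ)..P, v s‖ ≤ ∫ s in (0 : ℝ)..P, ‖v s‖ :=
    intervalIntegral.norm_integral_le_integral_norm hP.le
  have h2 : ‖∫ s in (0 : ℝ)..t, v s‖ ≤ ∫ s in (0 : ℝ)..P, ‖v s‖ := by
    refine (intervalIntegral.norm_integral_le_integral_norm ht.1).trans ?_
    refine intervalIntegral.integral_mono_interval le_rfl ht.1 ht.2 ?_
      (hv.norm.intervalIntegrable _ _)
    exact Filter.Eventually.of_forall fun s => norm_nonneg _
  unfold X
  calc _ ≤ ‖B (∫ s in (0 : ℝ)..P, v s)‖ + ‖∫ s in (0 : ℝ)..t, v s‖ := norm_add_le _ _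
    _ ≤ ‖B‖ * (∫ s in (0 : ℝ)..P, ‖v s‖) + ∫ s in (0 : ℝ)..P, ‖v s‖ :=
        add_le_add ((B.le_opNorm _).trans (mul_le_mul_of_nonneg_left h1 (norm_nonneg _))) h2
    _ = _ := by ring

lemma sq_norm_X_le (hP : 0 < P) {v : ℝ → E} (hv : Continuous v) {t : ℝ}
    (ht : t ∈ Set.Icc 0 P) :
    ‖X P B v t‖ ^ 2 ≤ ((‖B‖ + 1) ^ 2 * P) * ∫ s in (0 : ℝ)..P, ‖v s‖ ^ 2 := by
  have h1 := norm_X_le (B := B) hP hv ht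
  have h2 := sq_integral_norm_le hP hv
  calc _ ≤ ((‖B‖ + 1) * ∫ s in (0 : ℝ)..P, ‖v s‖) ^ 2 :=
        pow_le_pow_left₀ (norm_nonneg _) h1 2
    _ = (‖B‖ + 1) ^ 2 * (∫ s in (0 : ℝ)..P, ‖v s‖) ^ 2 := by ring
    _ ≤ (‖B‖ + 1) ^ 2 * (P * ∫ s in (0 : ℝ)..P, ‖v s‖ ^ 2) :=
        mul_le_mul_of_nonneg_left h2 (by positivity)
    _ = _ := by ring

lemma hasDerivAt_KS {p : ℝ → E} (hp : Continuous p) (s : ℝ) : HasDerivAt (KS P B p) (-p s) s :=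
  (intervalIntegral.integral_hasDerivAt_left (hp.intervalIntegrable _ _)
    hp.stronglyMeasurable.stronglyMeasurableAtFilter hp.continuousAt).const_add _

lemma continuous_KS {p : ℝ → E} (hp : Continuous p) : Continuous (KS P B p) :=
  continuous_iff_continuousAt.2 fun t => (hasDerivAt_KS hp t).continuousAt

/-- `KS` is adjoint to `X`. -/
lemma duality {p v : ℝ → E} (hp : Continuous p) (hv : Continuous v) :
    ∫ t in (0 : ℝ)..P, inner ℝ (p t) (X P B v t) = ∫ t in (0 : ℝ)..P, inner ℝ (KS P B p t) (v t) := by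
  have hX : Continuous (X P B v) := continuous_X hv
  have hK : Continuous (KS P B p) := continuous_KS hp
  have hd : ∀ t ∈ Set.uIcc 0 P, HasDerivAt (fun t => inner ℝ (KS P B p t) (X P B v t))
      (inner ℝ (KS P B p t) (v t) + inner ℝ (-p t) (X P B v t)) t :=
    fun t _ => (hasDerivAt_KS hp t).inner ℝ (hasDerivAt_X hv t)
  have h1 := intervalIntegral.integral_eq_sub_of_hasDerivAt hd
    (Continuous.intervalIntegrable (by fun_prop) _ _)
  rw [intervalIntegral.integral_add (Continuous.intervalIntegrable (by fun_prop) _ _)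
    (Continuous.intervalIntegrable (by fun_prop) _ _)] at h1
  simp only [inner_neg_left, intervalIntegral.integral_neg] at h1
  -- the boundary terms cancel
  have h2 : inner ℝ (KS P B p P) (X P B v P) - inner ℝ (KS P B p 0) (X P B v 0) = 0 := by
    simp only [KS, X, intervalIntegral.integral_same, add_zero, inner_add_left, inner_add_right,
      ContinuousLinearMap.adjoint_inner_left]
    ring
  linarith

lemma norm_KS_le (hP : 0 < P) {p : ℝ → E} {M : ℝ} (hM : ∀ t ∈ Set.Icc 0 P, ‖p t‖ ≤ M) {s : ℝ}
    (hs : s ∈ Set.Icc 0 P) : ‖KS P B p s‖ ≤ (‖adjoint B‖ + 1) * (M * P) := by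
  have hM0 : 0 ≤ M := (norm_nonneg _).trans (hM 0 ⟨le_rfl, hP.le⟩)
  have h1 : ‖∫ t in (0 : ℝ)..P, p t‖ ≤ M * P := by
    have := intervalIntegral.norm_integral_le_of_norm_le_const (a := 0) (b := P) (f := p) (C := M)
      (fun t ht => hM t (by rw [Set.uIoc_of_le hP.le] at ht; exact ⟨ht.1.le, ht.2⟩))
    rwa [sub_zero, abs_of_pos hP] at this
  have h2 : ‖∫ t in s..P, p t‖ ≤ M * P := by
    have := intervalIntegral.norm_integral_le_of_norm_le_const (a := s) (b := P) (f := p) (C := M)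
      (fun t ht => hM t (by
        rw [Set.uIoc_of_le hs.2] at ht; exact ⟨hs.1.trans ht.1.le, ht.2⟩))
    rw [abs_of_nonneg (by linarith [hs.2])] at this
    exact this.trans (mul_le_mul_of_nonneg_left (by linarith [hs.1]) hM0)
  unfold KS
  calc _ ≤ ‖adjoint B (∫ t in (0 : ℝ)..P, p t)‖ + ‖∫ t in s..P, p t‖ := norm_add_le _ _
    _ ≤ ‖adjoint B‖ * (M * P) + M * P :=
        add_le_add (((adjoint B).le_opNorm _).trans
          (mul_le_mul_of_nonneg_left h1 (norm_nonneg _))) h2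
    _ = _ := by ring

lemma norm_KS_sub_le {p : ℝ → E} (hp : Continuous p) {M : ℝ}
    (hM : ∀ t ∈ Set.Icc 0 P, ‖p t‖ ≤ M) {s s' : ℝ} (hs : s ∈ Set.Icc 0 P)
    (hs' : s' ∈ Set.Icc 0 P) : ‖KS P B p s - KS P B p s'‖ ≤ M * |s - s'| := by
  have e : KS P B p s - KS P B p s' = ∫ t in s..s', p t := by
    unfold KS
    rw [← intervalIntegral.integral_add_adjacent_intervals (hp.intervalIntegrable s s')
      (hp.intervalIntegrable s' P)]
    abel
  rw [e, abs_sub_comm]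
  refine intervalIntegral.norm_integral_le_of_norm_le_const fun t ht => hM t ?_
  have := Set.uIoc_subset_uIcc ht
  exact (Set.uIcc_subset_Icc hs hs') this

end Paths

/-! ### The action and gradient descent -/

section Descent

variable {E : Type*} [NormedAddCommGroup E] [InnerProductSpace ℝ E] [ProperSpace E]

open ContinuousLinearMap (adjoint)

/-- The action `½ ∫ |u|² - ∫ W(t, x(t))` of the path `x = X P B u`. -/
noncomputable def act (P : ℝ) (B : E →L[ℝ] E) (W : ℝ → E → ℝ) (u : ℝ → E) : ℝ :=
  (1 / 2) * (∫ t in (0 : ℝ)..P, ‖u t‖ ^ 2) - ∫ t in (0 : ℝ)..P, W t (X P B u t)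

/-- A velocity is admissible when it is continuous and its path stays in `Ω`. -/
def Adm (P : ℝ) (B : E →L[ℝ] E) (Ω : Set E) (u : ℝ → E) : Prop :=
  Continuous u ∧ ∀ t ∈ Set.Icc 0 P, X P B u t ∈ Ω

/-- A singular potential `W` on `Ω`, with gradient `DW`, equivariant under the shift by `P` and
the isometry `A`. The field `strong` expresses that sublevel sets of the action are bounded away
from the singular set. -/
structure Pot (E : Type*) [NormedAddCommGroup E] [InnerProductSpace ℝ E] [ProperSpace E]
    (P : ℝ) (A : E ≃ₗᵢ[ℝ] E) where
  /-- the potential -/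
  W : ℝ → E → ℝ
  /-- its gradient -/
  DW : ℝ → E → E
  /-- the regular set -/
  Ω : Set E
  /-- the inverse of `A - 1` -/
  B : E →L[ℝ] E
  hP : 0 < P
  hB : ∀ v, A (B v) = B v + v
  contW : ContinuousOn (fun p : ℝ × E => W p.1 p.2) (Set.univ ×ˢ Ω)
  contDW : ContinuousOn (fun p : ℝ × E => DW p.1 p.2) (Set.univ ×ˢ Ω)
  nonpos : ∀ t, ∀ x ∈ Ω, W t x ≤ 0
  taylor : ∀ K ⊆ Ω, IsCompact K → ∃ L > 0, ∃ r > 0, ∀ t ∈ Set.Icc 0 P, ∀ x ∈ K, ∀ z : E, ‖z‖ ≤ r →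
    x + z ∈ Ω ∧ |W t (x + z) - W t x - inner ℝ (DW t x) z| ≤ L * ‖z‖ ^ 2
  mem_twist : ∀ x ∈ Ω, A x ∈ Ω
  mem_twist_symm : ∀ x ∈ Ω, A.symm x ∈ Ω
  twist : ∀ t, ∀ x ∈ Ω, DW (t + P) (A x) = A (DW t x)
  strong : ∀ b : ℝ, ∃ K ⊆ Ω, IsCompact K ∧
    ∀ u, Adm P B Ω u → act P B W u ≤ b → ∀ t ∈ Set.Icc 0 P, X P B u t ∈ K

variable {P : ℝ} {A : E ≃ₗᵢ[ℝ] E} (S : Pot E P A)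

/-- The force along the path with velocity `u`, extended constantly outside `[0, P]`. -/
noncomputable def force (u : ℝ → E) (t : ℝ) : E := S.DW (cl P t) (X P S.B u (cl P t))

/-- The `L²` gradient of the action. -/
noncomputable def grd (u : ℝ → E) (s : ℝ) : E := u s - KS P S.B (force S u) s

/-- Critical points of the action. -/
def Crit (u : ℝ → E) : Prop :=
  Adm P S.B S.Ω u ∧ ∀ s ∈ Set.Icc 0 P, u s = KS P S.B (force S u) s

variable {S}

lemma continuous_force {u : ℝ → E} (hu : Adm P S.B S.Ω u) : Continuous (force S u) := by
  have hX : Continuous (X P S.B u) := continuous_X hu.1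
  refine S.contDW.comp_continuous (f := fun t => (cl P t, X P S.B u (cl P t))) ?_ ?_
  · exact (continuous_cl P).prodMk (hX.comp (continuous_cl P))
  · exact fun t => ⟨Set.mem_univ _, hu.2 _ (cl_mem S.hP.le t)⟩

lemma continuous_grd {u : ℝ → E} (hu : Adm P S.B S.Ω u) : Continuous (grd S u) :=
  hu.1.sub (continuous_KS (continuous_force hu))

lemma continuousOn_W {x : ℝ → E} (hx : ContinuousOn x (Set.Icc 0 P))
    (hΩ : ∀ t ∈ Set.Icc 0 P, x t ∈ S.Ω) :
    ContinuousOn (fun t => S.W t (x t)) (Set.Icc 0 P) :=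
  S.contW.comp (f := fun t => (t, x t)) (continuousOn_id.prodMk hx)
    fun t ht => ⟨Set.mem_univ _, hΩ t ht⟩

lemma intervalIntegrable_W {x : ℝ → E} (hx : ContinuousOn x (Set.Icc 0 P))
    (hΩ : ∀ t ∈ Set.Icc 0 P, x t ∈ S.Ω) :
    IntervalIntegrable (fun t => S.W t (x t)) MeasureTheory.volume 0 P := by
  refine ContinuousOn.intervalIntegrable ?_
  rw [Set.uIcc_of_le S.hP.le]
  exact continuousOn_W hx hΩ

lemma energy_le {u : ℝ → E} (hu : Adm P S.B S.Ω u) {b : ℝ} (hb : act P S.B S.W u ≤ b) :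
    ∫ t in (0 : ℝ)..P, ‖u t‖ ^ 2 ≤ 2 * b := by
  have h : ∫ t in (0 : ℝ)..P, S.W t (X P S.B u t) ≤ 0 := by
    have := intervalIntegral.integral_mono_on S.hP.le
      (intervalIntegrable_W (continuous_X hu.1).continuousOn hu.2)
      (intervalIntegrable_const (c := (0 : ℝ)))
      (fun t ht => S.nonpos t _ (hu.2 t ht))
    simpa using this
  unfold act at hb
  linarith

lemma exists_force_bound {K : Set E} (hK : IsCompact K) (hKΩ : K ⊆ S.Ω) :
    ∃ M > 0, ∀ t ∈ Set.Icc 0 P, ∀ x ∈ K, ‖S.DW t x‖ ≤ M := by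
  obtain ⟨M, hM⟩ := ((isCompact_Icc (a := 0) (b := P)).prod hK).exists_bound_of_continuousOn
    (S.contDW.mono (Set.prod_mono (Set.subset_univ _) hKΩ))
  exact ⟨max M 1, by positivity, fun t ht x hx => (hM (t, x) ⟨ht, hx⟩).trans (le_max_left _ _)⟩

lemma exists_W_bound {K : Set E} (hK : IsCompact K) (hKΩ : K ⊆ S.Ω) :
    ∃ M > 0, ∀ t ∈ Set.Icc 0 P, ∀ x ∈ K, |S.W t x| ≤ M := by
  obtain ⟨M, hM⟩ := ((isCompact_Icc (a := 0) (b := P)).prod hK).exists_bound_of_continuousOn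
    (S.contW.mono (Set.prod_mono (Set.subset_univ _) hKΩ))
  exact ⟨max M 1, by positivity, fun t ht x hx => (hM (t, x) ⟨ht, hx⟩).trans (le_max_left _ _)⟩

lemma integral_sq_sub_smul {u q : ℝ → E} (hu : Continuous u) (hq : Continuous q) (h : ℝ) :
    ∫ t in (0 : ℝ)..P, ‖u t - h • q t‖ ^ 2 = (∫ t in (0 : ℝ)..P, ‖u t‖ ^ 2)
      - 2 * h * (∫ t in (0 : ℝ)..P, inner ℝ (u t) (q t))
      + h ^ 2 * ∫ t in (0 : ℝ)..P, ‖q t‖ ^ 2 := by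
  have e : ∀ t, ‖u t - h • q t‖ ^ 2 = ‖u t‖ ^ 2 - 2 * h * inner ℝ (u t) (q t)
      + h ^ 2 * ‖q t‖ ^ 2 := by
    intro t
    rw [norm_sub_sq_real, inner_smul_right, norm_smul, mul_pow, Real.norm_eq_abs, sq_abs]
    ring
  simp only [e]
  rw [intervalIntegral.integral_add, intervalIntegral.integral_sub,
    intervalIntegral.integral_const_mul, intervalIntegral.integral_const_mul]
  all_goals exact Continuous.intervalIntegrable (by fun_prop) _ _

variable (S) in
/-- One step of gradient descent, with a step size depending only on the level `b`. -/
lemma descent_step (b : ℝ) : ∃ h > 0, ∀ u, Adm P S.B S.Ω u → act P S.B S.W u ≤ b →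
    (∀ σ ∈ Set.Icc (0 : ℝ) 1, ∀ t ∈ Set.Icc 0 P,
      X P S.B u t - (σ * h) • X P S.B (grd S u) t ∈ S.Ω) ∧
    act P S.B S.W (fun t => u t - h • grd S u t)
      ≤ act P S.B S.W u - h / 2 * ∫ t in (0 : ℝ)..P, ‖grd S u t‖ ^ 2 := by
  obtain ⟨K, hKΩ, hK, hKm⟩ := S.strong b
  obtain ⟨L, hL, r, hr, hT⟩ := S.taylor K hKΩ hK
  obtain ⟨M, hM, hMb⟩ := exists_force_bound hK hKΩ
  have hP := S.hP
  set C1 := (‖S.B‖ + 1) ^ 2 * P with hC1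
  have hC1p : 0 < C1 := by positivity
  set R := (‖adjoint S.B‖ + 1) * (M * P) with hR
  set Qm := 2 * (2 * |b|) + 2 * (R ^ 2 * P) with hQm
  have hQm0 : 0 ≤ Qm := by positivity
  obtain ⟨h, hh0, hh1, hh2⟩ : ∃ h : ℝ, 0 < h ∧ h ^ 2 * (C1 * Qm) ≤ r ^ 2 ∧
      h * (1 / 2 + L * C1 * P) ≤ 1 / 2 := by
    refine ⟨min (r / (C1 * Qm + 1)) (min 1 (1 / 2 / (1 / 2 + L * C1 * P))) , ?_, ?_, ?_⟩
    · positivity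
    · set h := min (r / (C1 * Qm + 1)) (min 1 (1 / 2 / (1 / 2 + L * C1 * P)))
      have h0 : 0 ≤ h := by positivity
      have h1 : h * (C1 * Qm + 1) ≤ r := by
        rw [← le_div_iff₀ (by positivity)]; exact min_le_left _ _
      have hCQ : 0 ≤ C1 * Qm := by positivity
      have h3 : (h * (C1 * Qm + 1)) ^ 2 ≤ r ^ 2 := pow_le_pow_left₀ (by positivity) h1 2
      have h4 : C1 * Qm ≤ (C1 * Qm + 1) ^ 2 := by nlinarith
      calc h ^ 2 * (C1 * Qm) ≤ h ^ 2 * (C1 * Qm + 1) ^ 2 :=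
            mul_le_mul_of_nonneg_left h4 (sq_nonneg h)
        _ ≤ r ^ 2 := by rw [← mul_pow]; exact h3
    · rw [← le_div_iff₀ (by positivity)]
      exact (min_le_right _ _).trans (min_le_right _ _)
  refine ⟨h, hh0, fun u hu hub => ?_⟩
  have hXK := hKm u hu hub
  set q := grd S u with hq
  have hqc : Continuous q := continuous_grd hu
  have hpc := continuous_force hu
  set p := force S u with hp
  have hpe : ∀ t ∈ Set.Icc 0 P, p t = S.DW t (X P S.B u t) := by
    intro t ht
    rw [hp, force, cl_eq ht]
  have hpM : ∀ t ∈ Set.Icc 0 P, ‖p t‖ ≤ M := by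
    intro t ht
    rw [hpe t ht]
    exact hMb t ht _ (hXK t ht)
  set Q := ∫ t in (0 : ℝ)..P, ‖q t‖ ^ 2 with hQ
  have hQ0 : 0 ≤ Q := intervalIntegral.integral_nonneg hP.le fun t _ => by positivity
  have hQle : Q ≤ Qm := by
    have h1 : Q ≤ ∫ t in (0 : ℝ)..P, (2 * ‖u t‖ ^ 2 + 2 * R ^ 2) := by
      refine intervalIntegral.integral_mono_on hP.le
        (Continuous.intervalIntegrable (by fun_prop) _ _)
        (Continuous.intervalIntegrable (by have := hu.1; fun_prop) _ _) fun t ht => ?_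
      have h2 : ‖q t‖ ≤ ‖u t‖ + R :=
        (norm_sub_le _ _).trans (add_le_add le_rfl (norm_KS_le hP hpM ht))
      have h3 := pow_le_pow_left₀ (norm_nonneg _) h2 2
      nlinarith [sq_nonneg (‖u t‖ - R)]
    rw [intervalIntegral.integral_add, intervalIntegral.integral_const_mul,
      intervalIntegral.integral_const] at h1
    · have h2 := energy_le hu hub
      have h3 := le_abs_self b
      simp only [smul_eq_mul, sub_zero] at h1
      rw [hQm]; nlinarith
    all_goals exact Continuous.intervalIntegrable (by have := hu.1; fun_prop) _ _
  have hz : ∀ σ ∈ Set.Icc (0 : ℝ) 1, ∀ t ∈ Set.Icc 0 P,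
      ‖-((σ * h) • X P S.B q t)‖ ≤ r := by
    intro σ hσ t ht
    rw [norm_neg, norm_smul, Real.norm_of_nonneg (mul_nonneg hσ.1 hh0.le)]
    have h1 := sq_norm_X_le (B := S.B) hP hqc ht
    have h2 : (h * ‖X P S.B q t‖) ^ 2 ≤ r ^ 2 := by
      rw [mul_pow]
      calc h ^ 2 * ‖X P S.B q t‖ ^ 2 ≤ h ^ 2 * (C1 * Q) :=
            mul_le_mul_of_nonneg_left h1 (sq_nonneg h)
        _ ≤ h ^ 2 * (C1 * Qm) := by gcongr
        _ ≤ _ := hh1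
    have h3 := abs_le_of_sq_le_sq h2 hr.le
    calc σ * h * ‖X P S.B q t‖ = σ * (h * ‖X P S.B q t‖) := by ring
      _ ≤ 1 * (h * ‖X P S.B q t‖) := by
          gcongr
          exact hσ.2
      _ ≤ r := by rw [one_mul]; exact (le_abs_self _).trans h3
  have hmem : ∀ σ ∈ Set.Icc (0 : ℝ) 1, ∀ t ∈ Set.Icc 0 P,
      X P S.B u t - (σ * h) • X P S.B q t ∈ S.Ω := by
    intro σ hσ t ht
    rw [sub_eq_add_neg]
    exact (hT t ht _ (hXK t ht) _ (hz σ hσ t ht)).1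
  refine ⟨hmem, ?_⟩
  have hXu : Continuous (X P S.B u) := continuous_X hu.1
  have hXq : Continuous (X P S.B q) := continuous_X hqc
  have hW : (∫ t in (0 : ℝ)..P, S.W t (X P S.B u t)) - h * (∫ t in (0 : ℝ)..P, inner ℝ (p t)
      (X P S.B q t)) - L * (h ^ 2 * (C1 * Q)) * P
      ≤ ∫ t in (0 : ℝ)..P, S.W t (X P S.B u t - h • X P S.B q t) := by
    have hWi := intervalIntegrable_W (S := S) hXu.continuousOn hu.2
    have hii : IntervalIntegrable (fun t => inner ℝ (p t) (X P S.B q t))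
        MeasureTheory.volume 0 P := Continuous.intervalIntegrable (by fun_prop) _ _
    have e : (∫ t in (0 : ℝ)..P, S.W t (X P S.B u t)) - h * (∫ t in (0 : ℝ)..P, inner ℝ (p t)
        (X P S.B q t)) - L * (h ^ 2 * (C1 * Q)) * P = ∫ t in (0 : ℝ)..P, (S.W t (X P S.B u t)
          - h * inner ℝ (p t) (X P S.B q t) - L * (h ^ 2 * (C1 * Q))) := by
      rw [intervalIntegral.integral_sub (hWi.sub (hii.const_mul h)) intervalIntegrable_const,
        intervalIntegral.integral_sub hWi (hii.const_mul h), intervalIntegral.integral_const_mul,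
        intervalIntegral.integral_const]
      simp only [smul_eq_mul, sub_zero]; ring
    rw [e]
    refine intervalIntegral.integral_mono_on hP.le
      ((hWi.sub (hii.const_mul h)).sub intervalIntegrable_const)
      (intervalIntegrable_W (S := S) (x := fun t => X P S.B u t - h • X P S.B q t)
        (by fun_prop) ?_) ?_
    · intro t ht
      have := hmem 1 (by simp) t ht
      rwa [one_mul] at this
    · intro t ht
      have h1 := hz 1 (by simp) t ht
      rw [one_mul] at h1
      have h2 := (hT t ht _ (hXK t ht) _ h1).2
      rw [← sub_eq_add_neg, ← hpe t ht, inner_neg_right, inner_smul_right, norm_neg, norm_smul,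
        mul_pow, Real.norm_eq_abs, sq_abs] at h2
      have h3 := (abs_le.1 h2).1
      have h4 : L * (h ^ 2 * ‖X P S.B q t‖ ^ 2) ≤ L * (h ^ 2 * (C1 * Q)) := by
        have := sq_norm_X_le (B := S.B) hP hqc ht
        gcongr
      linarith
  have hdual := duality (P := P) (B := S.B) hpc hqc
  have hQe : Q = (∫ t in (0 : ℝ)..P, inner ℝ (u t) (q t))
      - ∫ t in (0 : ℝ)..P, inner ℝ (KS P S.B p t) (q t) := by
    have hKc : Continuous (KS P S.B p) := continuous_KS hpc
    have huc := hu.1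
    rw [← intervalIntegral.integral_sub (Continuous.intervalIntegrable (by fun_prop) _ _)
      (Continuous.intervalIntegrable (by fun_prop) _ _)]
    refine intervalIntegral.integral_congr fun t _ => ?_
    rw [← inner_sub_left, ← real_inner_self_eq_norm_sq]
    rfl
  have e1 : ∀ t, X P S.B (fun t => u t - h • q t) t = X P S.B u t - h • X P S.B q t :=
    X_sub_smul hu.1 hqc h
  unfold act
  rw [integral_sq_sub_smul hu.1 hqc]
  simp only [e1]
  have h5 : h * (h * (1 / 2 + L * C1 * P)) * Q ≤ h * (1 / 2) * Q := by gcongr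
  nlinarith

end Descent

/-! ### The Palais–Smale condition -/

section PalaisSmale

variable {E : Type*} [NormedAddCommGroup E] [InnerProductSpace ℝ E] [ProperSpace E]

open ContinuousLinearMap (adjoint)
open Filter Topology

variable {P : ℝ} {A : E ≃ₗᵢ[ℝ] E} {S : Pot E P A}

lemma tendsto_of_sq_le {a b : ℕ → ℝ} (ha : ∀ n, 0 ≤ a n) (h : ∀ n, a n ^ 2 ≤ b n)
    (hb : Tendsto b atTop (𝓝 0)) : Tendsto a atTop (𝓝 0) := by
  have h1 : Tendsto (fun n => √(b n)) atTop (𝓝 0) := by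
    have := (Real.continuous_sqrt.tendsto 0).comp hb
    rwa [Real.sqrt_zero] at this
  exact squeeze_zero ha (fun n => Real.le_sqrt_of_sq_le (h n)) h1

/-- A limit, in `L²`, of velocities with action in `[c, b]` whose gradients tend to zero is a
critical point of action at least `c`. -/
lemma crit_of_limit {b c : ℝ} {u : ℕ → ℝ → E} (hu : ∀ n, Adm P S.B S.Ω (u n))
    (hub : ∀ n, act P S.B S.W (u n) ≤ b) (hcu : ∀ n, c ≤ act P S.B S.W (u n))
    {k : ℝ → E} (hk : Continuous k)
    (hd : Tendsto (fun n => ∫ t in (0 : ℝ)..P, ‖u n t - k t‖ ^ 2) atTop (𝓝 0))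
    (hlim : ∀ s ∈ Set.Icc 0 P, Tendsto (fun n => KS P S.B (force S (u n)) s) atTop (𝓝 (k s))) :
    Crit S k ∧ c ≤ act P S.B S.W k := by
  have hP := S.hP
  obtain ⟨K, hKΩ, hK, hKm⟩ := S.strong b
  obtain ⟨M, hM, hMb⟩ := exists_force_bound hK hKΩ
  obtain ⟨M', hM', hMb'⟩ := exists_W_bound hK hKΩ
  have hX : ∀ t ∈ Set.Icc 0 P, Tendsto (fun n => X P S.B (u n) t) atTop (𝓝 (X P S.B k t)) := by
    intro t ht
    rw [tendsto_iff_norm_sub_tendsto_zero]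
    refine tendsto_of_sq_le (b := fun n => ((‖S.B‖ + 1) ^ 2 * P) *
      ∫ t in (0 : ℝ)..P, ‖u n t - k t‖ ^ 2) (fun n => norm_nonneg _) (fun n => ?_)
      (by simpa using hd.const_mul ((‖S.B‖ + 1) ^ 2 * P))
    have h1 := X_sub_smul (P := P) (B := S.B) (hu n).1 hk 1 t
    simp only [one_smul] at h1
    rw [← h1]
    exact sq_norm_X_le hP ((hu n).1.sub hk) ht
  have hXK : ∀ t ∈ Set.Icc 0 P, X P S.B k t ∈ K := fun t ht =>
    hK.isClosed.mem_of_tendsto (hX t ht) (Eventually.of_forall fun n => hKm _ (hu n) (hub n) t ht)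
  have hkA : Adm P S.B S.Ω k := ⟨hk, fun t ht => hKΩ (hXK t ht)⟩
  have hpair : ∀ t ∈ Set.Icc 0 P, Tendsto (fun n => (t, X P S.B (u n) t)) atTop
      (𝓝[Set.univ ×ˢ S.Ω] (t, X P S.B k t)) := by
    intro t ht
    refine tendsto_nhdsWithin_iff.2 ⟨tendsto_const_nhds.prodMk_nhds (hX t ht), ?_⟩
    exact Eventually.of_forall fun n => ⟨Set.mem_univ _, (hu n).2 t ht⟩
  have hp : ∀ t ∈ Set.Icc 0 P, Tendsto (fun n => force S (u n) t) atTop (𝓝 (force S k t)) := by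
    intro t ht
    simp only [force, cl_eq ht]
    exact (S.contDW (t, X P S.B k t) ⟨Set.mem_univ _, hkA.2 t ht⟩).tendsto.comp (hpair t ht)
  have hpM : ∀ n, ∀ t ∈ Set.Icc 0 P, ‖force S (u n) t‖ ≤ M := by
    intro n t ht
    simp only [force, cl_eq ht]
    exact hMb t ht _ (hKm _ (hu n) (hub n) t ht)
  have h_int : ∀ s ∈ Set.Icc 0 P, Tendsto (fun n => ∫ t in s..P, force S (u n) t) atTop
      (𝓝 (∫ t in s..P, force S k t)) := by
    intro s hs
    have hsub : ∀ t, t ∈ Set.uIoc s P → t ∈ Set.Icc 0 P := by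
      intro t ht
      rw [Set.uIoc_of_le hs.2] at ht
      exact ⟨hs.1.trans ht.1.le, ht.2⟩
    refine intervalIntegral.tendsto_integral_filter_of_dominated_convergence (fun _ => M) ?_ ?_
      intervalIntegrable_const ?_
    · exact Eventually.of_forall fun n => (continuous_force (hu n)).aestronglyMeasurable
    · exact Eventually.of_forall fun n => Eventually.of_forall fun t ht => hpM n t (hsub t ht)
    · exact Eventually.of_forall fun t ht => hp t (hsub t ht)
  have hcrit : Crit S k := by
    refine ⟨hkA, fun s hs => tendsto_nhds_unique (hlim s hs) ?_⟩
    exact ((((adjoint S.B).continuous.tendsto _).comp (h_int 0 ⟨le_rfl, hP.le⟩)).add (h_int s hs))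
  refine ⟨hcrit, ?_⟩
  -- convergence of the two parts of the action
  have hWl : Tendsto (fun n => ∫ t in (0 : ℝ)..P, S.W t (X P S.B (u n) t)) atTop
      (𝓝 (∫ t in (0 : ℝ)..P, S.W t (X P S.B k t))) := by
    have hsub : ∀ t, t ∈ Set.uIoc 0 P → t ∈ Set.Icc 0 P := by
      intro t ht
      rw [Set.uIoc_of_le hP.le] at ht
      exact ⟨ht.1.le, ht.2⟩
    refine intervalIntegral.tendsto_integral_filter_of_dominated_convergence (fun _ => M') ?_ ?_
      intervalIntegrable_const ?_
    · refine Eventually.of_forall fun n => ?_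
      have := (intervalIntegrable_W (S := S) (continuous_X (hu n).1).continuousOn (hu n).2)
      exact this.aestronglyMeasurable_restrict_uIoc
    · exact Eventually.of_forall fun n => Eventually.of_forall fun t ht =>
        hMb' t (hsub t ht) _ (hKm _ (hu n) (hub n) t (hsub t ht))
    · exact Eventually.of_forall fun t ht =>
        (S.contW (t, X P S.B k t) ⟨Set.mem_univ _, hkA.2 t (hsub t ht)⟩).tendsto.comp
          (hpair t (hsub t ht))
  have hd1 : Tendsto (fun n => ∫ t in (0 : ℝ)..P, ‖u n t - k t‖) atTop (𝓝 0) := by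
    refine tendsto_of_sq_le (b := fun n => P * ∫ t in (0 : ℝ)..P, ‖u n t - k t‖ ^ 2)
      (fun n => intervalIntegral.integral_nonneg hP.le fun _ _ => norm_nonneg _)
      (fun n => sq_integral_norm_le hP ((hu n).1.sub hk)) (by simpa using hd.const_mul P)
  obtain ⟨R, hR⟩ := (isCompact_Icc (a := 0) (b := P)).exists_bound_of_continuousOn hk.continuousOn
  have hEn : Tendsto (fun n => ∫ t in (0 : ℝ)..P, ‖u n t‖ ^ 2) atTop
      (𝓝 (∫ t in (0 : ℝ)..P, ‖k t‖ ^ 2)) := by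
    have e : ∀ n, ∫ t in (0 : ℝ)..P, ‖u n t‖ ^ 2 = (∫ t in (0 : ℝ)..P, ‖k t‖ ^ 2)
        + 2 * (∫ t in (0 : ℝ)..P, inner ℝ (k t) (u n t - k t))
        + ∫ t in (0 : ℝ)..P, ‖u n t - k t‖ ^ 2 := by
      intro n
      have := integral_sq_sub_smul (P := P) hk ((hu n).1.sub hk) (-1)
      simp only [Pi.sub_apply, neg_smul, one_smul, sub_neg_eq_add, add_sub_cancel] at this
      rw [this]; ring
    simp only [e]
    have h2 : Tendsto (fun n => ∫ t in (0 : ℝ)..P, inner ℝ (k t) (u n t - k t)) atTop (𝓝 0) := by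
      refine squeeze_zero_norm (a := fun n => R * ∫ t in (0 : ℝ)..P, ‖u n t - k t‖) (fun n => ?_)
        (by simpa using hd1.const_mul R)
      have hun := (hu n).1
      rw [← intervalIntegral.integral_const_mul]
      refine (intervalIntegral.norm_integral_le_integral_norm hP.le).trans ?_
      refine intervalIntegral.integral_mono_on hP.le
        (Continuous.intervalIntegrable (by fun_prop) _ _)
        (Continuous.intervalIntegrable (by fun_prop) _ _) fun t ht => ?_
      exact (norm_inner_le_norm _ _).trans (mul_le_mul_of_nonneg_right (hR t ht) (norm_nonneg _))
    simpa using (tendsto_const_nhds.add (h2.const_mul 2)).add hd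
  exact ge_of_tendsto' ((hEn.const_mul (1 / 2)).sub hWl) hcu

/-- A form of the Palais–Smale condition: when all critical values lie below `c`, the gradient of
the action is bounded away from zero on `{c ≤ act ≤ b}`. -/
lemma palais_smale {c : ℝ} (hc : ∀ u, Crit S u → act P S.B S.W u < c) (b : ℝ) :
    ∃ η > 0, ∀ u, Adm P S.B S.Ω u → act P S.B S.W u ≤ b → c ≤ act P S.B S.W u →
      η ≤ ∫ t in (0 : ℝ)..P, ‖grd S u t‖ ^ 2 := by
  by_contra hcon
  push Not at hcon
  have hP := S.hP
  choose u hu hub hcu hQ using fun n : ℕ => hcon (1 / (n + 1 : ℝ)) (by positivity)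
  obtain ⟨K, hKΩ, hK, hKm⟩ := S.strong b
  obtain ⟨M, hM, hMb⟩ := exists_force_bound hK hKΩ
  have hpM : ∀ n, ∀ t ∈ Set.Icc 0 P, ‖force S (u n) t‖ ≤ M := by
    intro n t ht
    simp only [force, cl_eq ht]
    exact hMb t ht _ (hKm _ (hu n) (hub n) t ht)
  have hKc : ∀ n, Continuous (KS P S.B (force S (u n))) :=
    fun n => continuous_KS (continuous_force (hu n))
  set f : ℕ → BoundedContinuousFunction (Set.Icc 0 P) E := fun n =>
    BoundedContinuousFunction.mkOfCompact
      ⟨fun t : Set.Icc 0 P => KS P S.B (force S (u n)) t, (hKc n).comp continuous_subtype_val⟩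
    with hf
  have hfe : ∀ n (t : Set.Icc 0 P), f n t = KS P S.B (force S (u n)) t := fun _ _ => rfl
  have hcomp : IsCompact (closure (Set.range f)) := by
    refine BoundedContinuousFunction.arzela_ascoli
      (Metric.closedBall 0 ((‖adjoint S.B‖ + 1) * (M * P))) (isCompact_closedBall _ _) _ ?_ ?_
    · rintro _ t ⟨n, rfl⟩
      rw [mem_closedBall_zero_iff, hfe]
      exact norm_KS_le hP (hpM n) t.2
    · refine Metric.equicontinuous_of_continuity_modulus (fun δ => M * δ) ?_ _ ?_
      · simpa using (tendsto_id (x := 𝓝 (0 : ℝ))).const_mul M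
      · rintro t t' ⟨_, n, rfl⟩
        rw [dist_eq_norm]
        exact norm_KS_sub_le (continuous_force (hu n)) (hpM n) t.2 t'.2
  obtain ⟨k, -, φ, hφ, hlim⟩ := hcomp.tendsto_subseq (x := f)
    fun n => subset_closure (Set.mem_range_self n)
  set k' : ℝ → E := fun t => k ⟨cl P t, cl_mem hP.le t⟩ with hk'
  have hk'c : Continuous k' := k.continuous.comp ((continuous_cl P).subtype_mk _)
  have hk'e : ∀ t (ht : t ∈ Set.Icc 0 P), k' t = k ⟨t, ht⟩ := by
    intro t ht
    simp only [hk', cl_eq ht]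
  have hε : Tendsto (fun n => dist (f (φ n)) k) atTop (𝓝 0) :=
    tendsto_iff_dist_tendsto_zero.1 hlim
  have hdist : ∀ n, ∀ t ∈ Set.Icc 0 P,
      ‖KS P S.B (force S (u (φ n))) t - k' t‖ ≤ dist (f (φ n)) k := by
    intro n t ht
    rw [hk'e t ht, ← dist_eq_norm]
    exact BoundedContinuousFunction.dist_coe_le_dist (f := f (φ n)) (g := k) ⟨t, ht⟩
  have hQ0 : Tendsto (fun n => ∫ t in (0 : ℝ)..P, ‖grd S (u (φ n)) t‖ ^ 2) atTop (𝓝 0) := by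
    refine squeeze_zero (fun n => intervalIntegral.integral_nonneg hP.le fun _ _ => by positivity)
      (fun n => (hQ (φ n)).le) ?_
    exact tendsto_one_div_add_atTop_nhds_zero_nat.comp hφ.tendsto_atTop
  have hd : Tendsto (fun n => ∫ t in (0 : ℝ)..P, ‖u (φ n) t - k' t‖ ^ 2) atTop (𝓝 0) := by
    refine squeeze_zero (g := fun n => 2 * (∫ t in (0 : ℝ)..P, ‖grd S (u (φ n)) t‖ ^ 2)
        + 2 * dist (f (φ n)) k ^ 2 * P)
      (fun n => intervalIntegral.integral_nonneg hP.le fun _ _ => by positivity) (fun n => ?_) ?_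
    · have hun := (hu (φ n)).1
      have hgc := continuous_grd (hu (φ n))
      have e : 2 * (∫ t in (0 : ℝ)..P, ‖grd S (u (φ n)) t‖ ^ 2) + 2 * dist (f (φ n)) k ^ 2 * P
          = ∫ t in (0 : ℝ)..P, (2 * ‖grd S (u (φ n)) t‖ ^ 2 + 2 * dist (f (φ n)) k ^ 2) := by
        rw [intervalIntegral.integral_add, intervalIntegral.integral_const_mul,
          intervalIntegral.integral_const]
        · simp only [smul_eq_mul, sub_zero]; ring
        all_goals exact Continuous.intervalIntegrable (by fun_prop) _ _
      rw [e]
      refine intervalIntegral.integral_mono_on hP.le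
        (Continuous.intervalIntegrable (by fun_prop) _ _)
        (Continuous.intervalIntegrable (by fun_prop) _ _) fun t ht => ?_
      have h1 : ‖u (φ n) t - k' t‖ ≤ ‖grd S (u (φ n)) t‖ + dist (f (φ n)) k := by
        have e2 : u (φ n) t - k' t = grd S (u (φ n)) t
            + (KS P S.B (force S (u (φ n))) t - k' t) := by
          simp only [grd]; abel
        rw [e2]
        exact (norm_add_le _ _).trans (add_le_add le_rfl (hdist n t ht))
      have h3 := pow_le_pow_left₀ (norm_nonneg _) h1 2
      nlinarith [sq_nonneg (‖grd S (u (φ n)) t‖ - dist (f (φ n)) k)]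
    · simpa using (hQ0.const_mul 2).add (((hε.pow 2).const_mul 2).mul_const P)
  obtain ⟨h1, h2⟩ := crit_of_limit (fun n => hu (φ n)) (fun n => hub (φ n)) (fun n => hcu (φ n))
    hk'c hd (fun s hs => by
      rw [tendsto_iff_norm_sub_tendsto_zero]
      exact squeeze_zero (fun _ => norm_nonneg _) (fun n => hdist n s hs) hε)
  exact absurd (hc k' h1) (not_lt.2 h2)

end PalaisSmale

/-! ### Deforming families below a level -/

section Deformation

variable {E : Type*} [NormedAddCommGroup E] [InnerProductSpace ℝ E] [ProperSpace E]

open ContinuousLinearMap (adjoint)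

variable {P : ℝ} {A : E ≃ₗᵢ[ℝ] E} {S : Pot E P A} {Z : Type*} [TopologicalSpace Z]

lemma continuous_X_family {B : E →L[ℝ] E} {U : Z → ℝ → E}
    (hU : Continuous fun p : Z × ℝ => U p.1 p.2) :
    Continuous fun p : Z × ℝ => X P B (U p.1) p.2 := by
  have hV : Continuous (Function.uncurry fun (p : Z × ℝ) (s : ℝ) => U p.1 s) :=
    hU.comp (by fun_prop : Continuous fun q : (Z × ℝ) × ℝ => (q.1.1, q.2))
  exact (B.continuous.comp
    (intervalIntegral.continuous_parametric_intervalIntegral_of_continuous' hV 0 P)).add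
    (intervalIntegral.continuous_parametric_intervalIntegral_of_continuous hV continuous_snd)

lemma continuous_KS_family {B : E →L[ℝ] E} {U : Z → ℝ → E}
    (hU : Continuous fun p : Z × ℝ => U p.1 p.2) :
    Continuous fun p : Z × ℝ => KS P B (U p.1) p.2 := by
  have hV : Continuous (Function.uncurry fun (p : Z × ℝ) (s : ℝ) => U p.1 s) :=
    hU.comp (by fun_prop : Continuous fun q : (Z × ℝ) × ℝ => (q.1.1, q.2))
  have e : ∀ p : Z × ℝ, KS P B (U p.1) p.2 = adjoint B (∫ t in (0 : ℝ)..P, U p.1 t)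
      - ∫ t in P..p.2, U p.1 t := by
    intro p
    rw [KS, intervalIntegral.integral_symm P p.2, sub_eq_add_neg]
  simp only [e]
  exact ((adjoint B).continuous.comp
    (intervalIntegral.continuous_parametric_intervalIntegral_of_continuous' hV 0 P)).sub
    (intervalIntegral.continuous_parametric_intervalIntegral_of_continuous hV continuous_snd)

lemma continuous_force_family {U : Z → ℝ → E} (hU : Continuous fun p : Z × ℝ => U p.1 p.2)
    (hA : ∀ z, Adm P S.B S.Ω (U z)) : Continuous fun p : Z × ℝ => force S (U p.1) p.2 := by
  refine S.contDW.comp_continuous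
    (f := fun p : Z × ℝ => (cl P p.2, X P S.B (U p.1) (cl P p.2))) ?_ ?_
  · have h := continuous_cl P
    exact (h.comp continuous_snd).prodMk ((continuous_X_family hU).comp
      (continuous_fst.prodMk (h.comp continuous_snd)))
  · exact fun p => ⟨Set.mem_univ _, (hA p.1).2 _ (cl_mem S.hP.le _)⟩

lemma continuous_grd_family {U : Z → ℝ → E} (hU : Continuous fun p : Z × ℝ => U p.1 p.2)
    (hA : ∀ z, Adm P S.B S.Ω (U z)) : Continuous fun p : Z × ℝ => grd S (U p.1) p.2 :=
  hU.sub (continuous_KS_family (U := fun z => force S (U z)) (continuous_force_family hU hA))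

lemma continuous_act_family {U : Z → ℝ → E} (hU : Continuous fun p : Z × ℝ => U p.1 p.2)
    (hA : ∀ z, Adm P S.B S.Ω (U z)) : Continuous fun z : Z => act P S.B S.W (U z) := by
  have hW : Continuous fun p : Z × ℝ => S.W (cl P p.2) (X P S.B (U p.1) (cl P p.2)) := by
    refine S.contW.comp_continuous
      (f := fun p : Z × ℝ => (cl P p.2, X P S.B (U p.1) (cl P p.2))) ?_ ?_
    · have h := continuous_cl P
      exact (h.comp continuous_snd).prodMk ((continuous_X_family hU).comp
        (continuous_fst.prodMk (h.comp continuous_snd)))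
    · exact fun p => ⟨Set.mem_univ _, (hA p.1).2 _ (cl_mem S.hP.le _)⟩
  have e : ∀ z, act P S.B S.W (U z) = (1 / 2) * (∫ t in (0 : ℝ)..P, ‖U z t‖ ^ 2)
      - ∫ t in (0 : ℝ)..P, S.W (cl P t) (X P S.B (U z) (cl P t)) := by
    intro z
    unfold act
    congr 1
    refine intervalIntegral.integral_congr fun t ht => ?_
    rw [Set.uIcc_of_le S.hP.le] at ht
    simp only [cl_eq ht]
  simp only [e]
  refine (continuous_const.mul ?_).sub ?_
  · exact intervalIntegral.continuous_parametric_intervalIntegral_of_continuous'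
      (f := fun z t => ‖U z t‖ ^ 2) (by simp only [Function.uncurry_def]; fun_prop) 0 P
  · exact intervalIntegral.continuous_parametric_intervalIntegral_of_continuous'
      (f := fun z t => S.W (cl P t) (X P S.B (U z) (cl P t))) hW 0 P

variable (S) in
/-- The families of paths with velocities `U` and `V` are homotopic through twisted paths in
`Ω`. -/
def Deform (U V : Z → ℝ → E) : Prop :=
  ∃ H : ℝ → Z → ℝ → E, (Continuous fun p : ℝ × Z × ℝ => H p.1 p.2.1 p.2.2) ∧
    (∀ z, ∀ t ∈ Set.Icc 0 P, H 0 z t = X P S.B (U z) t) ∧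
    (∀ z, ∀ t ∈ Set.Icc 0 P, H 1 z t = X P S.B (V z) t) ∧
    (∀ τ ∈ Set.Icc (0 : ℝ) 1, ∀ z, ∀ t ∈ Set.Icc 0 P, H τ z t ∈ S.Ω) ∧
    ∀ τ ∈ Set.Icc (0 : ℝ) 1, ∀ z, H τ z P = A (H τ z 0)

lemma Deform.refl {U : Z → ℝ → E} (hU : Continuous fun p : Z × ℝ => U p.1 p.2)
    (hA : ∀ z, Adm P S.B S.Ω (U z)) : Deform S U U :=
  ⟨fun _ z t => X P S.B (U z) t, (continuous_X_family hU).comp continuous_snd,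
    fun _ _ _ => rfl, fun _ _ _ => rfl, fun _ _ z t ht => (hA z).2 t ht,
    fun _ _ _ => X_twist A S.hB _⟩

lemma Deform.trans {U V Y : Z → ℝ → E} (h₁ : Deform S U V) (h₂ : Deform S V Y) :
    Deform S U Y := by
  obtain ⟨H, hc, h0, h1, hΩ, ht⟩ := h₁
  obtain ⟨G, gc, g0, g1, gΩ, gt⟩ := h₂
  have hP := S.hP
  have hcl := continuous_cl 1
  have hlow : ∀ τ ∈ Set.Icc (0 : ℝ) 1, τ ≤ 1 / 2 → ∀ z t,
      H (cl 1 (2 * τ)) z t + G (cl 1 (2 * τ - 1)) z t - G 0 z t = H (2 * τ) z t := by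
    intro τ hτ h z t
    have e : cl 1 (2 * τ - 1) = 0 := by
      rw [cl, min_eq_left (by linarith), max_eq_left (by linarith)]
    rw [e, cl_eq ⟨by linarith [hτ.1], by linarith⟩, add_sub_cancel_right]
  have hhigh : ∀ τ ∈ Set.Icc (0 : ℝ) 1, 1 / 2 ≤ τ → ∀ z, ∀ t ∈ Set.Icc 0 P,
      H (cl 1 (2 * τ)) z t + G (cl 1 (2 * τ - 1)) z t - G 0 z t = G (2 * τ - 1) z t := by
    intro τ hτ h z t hmt
    have e : cl 1 (2 * τ) = 1 := by
      rw [cl, min_eq_right (by linarith), max_eq_right (by linarith)]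
    rw [e, cl_eq ⟨by linarith, by linarith [hτ.2]⟩, h1 z t hmt, g0 z t hmt, add_sub_cancel_left]
  have hmem0 : (0 : ℝ) ∈ Set.Icc 0 P := ⟨le_rfl, hP.le⟩
  have hmemP : P ∈ Set.Icc 0 P := ⟨hP.le, le_rfl⟩
  refine ⟨fun τ z t => H (cl 1 (2 * τ)) z t + G (cl 1 (2 * τ - 1)) z t - G 0 z t,
    ?_, ?_, ?_, ?_, ?_⟩
  · refine ((hc.comp (g := fun p : ℝ × Z × ℝ => H p.1 p.2.1 p.2.2)
      (f := fun p : ℝ × Z × ℝ => (cl 1 (2 * p.1), p.2.1, p.2.2)) (by fun_prop)).add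
      (gc.comp (g := fun p : ℝ × Z × ℝ => G p.1 p.2.1 p.2.2)
      (f := fun p : ℝ × Z × ℝ => (cl 1 (2 * p.1 - 1), p.2.1, p.2.2)) (by fun_prop))).sub
      (gc.comp (g := fun p : ℝ × Z × ℝ => G p.1 p.2.1 p.2.2)
      (f := fun p : ℝ × Z × ℝ => (0, p.2.1, p.2.2)) (by fun_prop))
  · intro z t hmt
    beta_reduce
    rw [hlow 0 (by simp) (by norm_num), mul_zero, h0 z t hmt]
  · intro z t hmt
    beta_reduce
    rw [hhigh 1 (by simp) (by norm_num) z t hmt, ← g1 z t hmt]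
    norm_num
  · intro τ hτ z t hmt
    rcases le_total τ (1 / 2) with h | h
    · simp only [hlow τ hτ h]
      exact hΩ _ ⟨by linarith [hτ.1], by linarith⟩ z t hmt
    · simp only [hhigh τ hτ h z t hmt]
      exact gΩ _ ⟨by linarith, by linarith [hτ.2]⟩ z t hmt
  · intro τ hτ z
    rcases le_total τ (1 / 2) with h | h
    · simp only [hlow τ hτ h]
      exact ht _ ⟨by linarith [hτ.1], by linarith⟩ z
    · simp only [hhigh τ hτ h z P hmemP, hhigh τ hτ h z 0 hmem0]
      exact gt _ ⟨by linarith, by linarith [hτ.2]⟩ z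

/-- When all critical values lie below `c`, a compact family of twisted paths can be deformed
below the level `c`. -/
theorem exists_deform [CompactSpace Z] {c : ℝ} (hc : ∀ u, Crit S u → act P S.B S.W u < c)
    {U : Z → ℝ → E} (hU : Continuous fun p : Z × ℝ => U p.1 p.2)
    (hA : ∀ z, Adm P S.B S.Ω (U z)) :
    ∃ V : Z → ℝ → E, (∀ z, Adm P S.B S.Ω (V z)) ∧ (∀ z, act P S.B S.W (V z) ≤ c) ∧
      Deform S U V := by
  obtain ⟨b, hcb, hb⟩ : ∃ b, c ≤ b ∧ ∀ z, act P S.B S.W (U z) ≤ b := by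
    obtain ⟨b, hb⟩ := (isCompact_range (continuous_act_family hU hA)).bddAbove
    exact ⟨max c b, le_max_left _ _, fun z => (hb ⟨z, rfl⟩).trans (le_max_right _ _)⟩
  obtain ⟨h, hh, hstep⟩ := descent_step S b
  obtain ⟨η, hη, hPS⟩ := palais_smale hc b
  have key : ∀ m : ℕ, ∃ V : Z → ℝ → E, (Continuous fun p : Z × ℝ => V p.1 p.2) ∧
      (∀ z, Adm P S.B S.Ω (V z)) ∧
      (∀ z, act P S.B S.W (V z) ≤ max c (b - m * (h / 2 * η))) ∧ Deform S U V := by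
    intro m
    induction m with
    | zero =>
      refine ⟨U, hU, hA, fun z => ?_, Deform.refl hU hA⟩
      simpa using Or.inr (hb z)
    | succ m ih =>
      obtain ⟨V, hV, hVA, hVb, hD⟩ := ih
      have hδ : 0 < h / 2 * η := by positivity
      have hVb' : ∀ z, act P S.B S.W (V z) ≤ b := fun z => (hVb z).trans
        (max_le hcb (sub_le_self _ (by positivity)))
      have hgc := continuous_grd_family hV hVA
      have hXe : ∀ z t, X P S.B (fun t => V z t - h • grd S (V z) t) t
          = X P S.B (V z) t - h • X P S.B (grd S (V z)) t :=
        fun z t => X_sub_smul (hVA z).1 (continuous_grd (hVA z)) h t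
      have hVc : Continuous fun p : Z × ℝ => V p.1 p.2 - h • grd S (V p.1) p.2 :=
        hV.sub (hgc.const_smul h)
      refine ⟨fun z t => V z t - h • grd S (V z) t, hVc, fun z => ⟨?_, fun t ht => ?_⟩,
        fun z => ?_, hD.trans ?_⟩
      · exact hVc.comp (by fun_prop : Continuous fun t : ℝ => (z, t))
      · rw [hXe]
        simpa using (hstep _ (hVA z) (hVb' z)).1 1 (by simp) t ht
      · refine (hstep _ (hVA z) (hVb' z)).2.trans ?_
        have hQ : 0 ≤ ∫ t in (0 : ℝ)..P, ‖grd S (V z) t‖ ^ 2 :=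
          intervalIntegral.integral_nonneg S.hP.le fun _ _ => by positivity
        rcases le_total (act P S.B S.W (V z)) c with hle | hge
        · refine le_trans ?_ (le_max_left _ _)
          have : 0 ≤ h / 2 * ∫ t in (0 : ℝ)..P, ‖grd S (V z) t‖ ^ 2 := by positivity
          linarith
        · have h1 := hPS _ (hVA z) (hVb' z) hge
          have h2 : h / 2 * η ≤ h / 2 * ∫ t in (0 : ℝ)..P, ‖grd S (V z) t‖ ^ 2 := by gcongr
          have h3 := hVb z
          push_cast
          rcases le_max_iff.1 h3 with h4 | h4
          · exact le_trans (by linarith) (le_max_left _ _)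
          · exact le_trans (by linarith) (le_max_right _ _)
      · refine ⟨fun τ z t => X P S.B (V z) t - (τ * h) • X P S.B (grd S (V z)) t,
          ?_, ?_, ?_, ?_, ?_⟩
        · have h1 := (continuous_X_family (P := P) (B := S.B) hV).comp
            (continuous_snd : Continuous fun p : ℝ × Z × ℝ => p.2)
          have h2 := (continuous_X_family (P := P) (B := S.B) (U := fun z => grd S (V z)) hgc).comp
            (continuous_snd : Continuous fun p : ℝ × Z × ℝ => p.2)
          exact h1.sub ((continuous_fst.mul continuous_const).smul h2)
        · intro z t _
          simp
        · intro z t _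
          beta_reduce
          rw [hXe, one_mul]
        · intro τ hτ z t ht
          exact (hstep _ (hVA z) (hVb' z)).1 τ hτ t ht
        · intro τ hτ z
          beta_reduce
          rw [X_twist A S.hB, X_twist A S.hB, map_sub, map_smul]
  obtain ⟨m, hm⟩ := exists_nat_ge ((b - c) / (h / 2 * η))
  obtain ⟨V, -, hVA, hVb, hD⟩ := key m
  refine ⟨V, hVA, fun z => (hVb z).trans (max_le le_rfl ?_), hD⟩
  rw [div_le_iff₀ (by positivity)] at hm
  linarith

end Deformation

/-! ### From critical points to global solutions -/

section Extension

variable {E : Type*} [NormedAddCommGroup E] [InnerProductSpace ℝ E] [ProperSpace E]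

open ContinuousLinearMap (adjoint)

variable {P : ℝ} {A : E ≃ₗᵢ[ℝ] E} {S : Pot E P A}

lemma forall_of_shift (hP : 0 < P) {G : ℝ → Prop} (h0 : ∀ t ∈ Set.Icc 0 P, G t)
    (h1 : ∀ t, G t → G (t + P)) (h2 : ∀ t, G t → G (t - P)) (t : ℝ) : G t := by
  have key : ∀ (n : ℤ) (s : ℝ), G s → G (s + n * P) := by
    intro n
    induction n using Int.induction_on with
    | zero => intro s hs; simpa using hs
    | succ n ih =>
      intro s hs
      have := h1 _ (ih s hs)
      push_cast at this ⊢
      rwa [add_mul, one_mul, ← add_assoc]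
    | pred n ih =>
      intro s hs
      have := h2 _ (ih s hs)
      push_cast at this ⊢
      rwa [sub_mul, one_mul, ← add_sub_assoc]
  have h3 := key ⌊t / P⌋ (t - ⌊t / P⌋ * P) (h0 _ ?_)
  · rwa [sub_add_cancel] at h3
  · have h4 := Int.floor_le (t / P)
    have h5 := Int.lt_floor_add_one (t / P)
    rw [le_div_iff₀ hP] at h4
    rw [div_lt_iff₀ hP] at h5
    constructor <;> linarith

/-- A function on `[0, P]` with `p P = A (p 0)` extends to a continuous twisted function. -/
lemma exists_twisted_extension (hP : 0 < P) (A : E ≃ₗᵢ[ℝ] E) {p : ℝ → E} (hp : Continuous p)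
    (hpP : p P = A (p 0)) :
    ∃ h : ℝ → E, Continuous h ∧ (∀ t ∈ Set.Icc 0 P, h t = p t) ∧ ∀ t, h (t + P) = A (h t) := by
  set h : ℝ → E := fun t => (A ^ ⌊t / P⌋ : E ≃ₗᵢ[ℝ] E) (p (t - ⌊t / P⌋ * P)) with hh
  have hshift : ∀ t, h (t + P) = A (h t) := by
    intro t
    have e : ⌊(t + P) / P⌋ = 1 + ⌊t / P⌋ := by
      rw [add_div, div_self hP.ne', Int.floor_add_one, add_comm]
    simp only [hh, e, zpow_one_add, LinearIsometryEquiv.coe_mul, Function.comp_apply]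
    congr 3
    push_cast; ring
  have hIco : ∀ t ∈ Set.Ico 0 P, h t = p t := by
    intro t ht
    have e : ⌊t / P⌋ = 0 := by
      rw [Int.floor_eq_zero_iff]
      exact ⟨div_nonneg ht.1 hP.le, (div_lt_one hP).2 ht.2⟩
    simp [hh, e]
  have hIcc : ∀ t ∈ Set.Icc 0 P, h t = p t := by
    intro t ht
    rcases ht.2.lt_or_eq with h1 | h1
    · exact hIco t ⟨ht.1, h1⟩
    · have := hshift 0
      rw [zero_add, hIco 0 ⟨le_rfl, hP⟩] at this
      rw [h1, this, hpP]
  refine ⟨h, continuous_iff_continuousAt.2 ?_, hIcc, hshift⟩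
  refine forall_of_shift hP ?_ ?_ ?_
  · intro t ht
    rcases ht.2.lt_or_eq with h1 | h1
    · set k : ℝ → E := fun t => if t ≤ 0 then A.symm (p (t + P)) else p t with hk
      have hkc : Continuous k := by
        refine Continuous.if_le (by fun_prop) hp continuous_id continuous_const ?_
        intro t ht
        subst ht
        rw [zero_add, hpP, A.symm_apply_apply]
      refine hkc.continuousAt.congr ?_
      filter_upwards [Ioo_mem_nhds (lt_of_lt_of_le (neg_lt_zero.2 hP) ht.1) h1] with s hs
      simp only [hk]
      split_ifs with hs0
      · rw [← hIcc (s + P) ⟨by linarith [hs.1], by linarith⟩, hshift, A.symm_apply_apply]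
      · exact (hIcc s ⟨(not_le.1 hs0).le, hs.2.le⟩).symm
    · set k : ℝ → E := fun t => if t ≤ P then p t else A (p (t - P)) with hk
      have hkc : Continuous k := by
        refine Continuous.if_le hp (by fun_prop) continuous_id continuous_const ?_
        intro t ht
        subst ht
        rw [sub_self, hpP]
      refine hkc.continuousAt.congr ?_
      filter_upwards [Ioo_mem_nhds (show (0 : ℝ) < t by linarith)
        (show t < 2 * P by linarith)] with s hs
      simp only [hk]
      split_ifs with hs0
      · exact (hIcc s ⟨hs.1.le, hs0⟩).symm
      · rw [← hIcc (s - P) ⟨by linarith, by linarith [hs.2]⟩, ← hshift, sub_add_cancel]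
  · intro t ht
    have e : h = fun s => A (h (s - P)) := by
      funext s; rw [← hshift, sub_add_cancel]
    rw [e]
    refine A.continuous.continuousAt.comp
      (ContinuousAt.comp (g := h) (f := fun s => s - P) ?_ (by fun_prop))
    rwa [add_sub_cancel_right]
  · intro t ht
    have e : h = fun s => A.symm (h (s + P)) := by
      funext s; rw [hshift, A.symm_apply_apply]
    rw [e]
    refine A.symm.continuous.continuousAt.comp
      (ContinuousAt.comp (g := h) (f := fun s => s + P) ?_ (by fun_prop))
    rwa [sub_add_cancel]

lemma twisted_primitive {h : ℝ → E} (hc : Continuous h) (hh : ∀ t, h (t + P) = A (h t)) {a : E}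
    (ha : a + ∫ s in (0 : ℝ)..P, h s = A a) (t : ℝ) :
    a + ∫ s in (0 : ℝ)..(t + P), h s = A (a + ∫ s in (0 : ℝ)..t, h s) := by
  have e1 : ∫ s in (0 : ℝ)..t, h (s + P) = ∫ s in P..(t + P), h s := by
    rw [intervalIntegral.integral_comp_add_right, zero_add]
  have e2 : ∫ s in (0 : ℝ)..t, h (s + P) = A (∫ s in (0 : ℝ)..t, h s) := by
    simp only [hh]
    exact ContinuousLinearMap.intervalIntegral_comp_comm
      (A.toContinuousLinearEquiv : E →L[ℝ] E) (hc.intervalIntegrable _ _)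
  rw [map_add, ← ha, ← e2, e1, add_assoc, intervalIntegral.integral_add_adjacent_intervals
    (hc.intervalIntegrable _ _) (hc.intervalIntegrable _ _)]

/-- A right inverse of `A - 1` is also a left inverse: an isometry `A` with `A - 1` onto has no
nonzero fixed vector. -/
lemma B_comm (A : E ≃ₗᵢ[ℝ] E) {B : E →L[ℝ] E} (hB : ∀ v, A (B v) = B v + v) (v : E) :
    B (A v) = B v + v := by
  have hinj : ∀ x, A x = x → x = 0 := by
    intro x hx
    have h1 : inner ℝ x (A (B x)) = inner ℝ x (B x) := by
      have h2 := A.inner_map_map x (B x)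
      rwa [hx] at h2
    rw [hB, inner_add_right, add_eq_left] at h1
    exact inner_self_eq_zero.1 h1
  refine sub_eq_zero.1 (hinj _ ?_)
  rw [map_sub, hB, map_add, hB]
  abel

lemma adjoint_twist (A : E ≃ₗᵢ[ℝ] E) {B : E →L[ℝ] E} (hB : ∀ v, A (B v) = B v + v) (J : E) :
    A (adjoint B J) + A J = adjoint B J := by
  refine ext_inner_right ℝ fun z => ?_
  obtain ⟨v, rfl⟩ := A.surjective z
  rw [← map_add, A.inner_map_map, inner_add_left, ContinuousLinearMap.adjoint_inner_left,
    ContinuousLinearMap.adjoint_inner_left, B_comm A hB, inner_add_right]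

/-- Critical points of the action extend to global twisted solutions of `x'' = - DW t x`. -/
theorem exists_solution {u : ℝ → E} (hu : Crit S u) : ∃ x v : ℝ → E,
    (∀ t, HasDerivAt x (v t) t) ∧ (∀ t, HasDerivAt v (-S.DW t (x t)) t) ∧
    (Continuous fun t => S.DW t (x t)) ∧ (∀ t, x t ∈ S.Ω) ∧ (∀ t, x (t + P) = A (x t)) ∧
    ∀ t ∈ Set.Icc 0 P, x t = X P S.B u t ∧ v t = u t := by
  have hP := S.hP
  have hmem0 : (0 : ℝ) ∈ Set.Icc 0 P := ⟨le_rfl, hP.le⟩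
  have hmemP : P ∈ Set.Icc 0 P := ⟨hP.le, le_rfl⟩
  obtain ⟨hA, hcrit⟩ := hu
  set p := force S u with hp
  have hpc : Continuous p := continuous_force hA
  have hpe : ∀ t ∈ Set.Icc 0 P, p t = S.DW t (X P S.B u t) := by
    intro t ht
    rw [hp, force, cl_eq ht]
  have hpP : p P = A (p 0) := by
    rw [hpe P hmemP, hpe 0 hmem0, X_twist A S.hB, ← S.twist 0 _ (hA.2 0 hmem0), zero_add]
  obtain ⟨h, hc, hhp, hshift⟩ := exists_twisted_extension hP A hpc hpP
  have h_int : ∀ t ∈ Set.Icc 0 P, ∫ s in (0 : ℝ)..t, h s = ∫ s in (0 : ℝ)..t, p s := by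
    intro t ht
    refine intervalIntegral.integral_congr fun s hs => hhp s ?_
    rw [Set.uIcc_of_le ht.1] at hs
    exact ⟨hs.1, hs.2.trans ht.2⟩
  set a := KS P S.B p 0 with ha
  set v : ℝ → E := fun t => a + ∫ s in (0 : ℝ)..t, -h s with hv
  have hve : ∀ t ∈ Set.Icc 0 P, v t = KS P S.B p t := by
    intro t ht
    simp only [hv, intervalIntegral.integral_neg, h_int t ht, ha, KS]
    rw [← intervalIntegral.integral_add_adjacent_intervals (hpc.intervalIntegrable 0 t)
      (hpc.intervalIntegrable t P)]
    abel
  have hvu : ∀ t ∈ Set.Icc 0 P, v t = u t := fun t ht => (hve t ht).trans (hcrit t ht).symm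
  have hvd : ∀ t, HasDerivAt v (-h t) t := fun t =>
    ((hc.neg.integral_hasStrictDerivAt 0 t).hasDerivAt).const_add _
  have hvc : Continuous v := continuous_iff_continuousAt.2 fun t => (hvd t).continuousAt
  have hvs : ∀ t, v (t + P) = A (v t) := by
    refine twisted_primitive hc.neg (fun t => by rw [Pi.neg_apply, Pi.neg_apply, hshift, map_neg]) ?_
    have h1 := hve P hmemP
    simp only [hv] at h1
    simp only [Pi.neg_apply]
    rw [h1, ha]
    simp only [KS, intervalIntegral.integral_same, add_zero, map_add]
    exact (adjoint_twist A S.hB _).symm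
  set x : ℝ → E := fun t => X P S.B u 0 + ∫ s in (0 : ℝ)..t, v s with hx
  have hxe : ∀ t ∈ Set.Icc 0 P, x t = X P S.B u t := by
    intro t ht
    simp only [hx, X, intervalIntegral.integral_same, add_zero]
    congr 1
    refine intervalIntegral.integral_congr fun s hs => hvu s ?_
    rw [Set.uIcc_of_le ht.1] at hs
    exact ⟨hs.1, hs.2.trans ht.2⟩
  have hxd : ∀ t, HasDerivAt x (v t) t := fun t =>
    ((hvc.integral_hasStrictDerivAt 0 t).hasDerivAt).const_add _
  have hxs : ∀ t, x (t + P) = A (x t) := by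
    refine twisted_primitive hvc hvs ?_
    have h1 := hxe P hmemP
    simp only [hx] at h1
    rw [h1, X_twist A S.hB]
  have hgood : ∀ t, x t ∈ S.Ω ∧ h t = S.DW t (x t) := by
    refine forall_of_shift hP ?_ ?_ ?_
    · intro t ht
      rw [hxe t ht, hhp t ht]
      exact ⟨hA.2 t ht, hpe t ht⟩
    · rintro t ⟨h1, h2⟩
      rw [hxs, hshift, S.twist t _ h1, h2]
      exact ⟨S.mem_twist _ h1, rfl⟩
    · rintro t ⟨h1, h2⟩
      have e1 : x t = A (x (t - P)) := by rw [← hxs, sub_add_cancel]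
      have e2 : h t = A (h (t - P)) := by rw [← hshift, sub_add_cancel]
      have h3 : x (t - P) ∈ S.Ω := by
        have := S.mem_twist_symm _ h1
        rwa [e1, A.symm_apply_apply] at this
      refine ⟨h3, A.injective ?_⟩
      rw [← e2, h2, ← S.twist _ _ h3, sub_add_cancel, ← e1]
  refine ⟨x, v, hxd, fun t => (hgood t).2 ▸ hvd t, ?_, fun t => (hgood t).1, hxs,
    fun t ht => ⟨hxe t ht, hvu t ht⟩⟩
  have e : (fun t => S.DW t (x t)) = h := funext fun t => (hgood t).2.symm
  rw [e]
  exact hc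

end Extension

/-! ### Gradients of smooth potentials -/

section Gradient

variable {E : Type*} [NormedAddCommGroup E] [InnerProductSpace ℝ E] [ProperSpace E]
  {W : ℝ → E → ℝ} {Ω : Set E}

lemma hasFDerivAt_slice (hΩ : IsOpen Ω)
    (hf : ContDiffOn ℝ 2 (fun p : ℝ × E => W p.1 p.2) (Set.univ ×ˢ Ω)) (t : ℝ) {x : E}
    (hx : x ∈ Ω) : HasFDerivAt (W t)
      ((fderiv ℝ (fun p : ℝ × E => W p.1 p.2) (t, x)).comp (ContinuousLinearMap.inr ℝ ℝ E)) x := by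
  have h1 : HasFDerivAt (fun p : ℝ × E => W p.1 p.2)
      (fderiv ℝ (fun p : ℝ × E => W p.1 p.2) (t, x)) (t, x) :=
    ((hf.differentiableOn (by norm_num)).differentiableAt
      ((isOpen_univ.prod hΩ).mem_nhds ⟨Set.mem_univ _, hx⟩)).hasFDerivAt
  exact h1.comp x (hasFDerivAt_prodMk_right t x)

lemma inner_gradient (hΩ : IsOpen Ω)
    (hf : ContDiffOn ℝ 2 (fun p : ℝ × E => W p.1 p.2) (Set.univ ×ˢ Ω)) (t : ℝ) {x : E}
    (hx : x ∈ Ω) (z : E) : inner ℝ (gradient (W t) x) z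
      = fderiv ℝ (fun p : ℝ × E => W p.1 p.2) (t, x) (0, z) := by
  rw [gradient, InnerProductSpace.toDual_symm_apply, (hasFDerivAt_slice hΩ hf t hx).fderiv]
  simp

lemma continuousOn_gradient (hΩ : IsOpen Ω)
    (hf : ContDiffOn ℝ 2 (fun p : ℝ × E => W p.1 p.2) (Set.univ ×ˢ Ω)) :
    ContinuousOn (fun p : ℝ × E => gradient (W p.1) p.2) (Set.univ ×ˢ Ω) := by
  have h1 : ContinuousOn (fderiv ℝ (fun p : ℝ × E => W p.1 p.2)) (Set.univ ×ˢ Ω) :=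
    hf.continuousOn_fderiv_of_isOpen (isOpen_univ.prod hΩ) (by norm_num)
  have h2 : ContinuousOn (fun p : ℝ × E => (InnerProductSpace.toDual ℝ E).symm
      ((fderiv ℝ (fun p : ℝ × E => W p.1 p.2) p).comp (ContinuousLinearMap.inr ℝ ℝ E)))
      (Set.univ ×ˢ Ω) :=
    (InnerProductSpace.toDual ℝ E).symm.continuous.comp_continuousOn (h1.clm_comp continuousOn_const)
  refine h2.congr fun p hp => ?_
  rw [gradient, (hasFDerivAt_slice hΩ hf p.1 hp.2).fderiv]

/-- Second order Taylor estimate, uniform on compact sets. -/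
lemma taylor_gradient (hΩ : IsOpen Ω)
    (hf : ContDiffOn ℝ 2 (fun p : ℝ × E => W p.1 p.2) (Set.univ ×ˢ Ω)) (P : ℝ) {K : Set E}
    (hKΩ : K ⊆ Ω) (hK : IsCompact K) :
    ∃ L > 0, ∃ r > 0, ∀ t ∈ Set.Icc 0 P, ∀ x ∈ K, ∀ z : E, ‖z‖ ≤ r →
      x + z ∈ Ω ∧ |W t (x + z) - W t x - inner ℝ (gradient (W t) x) z| ≤ L * ‖z‖ ^ 2 := by
  obtain ⟨r, hr, hrΩ⟩ := hK.exists_cthickening_subset_open hΩ hKΩ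
  set f : ℝ × E → ℝ := fun p => W p.1 p.2 with hfdef
  have ho : IsOpen ((Set.univ : Set ℝ) ×ˢ Ω) := isOpen_univ.prod hΩ
  have hG : ContDiffOn ℝ 1 (fderiv ℝ f) (Set.univ ×ˢ Ω) :=
    hf.fderiv_of_isOpen ho (by norm_num)
  obtain ⟨L, hL⟩ := ((isCompact_Icc (a := 0) (b := P)).prod
    (hK.cthickening (r := r))).exists_bound_of_continuousOn
    ((hG.continuousOn_fderiv_of_isOpen ho le_rfl).mono
      (Set.prod_mono (Set.subset_univ _) hrΩ))
  have hball : ∀ x ∈ K, Metric.closedBall x r ⊆ Metric.cthickening r K := fun x hx =>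
    Metric.closedBall_subset_cthickening hx r
  refine ⟨max L 1, by positivity, r, hr, fun t ht x hx z hz => ?_⟩
  have hmem : ∀ y ∈ Metric.closedBall x ‖z‖, y ∈ Metric.cthickening r K := fun y hy =>
    hball x hx (Metric.closedBall_subset_closedBall hz hy)
  have hxz : x + z ∈ Metric.closedBall x ‖z‖ := by simp [dist_eq_norm]
  have hxx : x ∈ Metric.closedBall x ‖z‖ := by simp
  refine ⟨hrΩ (hmem _ hxz), ?_⟩
  set s : Set (ℝ × E) := {t} ×ˢ Metric.closedBall x ‖z‖ with hs
  have hsc : Convex ℝ s := (convex_singleton t).prod (convex_closedBall x ‖z‖)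
  have hsΩ : ∀ p ∈ s, p ∈ (Set.univ : Set ℝ) ×ˢ Ω :=
    fun p hp => ⟨Set.mem_univ _, hrΩ (hmem _ hp.2)⟩
  have hGd : ∀ p ∈ s, ‖fderiv ℝ f p - fderiv ℝ f (t, x)‖ ≤ max L 1 * ‖z‖ := by
    intro p hp
    have h1 := hsc.norm_image_sub_le_of_norm_fderiv_le (𝕜 := ℝ) (f := fderiv ℝ f) (C := max L 1)
      (fun q hq => (hG.differentiableOn one_ne_zero).differentiableAt (ho.mem_nhds (hsΩ q hq)))
      (fun q hq => (hL q ⟨by rw [show q.1 = t from hq.1]; exact ht, hmem _ hq.2⟩).trans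
        (le_max_left _ _))
      (x := (t, x)) (y := p) ⟨rfl, hxx⟩ hp
    refine h1.trans (mul_le_mul_of_nonneg_left ?_ (by positivity))
    have h2 : p - (t, x) = (0, p.2 - x) := by
      ext1
      · simp [show p.1 = t from hp.1]
      · simp
    rw [h2, Prod.norm_mk, norm_zero, max_eq_right (norm_nonneg _), ← dist_eq_norm]
    exact hp.2
  have h3 := hsc.norm_image_sub_le_of_norm_fderiv_le' (𝕜 := ℝ) (f := f)
    (fun q hq => (hf.differentiableOn (by norm_num)).differentiableAt (ho.mem_nhds (hsΩ q hq)))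
    hGd (x := (t, x)) (y := (t, x + z)) ⟨rfl, hxx⟩ ⟨rfl, hxz⟩
  rw [inner_gradient hΩ hf t (hKΩ hx)]
  have h4 : ((t, x + z) : ℝ × E) - (t, x) = (0, z) := by simp
  rw [h4, Prod.norm_mk, norm_zero, max_eq_right (norm_nonneg _), Real.norm_eq_abs] at h3
  refine h3.trans (le_of_eq ?_)
  ring

lemma gradient_twist (hΩ : IsOpen Ω)
    (hf : ContDiffOn ℝ 2 (fun p : ℝ × E => W p.1 p.2) (Set.univ ×ˢ Ω)) {P : ℝ} {A : E ≃ₗᵢ[ℝ] E}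
    (hA : ∀ x ∈ Ω, A x ∈ Ω) (hW : ∀ t, ∀ x ∈ Ω, W (t + P) (A x) = W t x) (t : ℝ) {x : E}
    (hx : x ∈ Ω) : gradient (W (t + P)) (A x) = A (gradient (W t) x) := by
  have h1 : HasFDerivAt (W (t + P)) (fderiv ℝ (W (t + P)) (A x)) (A x) :=
    (hasFDerivAt_slice hΩ hf (t + P) (hA x hx)).differentiableAt.hasFDerivAt
  have h2 : HasFDerivAt (W t) ((fderiv ℝ (W (t + P)) (A x)).comp
      (A.toContinuousLinearEquiv : E →L[ℝ] E)) x := by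
    refine (h1.comp x (A.toContinuousLinearEquiv : E →L[ℝ] E).hasFDerivAt).congr_of_eventuallyEq ?_
    filter_upwards [hΩ.mem_nhds hx] with y hy
    exact (hW t y hy).symm
  refine ext_inner_right ℝ fun z => ?_
  obtain ⟨v, rfl⟩ := A.surjective z
  rw [A.inner_map_map, gradient, gradient, InnerProductSpace.toDual_symm_apply,
    InnerProductSpace.toDual_symm_apply, h2.fderiv]
  rfl

end Gradient

/-! ### Gordon's strong force estimate -/

section StrongForce

variable {F : Type*} [NormedAddCommGroup F] [InnerProductSpace ℝ F] [ProperSpace F]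

lemma exists_exit_of_le {f : ℝ → ℝ} (hf : Continuous f) {a b r : ℝ} (hab : a ≤ b) (ha : f a < r)
    (hb : r ≤ f b) : ∃ c ∈ Set.Icc a b, f c = r ∧ ∀ t ∈ Set.Icc a c, f t ≤ r := by
  have hc : IsCompact (Set.Icc a b ∩ {t | r ≤ f t}) :=
    isCompact_Icc.inter_right (isClosed_le continuous_const hf)
  obtain ⟨c, hcm, hcl⟩ := hc.exists_isLeast ⟨b, ⟨hab, le_rfl⟩, hb⟩
  have hlt : ∀ t ∈ Set.Icc a b, t < c → f t < r := by
    intro t ht htc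
    by_contra hcon
    exact absurd (hcl ⟨ht, not_lt.1 hcon⟩) (not_le.2 htc)
  have hac : a < c := by
    rcases hcm.1.1.lt_or_eq with h | h
    · exact h
    · rw [← h] at hcm; exact absurd hcm.2 (not_le.2 ha)
  have hle : ∀ t ∈ Set.Icc a c, f t ≤ r := by
    have h1 : Set.Icc a c ⊆ {t | f t ≤ r} := by
      rw [← closure_Ico hac.ne]
      refine closure_minimal (fun t ht => ?_) (isClosed_le hf continuous_const)
      exact (hlt t ⟨ht.1, ht.2.le.trans hcm.1.2⟩ ht.2).le
    exact h1
  exact ⟨c, hcm.1, le_antisymm (hle c ⟨hac.le, le_rfl⟩) hcm.2, hle⟩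

lemma exists_exit {f : ℝ → ℝ} (hf : Continuous f) {a b r : ℝ} (ha : f a < r) (hb : r ≤ f b) :
    ∃ c ∈ Set.uIcc a b, f c = r ∧ ∀ t ∈ Set.uIcc a c, f t ≤ r := by
  rcases le_total a b with h | h
  · obtain ⟨c, hc, h1, h2⟩ := exists_exit_of_le hf h ha hb
    rw [Set.uIcc_of_le h]
    refine ⟨c, hc, h1, ?_⟩
    rwa [Set.uIcc_of_le hc.1]
  · obtain ⟨c, hc, h1, h2⟩ := exists_exit_of_le (f := fun t => f (-t)) (a := -a) (b := -b)
      (hf.comp continuous_neg) (neg_le_neg h) (by simpa using ha) (by simpa using hb)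
    have hca : -c ≤ a := by linarith [hc.1]
    rw [Set.uIcc_of_ge h]
    refine ⟨-c, ⟨by linarith [hc.2], hca⟩, h1, ?_⟩
    rw [Set.uIcc_of_ge hca]
    intro t ht
    simpa using h2 (-t) ⟨by linarith [ht.2], by linarith [ht.1]⟩

/-- Gordon's estimate: the variation of `U` along a path staying in the strong force region is
controlled by the action. -/
lemma gordon_estimate {V : ℝ → F → ℝ} {P r₀ r M : ℝ} (hr : r < r₀)
    {U : F → ℝ} (hU : ContDiffOn ℝ 1 U {ξ | 0 < ‖ξ‖ ∧ ‖ξ‖ < r₀})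
    (hUV : ∀ t : ℝ, ∀ ξ : F, 0 < ‖ξ‖ → ‖ξ‖ < r₀ → -V t ξ ≥ ‖gradient U ξ‖ ^ 2)
    {ξ ξ' : ℝ → F} (hξ : ∀ t, HasDerivAt ξ (ξ' t) t) (hξ' : Continuous ξ')
    (hV4 : ∀ t ∈ Set.Icc 0 P, V t (ξ t) ≤ 0)
    (hVc : ContinuousOn (fun t => V t (ξ t)) (Set.Icc 0 P))
    (h0 : ∀ t ∈ Set.Icc 0 P, ξ t ≠ 0)
    (hM1 : ∫ t in (0 : ℝ)..P, -V t (ξ t) ≤ M) (hM2 : ∫ t in (0 : ℝ)..P, ‖ξ' t‖ ^ 2 ≤ M)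
    {a b : ℝ} (ha : 0 ≤ a) (hab : a ≤ b) (hb : b ≤ P) (hle : ∀ t ∈ Set.Icc a b, ‖ξ t‖ ≤ r) :
    |U (ξ b) - U (ξ a)| ≤ M := by
  have hP : (0 : ℝ) ≤ P := by linarith
  have hξc : Continuous ξ := continuous_iff_continuousAt.2 fun t => (hξ t).continuousAt
  have ho : IsOpen {ξ : F | 0 < ‖ξ‖ ∧ ‖ξ‖ < r₀} :=
    (isOpen_lt continuous_const continuous_norm).inter (isOpen_lt continuous_norm continuous_const)
  have hsub : Set.Icc a b ⊆ Set.Icc 0 P := Set.Icc_subset_Icc ha hb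
  have hmem : ∀ t ∈ Set.Icc a b, ξ t ∈ {ξ : F | 0 < ‖ξ‖ ∧ ‖ξ‖ < r₀} := fun t ht =>
    ⟨norm_pos_iff.2 (h0 t (hsub ht)), (hle t ht).trans_lt hr⟩
  set d : ℝ → ℝ := fun t => fderiv ℝ U (ξ t) (ξ' t) with hd
  have hder : ∀ t ∈ Set.uIcc a b, HasDerivAt (fun t => U (ξ t)) (d t) t := by
    intro t ht
    rw [Set.uIcc_of_le hab] at ht
    exact ((hU.differentiableOn one_ne_zero).differentiableAt
      (ho.mem_nhds (hmem t ht))).hasFDerivAt.comp_hasDerivAt t (hξ t)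
  have hdc : ContinuousOn d (Set.uIcc a b) := by
    rw [Set.uIcc_of_le hab]
    exact ((hU.continuousOn_fderiv_of_isOpen ho le_rfl).comp hξc.continuousOn hmem).clm_apply
      hξ'.continuousOn
  rw [← intervalIntegral.integral_eq_sub_of_hasDerivAt hder hdc.intervalIntegrable]
  have hVi : ∀ c e, 0 ≤ c → c ≤ e → e ≤ P → IntervalIntegrable (fun t => V t (ξ t))
      MeasureTheory.volume c e := by
    intro c e hc hce he
    refine (hVc.mono ?_).intervalIntegrable
    rw [Set.uIcc_of_le hce]
    exact Set.Icc_subset_Icc hc he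
  have hni : ∀ c e, IntervalIntegrable (fun t => ‖ξ' t‖ ^ 2) MeasureTheory.volume c e :=
    fun c e => Continuous.intervalIntegrable (by fun_prop) _ _
  rw [← Real.norm_eq_abs]
  calc ‖∫ t in a..b, d t‖ ≤ ∫ t in a..b, ‖d t‖ :=
        intervalIntegral.norm_integral_le_integral_norm hab
    _ ≤ ∫ t in a..b, (1 / 2) * (-V t (ξ t) + ‖ξ' t‖ ^ 2) := by
        refine intervalIntegral.integral_mono_on hab hdc.norm.intervalIntegrable
          (((hVi a b ha hab hb).neg.add (hni a b)).const_mul _) fun t ht => ?_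
        have h1 : d t = inner ℝ (gradient U (ξ t)) (ξ' t) := by
          rw [gradient, InnerProductSpace.toDual_symm_apply]
        have h2 := norm_inner_le_norm (𝕜 := ℝ) (gradient U (ξ t)) (ξ' t)
        have h3 := hUV t _ (hmem t ht).1 (hmem t ht).2
        rw [h1]
        nlinarith [sq_nonneg (‖gradient U (ξ t)‖ - ‖ξ' t‖)]
    _ ≤ ∫ t in (0 : ℝ)..P, (1 / 2) * (-V t (ξ t) + ‖ξ' t‖ ^ 2) := by
        refine intervalIntegral.integral_mono_interval ha hab hb ?_
          (((hVi 0 P le_rfl hP le_rfl).neg.add (hni 0 P)).const_mul _)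
        refine (MeasureTheory.ae_restrict_iff' measurableSet_Ioc).2
          (Filter.Eventually.of_forall fun t ht => ?_)
        have := hV4 t ⟨ht.1.le, ht.2⟩
        simp only [Pi.zero_apply]
        have := sq_nonneg ‖ξ' t‖
        linarith
    _ ≤ M := by
        have h1 : IntervalIntegrable (fun t => -V t (ξ t)) MeasureTheory.volume 0 P :=
          (hVi 0 P le_rfl hP le_rfl).neg
        rw [intervalIntegral.integral_const_mul, intervalIntegral.integral_add h1 (hni 0 P)]
        linarith

/-- Under the strong force condition, paths of bounded action stay away from the origin. -/
lemma strong_force_bound {V : ℝ → F → ℝ} {P : ℝ} (hP : 0 < P)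
    (hV3 : ∀ M : ℝ, ∃ δ > (0 : ℝ), ∀ t : ℝ, ∀ ξ : F, ξ ≠ 0 → ‖ξ‖ < δ → V t ξ < M)
    (hV4 : ∀ t : ℝ, ∀ ξ : F, ξ ≠ 0 → V t ξ ≤ 0)
    (hV5 : ∃ r₀ > (0 : ℝ), ∃ U : F → ℝ, ContDiffOn ℝ 1 U {ξ | 0 < ‖ξ‖ ∧ ‖ξ‖ < r₀} ∧
      Filter.Tendsto U (nhdsWithin 0 {ξ | ξ ≠ 0}) Filter.atBot ∧
      ∀ t : ℝ, ∀ ξ : F, 0 < ‖ξ‖ → ‖ξ‖ < r₀ → -V t ξ ≥ ‖gradient U ξ‖ ^ 2) (M : ℝ) :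
    ∃ δ > 0, ∀ ξ ξ' : ℝ → F, (∀ t, HasDerivAt ξ (ξ' t) t) → Continuous ξ' →
      ContinuousOn (fun t => V t (ξ t)) (Set.Icc 0 P) → (∀ t ∈ Set.Icc 0 P, ξ t ≠ 0) →
      ∫ t in (0 : ℝ)..P, -V t (ξ t) ≤ M → ∫ t in (0 : ℝ)..P, ‖ξ' t‖ ^ 2 ≤ M →
      ∀ t ∈ Set.Icc 0 P, δ ≤ ‖ξ t‖ := by
  obtain ⟨r₀, hr₀, U, hU, hUlim, hUV⟩ := hV5
  obtain ⟨δ₀, hδ₀, hδV⟩ := hV3 (-(M / P + 1))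
  obtain ⟨r, hr, hrδ, hrr⟩ : ∃ r > 0, r < δ₀ ∧ r < r₀ :=
    ⟨min δ₀ r₀ / 2, by positivity, by
      have := min_le_left δ₀ r₀
      have : 0 < min δ₀ r₀ := by positivity
      linarith, by
      have := min_le_right δ₀ r₀
      have : 0 < min δ₀ r₀ := by positivity
      linarith⟩
  obtain ⟨C, hC⟩ := (isCompact_sphere (0 : F) r).exists_bound_of_continuousOn
    (hU.continuousOn.mono (s := {ξ | 0 < ‖ξ‖ ∧ ‖ξ‖ < r₀}) (fun ξ hξ => by
      rw [mem_sphere_zero_iff_norm] at hξ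
      exact ⟨by rw [hξ]; exact hr, by rw [hξ]; exact hrr⟩))
  have h1 := hUlim.eventually (Filter.eventually_lt_atBot (-C - M))
  obtain ⟨ε, hε, hεU⟩ := Metric.mem_nhdsWithin_iff.1 h1
  refine ⟨min ε r, by positivity, fun ξ ξ' hξ hξ' hVc h0 hM1 hM2 t ht => ?_⟩
  by_contra hcon
  push Not at hcon
  have hξc : Continuous ξ := continuous_iff_continuousAt.2 fun t => (hξ t).continuousAt
  obtain ⟨t₀, ht₀, hrt₀⟩ : ∃ t₀ ∈ Set.Icc 0 P, r ≤ ‖ξ t₀‖ := by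
    by_contra hno
    push Not at hno
    have h2 : ∫ _ in (0 : ℝ)..P, (M / P + 1) ≤ ∫ t in (0 : ℝ)..P, -V t (ξ t) := by
      refine intervalIntegral.integral_mono_on hP.le intervalIntegrable_const ?_ fun s hs => ?_
      · refine ContinuousOn.intervalIntegrable ?_
        rw [Set.uIcc_of_le hP.le]
        exact hVc.neg
      · have := hδV s (ξ s) (h0 s hs) ((hno s hs).trans hrδ)
        linarith
    rw [intervalIntegral.integral_const, smul_eq_mul, sub_zero, mul_add, mul_div_cancel₀ _ hP.ne']
      at h2
    linarith
  obtain ⟨c, hcm, hcr, hcle⟩ := exists_exit (f := fun t => ‖ξ t‖) (a := t) (b := t₀) hξc.norm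
    (hcon.trans_le (min_le_right _ _)) hrt₀
  have hcP : c ∈ Set.Icc 0 P := Set.uIcc_subset_Icc ht ht₀ hcm
  have hV4' : ∀ t ∈ Set.Icc 0 P, V t (ξ t) ≤ 0 := fun t ht => hV4 t _ (h0 t ht)
  have hmain : |U (ξ c) - U (ξ t)| ≤ M := by
    rcases le_total t c with h | h
    · rw [Set.uIcc_of_le h] at hcle
      exact gordon_estimate hrr hU hUV hξ hξ' hV4' hVc h0 hM1 hM2 ht.1 h hcP.2 hcle
    · rw [Set.uIcc_of_ge h] at hcle
      rw [abs_sub_comm]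
      exact gordon_estimate hrr hU hUV hξ hξ' hV4' hVc h0 hM1 hM2 hcP.1 h ht.2 hcle
  have h5 : U (ξ t) < -C - M := hεU ⟨by
    rw [mem_ball_zero_iff]; exact hcon.trans_le (min_le_left _ _), h0 t ht⟩
  have h6 := hC (ξ c) (by rw [mem_sphere_zero_iff_norm]; exact hcr)
  rw [Real.norm_eq_abs] at h6
  have h7 := (abs_le.1 h6).1
  have h8 := (abs_le.1 hmain).2
  linarith

end StrongForce

/-! ### The N-body potential in mass-weighted coordinates -/

section NBody

variable {n N : ℕ}

/-- The configuration space of `N` particles in `ℝⁿ`, with its Euclidean structure. -/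
abbrev Cfg (n N : ℕ) : Type := PiLp 2 (fun _ : Fin N => EuclideanSpace ℝ (Fin n))

/-- A shortcut: the general search is very slow on nested `PiLp` types. -/
instance instContinuousSMulCfg : ContinuousSMul ℝ (Cfg n N) := IsBoundedSMul.continuousSMul

/-- The difference of the positions of particles `i` and `j`, in rescaled coordinates where the
`i`-th particle has position `w i • Y i`. -/
noncomputable def pd (w : Fin N → ℝ) (i j : Fin N) : Cfg n N →L[ℝ] EuclideanSpace ℝ (Fin n) :=
  w i • PiLp.proj 2 (fun _ : Fin N => EuclideanSpace ℝ (Fin n)) i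
    - w j • PiLp.proj 2 (fun _ : Fin N => EuclideanSpace ℝ (Fin n)) j

@[simp] lemma pd_apply (w : Fin N → ℝ) (i j : Fin N) (Y : Cfg n N) :
    pd w i j Y = w i • Y i - w j • Y j := rfl

/-- Non-collision configurations in rescaled coordinates. -/
def nonColl (n : ℕ) {N : ℕ} (w : Fin N → ℝ) : Set (Cfg n N) :=
  {Y | ∀ i j, i ≠ j → pd w i j Y ≠ 0}

/-- The total potential in rescaled coordinates. -/
noncomputable def pot (w : Fin N → ℝ) (V : Fin N → Fin N → ℝ → EuclideanSpace ℝ (Fin n) → ℝ)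
    (t : ℝ) (Y : Cfg n N) : ℝ :=
  (1 / 2) * ∑ i, ∑ j ∈ Finset.univ.filter (fun j => j ≠ i), V i j t (pd w i j Y)

/-- The isometry `g` acting on each particle. -/
noncomputable def diagIso (N : ℕ) (g : EuclideanSpace ℝ (Fin n) ≃ₗᵢ[ℝ] EuclideanSpace ℝ (Fin n)) :
    Cfg n N ≃ₗᵢ[ℝ] Cfg n N :=
  LinearIsometryEquiv.piLpCongrRight 2 fun _ => g

@[simp] lemma diagIso_apply (g : EuclideanSpace ℝ (Fin n) ≃ₗᵢ[ℝ] EuclideanSpace ℝ (Fin n))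
    (Y : Cfg n N) (i : Fin N) : diagIso N g Y i = g (Y i) := rfl

lemma pd_diagIso (w : Fin N → ℝ) (i j : Fin N)
    (g : EuclideanSpace ℝ (Fin n) ≃ₗᵢ[ℝ] EuclideanSpace ℝ (Fin n)) (Y : Cfg n N) :
    pd w i j (diagIso N g Y) = g (pd w i j Y) := by
  simp

lemma isOpen_nonColl (w : Fin N → ℝ) : IsOpen (nonColl n w) := by
  have e : nonColl n w = ⋂ i, ⋂ j, {Y | i ≠ j → pd w i j Y ≠ 0} := by
    ext Y; simp [nonColl]
  rw [e]
  refine isOpen_iInter_of_finite fun i => isOpen_iInter_of_finite fun j => ?_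
  by_cases h : i = j
  · simp [h]
  · simp only [ne_eq, h, not_false_eq_true, forall_const]
    exact isOpen_ne_fun (pd w i j).continuous continuous_const

lemma contDiffOn_pot (w : Fin N → ℝ) {V : Fin N → Fin N → ℝ → EuclideanSpace ℝ (Fin n) → ℝ}
    (hV : ∀ i j, i ≠ j → ContDiffOn ℝ 2 (fun p : ℝ × EuclideanSpace ℝ (Fin n) => V i j p.1 p.2)
        {p : ℝ × EuclideanSpace ℝ (Fin n) | p.2 ≠ 0}) :
    ContDiffOn ℝ 2 (fun p : ℝ × Cfg n N => pot w V p.1 p.2) (Set.univ ×ˢ nonColl n w) := by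
  unfold pot
  refine contDiffOn_const.mul (ContDiffOn.sum fun i _ => ContDiffOn.sum fun j hj => ?_)
  have hij : i ≠ j := fun h => (Finset.mem_filter.1 hj).2 h.symm
  refine (hV i j hij).comp (g := fun p : ℝ × EuclideanSpace ℝ (Fin n) => V i j p.1 p.2)
    (f := fun p : ℝ × Cfg n N => (p.1, pd w i j p.2)) ?_ fun p hp => hp.2 i j hij
  exact (contDiff_fst.prodMk ((pd w i j).contDiff.comp contDiff_snd)).contDiffOn

/-- Each pair potential is bounded below by twice the total potential, all summands being
nonpositive. -/
lemma two_mul_pot_le (w : Fin N → ℝ) {V : Fin N → Fin N → ℝ → EuclideanSpace ℝ (Fin n) → ℝ}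
    (hV4 : ∀ i j, i ≠ j → ∀ t : ℝ, ∀ ξ : EuclideanSpace ℝ (Fin n), ξ ≠ 0 → V i j t ξ ≤ 0)
    (t : ℝ) {Y : Cfg n N} (hY : Y ∈ nonColl n w) {i j : Fin N} (hij : i ≠ j) :
    2 * pot w V t Y ≤ V i j t (pd w i j Y) := by
  have h1 : ∀ i, ∀ j ∈ Finset.univ.filter (fun j => j ≠ i), 0 ≤ -V i j t (pd w i j Y) := by
    intro i j hj
    have hij : i ≠ j := fun h => (Finset.mem_filter.1 hj).2 h.symm
    exact neg_nonneg.2 (hV4 i j hij t _ (hY i j hij))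
  have h2 := Finset.single_le_sum (s := Finset.univ)
    (f := fun i => ∑ j ∈ Finset.univ.filter (fun j => j ≠ i), -V i j t (pd w i j Y))
    (fun i _ => Finset.sum_nonneg (h1 i)) (Finset.mem_univ i)
  have h3 := Finset.single_le_sum (h1 i) (Finset.mem_filter.2 ⟨Finset.mem_univ j, hij.symm⟩)
  simp only [Finset.sum_neg_distrib] at h2 h3
  unfold pot
  linarith

lemma pot_nonpos (w : Fin N → ℝ) {V : Fin N → Fin N → ℝ → EuclideanSpace ℝ (Fin n) → ℝ}
    (hV4 : ∀ i j, i ≠ j → ∀ t : ℝ, ∀ ξ : EuclideanSpace ℝ (Fin n), ξ ≠ 0 → V i j t ξ ≤ 0)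
    (t : ℝ) {Y : Cfg n N} (hY : Y ∈ nonColl n w) : pot w V t Y ≤ 0 := by
  unfold pot
  refine mul_nonpos_of_nonneg_of_nonpos (by norm_num)
    (Finset.sum_nonpos fun i _ => Finset.sum_nonpos fun j hj => ?_)
  have hij : i ≠ j := fun h => (Finset.mem_filter.1 hj).2 h.symm
  exact hV4 i j hij t _ (hY i j hij)

/-- An isometry `A` without nonzero fixed vectors has `A - 1` invertible. -/
lemma exists_B {E : Type*} [NormedAddCommGroup E] [InnerProductSpace ℝ E] [FiniteDimensional ℝ E]
    (A : E ≃ₗᵢ[ℝ] E) (hA : ∀ v, A v = v → v = 0) :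
    ∃ B : E →L[ℝ] E, ∀ v, A (B v) = B v + v := by
  set D : E →ₗ[ℝ] E := (A.toLinearEquiv : E →ₗ[ℝ] E) - LinearMap.id with hD
  have hi : Function.Injective D := by
    rw [injective_iff_map_eq_zero]
    intro v hv
    exact hA v (sub_eq_zero.1 hv)
  set e := LinearEquiv.ofInjectiveEndo D hi with he
  refine ⟨LinearMap.toContinuousLinearMap (e.symm : E →ₗ[ℝ] E), fun v => ?_⟩
  have h1 : D (e.symm v) = v := e.apply_symm_apply v
  have h2 : A (e.symm v) - e.symm v = v := h1
  have h3 := sub_eq_iff_eq_add.1 h2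
  rw [add_comm] at h3
  exact h3

lemma diagIso_mem {w : Fin N → ℝ} (g : EuclideanSpace ℝ (Fin n) ≃ₗᵢ[ℝ] EuclideanSpace ℝ (Fin n))
    {Y : Cfg n N} (hY : Y ∈ nonColl n w) : diagIso N g Y ∈ nonColl n w := by
  intro i j hij
  rw [pd_diagIso]
  exact fun h => hY i j hij (g.map_eq_zero_iff.1 h)

lemma diagIso_symm_mem {w : Fin N → ℝ}
    (g : EuclideanSpace ℝ (Fin n) ≃ₗᵢ[ℝ] EuclideanSpace ℝ (Fin n))
    {Y : Cfg n N} (hY : Y ∈ nonColl n w) : (diagIso N g).symm Y ∈ nonColl n w := by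
  intro i j hij h
  refine hY i j hij ?_
  rw [← (diagIso N g).apply_symm_apply Y, pd_diagIso, h, map_zero]

lemma intervalIntegrable_pot {P : ℝ} (hP : 0 < P) {w : Fin N → ℝ}
    {V : Fin N → Fin N → ℝ → EuclideanSpace ℝ (Fin n) → ℝ}
    (hV : ∀ i j, i ≠ j → ContDiffOn ℝ 2 (fun p : ℝ × EuclideanSpace ℝ (Fin n) => V i j p.1 p.2)
        {p : ℝ × EuclideanSpace ℝ (Fin n) | p.2 ≠ 0})
    {B : Cfg n N →L[ℝ] Cfg n N} {u : ℝ → Cfg n N} (hu : Adm P B (nonColl n w) u) :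
    IntervalIntegrable (fun t => pot w V t (X P B u t)) MeasureTheory.volume 0 P := by
  refine ContinuousOn.intervalIntegrable ?_
  rw [Set.uIcc_of_le hP.le]
  exact (contDiffOn_pot w hV).continuousOn.comp (f := fun t => (t, X P B u t))
    (continuousOn_id.prodMk (continuous_X hu.1).continuousOn)
    fun t ht => ⟨Set.mem_univ _, hu.2 t ht⟩

lemma energy_cfg {P : ℝ} (hP : 0 < P) {w : Fin N → ℝ}
    {V : Fin N → Fin N → ℝ → EuclideanSpace ℝ (Fin n) → ℝ}
    (hV : ∀ i j, i ≠ j → ContDiffOn ℝ 2 (fun p : ℝ × EuclideanSpace ℝ (Fin n) => V i j p.1 p.2)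
        {p : ℝ × EuclideanSpace ℝ (Fin n) | p.2 ≠ 0})
    (hV4 : ∀ i j, i ≠ j → ∀ t : ℝ, ∀ ξ : EuclideanSpace ℝ (Fin n), ξ ≠ 0 → V i j t ξ ≤ 0)
    {B : Cfg n N →L[ℝ] Cfg n N} {u : ℝ → Cfg n N} (hu : Adm P B (nonColl n w) u) {b : ℝ}
    (hb : act P B (pot w V) u ≤ b) : ∫ t in (0 : ℝ)..P, ‖u t‖ ^ 2 ≤ 2 * b := by
  have h : ∫ t in (0 : ℝ)..P, pot w V t (X P B u t) ≤ 0 := by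
    have := intervalIntegral.integral_mono_on hP.le (intervalIntegrable_pot hP hV hu)
      (intervalIntegrable_const (c := (0 : ℝ)))
      (fun t ht => pot_nonpos w hV4 t (hu.2 t ht))
    simpa using this
  unfold act at hb
  linarith

/-- Sublevel sets of the action consist of paths in a fixed compact set of non-collision
configurations. -/
lemma strong_cfg {P : ℝ} (hP : 0 < P) (w : Fin N → ℝ)
    {V : Fin N → Fin N → ℝ → EuclideanSpace ℝ (Fin n) → ℝ}
    (hV : ∀ i j, i ≠ j → ContDiffOn ℝ 2 (fun p : ℝ × EuclideanSpace ℝ (Fin n) => V i j p.1 p.2)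
        {p : ℝ × EuclideanSpace ℝ (Fin n) | p.2 ≠ 0})
    (hV3 : ∀ i j, i ≠ j → ∀ M : ℝ, ∃ δ > (0:ℝ),
      ∀ t : ℝ, ∀ ξ : EuclideanSpace ℝ (Fin n), ξ ≠ 0 → ‖ξ‖ < δ → V i j t ξ < M)
    (hV4 : ∀ i j, i ≠ j → ∀ t : ℝ, ∀ ξ : EuclideanSpace ℝ (Fin n), ξ ≠ 0 → V i j t ξ ≤ 0)
    (hV5 : ∀ i j, i ≠ j → ∃ r₀ > (0:ℝ), ∃ U : EuclideanSpace ℝ (Fin n) → ℝ,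
      ContDiffOn ℝ 1 U {ξ | 0 < ‖ξ‖ ∧ ‖ξ‖ < r₀} ∧
      Filter.Tendsto U (nhdsWithin 0 {ξ | ξ ≠ 0}) Filter.atBot ∧
      ∀ t : ℝ, ∀ ξ : EuclideanSpace ℝ (Fin n), 0 < ‖ξ‖ → ‖ξ‖ < r₀ →
        -V i j t ξ ≥ ‖gradient U ξ‖ ^ 2)
    (B : Cfg n N →L[ℝ] Cfg n N) (b : ℝ) :
    ∃ K ⊆ nonColl n w, IsCompact K ∧ ∀ u, Adm P B (nonColl n w) u → act P B (pot w V) u ≤ b →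
      ∀ t ∈ Set.Icc 0 P, X P B u t ∈ K := by
  -- along a path of action at most `b`, every pair has energy and potential at most `M i j`
  set M : Fin N → Fin N → ℝ := fun i j => max (2 * b) (‖pd (n := n) w i j‖ ^ 2 * (2 * b)) with hM
  have hδ : ∀ i j, ∃ δ > 0, i ≠ j → ∀ u, Adm P B (nonColl n w) u → act P B (pot w V) u ≤ b →
      ∀ t ∈ Set.Icc 0 P, δ ≤ ‖pd w i j (X P B u t)‖ := by
    intro i j
    by_cases hij : i = j
    · exact ⟨1, one_pos, fun h => absurd hij h⟩
    obtain ⟨δ, hδ, h⟩ := strong_force_bound hP (hV3 i j hij) (hV4 i j hij) (hV5 i j hij) (M i j)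
    refine ⟨δ, hδ, fun _ u hu hub => ?_⟩
    have hE := energy_cfg hP hV hV4 hu hub
    have hXc : Continuous (X P B u) := continuous_X hu.1
    have hne : ∀ t ∈ Set.Icc 0 P, pd w i j (X P B u t) ≠ 0 := fun t ht => hu.2 t ht i j hij
    have hVc : ContinuousOn (fun t => V i j t (pd w i j (X P B u t))) (Set.Icc 0 P) :=
      (hV i j hij).continuousOn.comp (f := fun t => (t, pd w i j (X P B u t)))
        (by fun_prop) fun t ht => hne t ht
    refine h (fun t => pd w i j (X P B u t)) (fun t => pd w i j (u t))
      (fun t => (pd w i j).hasFDerivAt.comp_hasDerivAt t (hasDerivAt_X hu.1 t))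
      ((pd w i j).continuous.comp hu.1) hVc hne ?_ ?_
    · refine le_trans ?_ (le_max_left _ _)
      have hVi : IntervalIntegrable (fun t => -V i j t (pd w i j (X P B u t)))
          MeasureTheory.volume 0 P :=
        ContinuousOn.intervalIntegrable (by rw [Set.uIcc_of_le hP.le]; exact hVc.neg)
      have hpi : IntervalIntegrable (fun t => (-2) * pot w V t (X P B u t))
          MeasureTheory.volume 0 P := (intervalIntegrable_pot hP hV hu).const_mul _
      have h1 := intervalIntegral.integral_mono_on hP.le hVi hpi
        (fun t ht => by linarith [two_mul_pot_le w hV4 t (hu.2 t ht) hij])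
      rw [intervalIntegral.integral_const_mul] at h1
      have h0 : 0 ≤ ∫ t in (0 : ℝ)..P, ‖u t‖ ^ 2 :=
        intervalIntegral.integral_nonneg hP.le fun t _ => sq_nonneg _
      unfold act at hub
      linarith
    · refine le_trans ?_ (le_max_right _ _)
      have hcu := hu.1
      have h1 := intervalIntegral.integral_mono_on (μ := MeasureTheory.volume) hP.le
        (f := fun t => ‖pd w i j (u t)‖ ^ 2)
        (g := fun t => ‖pd (n := n) w i j‖ ^ 2 * ‖u t‖ ^ 2)
        (Continuous.intervalIntegrable (by fun_prop) _ _)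
        (Continuous.intervalIntegrable (by fun_prop) _ _)
        (fun t _ => by
          rw [← mul_pow]
          exact pow_le_pow_left₀ (norm_nonneg _) ((pd w i j).le_opNorm _) 2)
      rw [intervalIntegral.integral_const_mul] at h1
      exact h1.trans (mul_le_mul_of_nonneg_left hE (sq_nonneg _))
  choose δ hδ0 hδ using hδ
  set R : ℝ := ((‖B‖ + 1) ^ 2 * P) * (2 * b) with hR
  refine ⟨{Y | ‖Y‖ ^ 2 ≤ R ∧ ∀ i j, i ≠ j → δ i j ≤ ‖pd w i j Y‖}, ?_, ?_, ?_⟩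
  · intro Y hY i j hij h0
    have := hY.2 i j hij
    rw [h0, norm_zero] at this
    exact absurd (hδ0 i j) (not_lt.2 this)
  · refine Metric.isCompact_of_isClosed_isBounded ?_ ?_
    · refine (isClosed_le (continuous_norm.pow 2) continuous_const).inter ?_
      have e : {Y : Cfg n N | ∀ i j, i ≠ j → δ i j ≤ ‖pd w i j Y‖}
          = ⋂ i, ⋂ j, ⋂ _ : i ≠ j, {Y | δ i j ≤ ‖pd w i j Y‖} := by
        ext Y; simp
      change IsClosed {Y : Cfg n N | ∀ i j, i ≠ j → δ i j ≤ ‖pd w i j Y‖}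
      rw [e]
      exact isClosed_iInter fun i => isClosed_iInter fun j => isClosed_iInter fun _ =>
        isClosed_le continuous_const (pd w i j).continuous.norm
    · refine (Metric.isBounded_closedBall (x := (0 : Cfg n N)) (r := Real.sqrt R)).subset ?_
      intro Y hY
      rw [mem_closedBall_zero_iff]
      exact Real.le_sqrt_of_sq_le hY.1
  · intro u hu hub t ht
    refine ⟨?_, fun i j hij => hδ i j hij u hu hub t ht⟩
    exact (sq_norm_X_le hP hu.1 ht).trans
      (mul_le_mul_of_nonneg_left (energy_cfg hP hV hV4 hu hub) (by positivity))

/-- The mechanical system in rescaled coordinates, as an instance of the abstract setting. -/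
noncomputable def cfgPot {P : ℝ} (hP : 0 < P) (w : Fin N → ℝ)
    {V : Fin N → Fin N → ℝ → EuclideanSpace ℝ (Fin n) → ℝ}
    (hV : ∀ i j, i ≠ j → ContDiffOn ℝ 2 (fun p : ℝ × EuclideanSpace ℝ (Fin n) => V i j p.1 p.2)
        {p : ℝ × EuclideanSpace ℝ (Fin n) | p.2 ≠ 0})
    (hV3 : ∀ i j, i ≠ j → ∀ M : ℝ, ∃ δ > (0:ℝ),
      ∀ t : ℝ, ∀ ξ : EuclideanSpace ℝ (Fin n), ξ ≠ 0 → ‖ξ‖ < δ → V i j t ξ < M)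
    (hV4 : ∀ i j, i ≠ j → ∀ t : ℝ, ∀ ξ : EuclideanSpace ℝ (Fin n), ξ ≠ 0 → V i j t ξ ≤ 0)
    (hV5 : ∀ i j, i ≠ j → ∃ r₀ > (0:ℝ), ∃ U : EuclideanSpace ℝ (Fin n) → ℝ,
      ContDiffOn ℝ 1 U {ξ | 0 < ‖ξ‖ ∧ ‖ξ‖ < r₀} ∧
      Filter.Tendsto U (nhdsWithin 0 {ξ | ξ ≠ 0}) Filter.atBot ∧
      ∀ t : ℝ, ∀ ξ : EuclideanSpace ℝ (Fin n), 0 < ‖ξ‖ → ‖ξ‖ < r₀ →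
        -V i j t ξ ≥ ‖gradient U ξ‖ ^ 2)
    (g : EuclideanSpace ℝ (Fin n) ≃ₗᵢ[ℝ] EuclideanSpace ℝ (Fin n))
    {B : Cfg n N →L[ℝ] Cfg n N} (hB : ∀ v, diagIso N g (B v) = B v + v)
    (hW : ∀ t, ∀ Y ∈ nonColl n w, pot w V (t + P) (diagIso N g Y) = pot w V t Y) :
    Pot (Cfg n N) P (diagIso N g) where
  W := pot w V
  DW t := gradient (pot w V t)
  Ω := nonColl n w
  B := B
  hP := hP
  hB := hB
  contW := (contDiffOn_pot w hV).continuousOn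
  contDW := continuousOn_gradient (isOpen_nonColl w) (contDiffOn_pot w hV)
  nonpos t _ hY := pot_nonpos w hV4 t hY
  taylor _ hKΩ hK := taylor_gradient (isOpen_nonColl w) (contDiffOn_pot w hV) P hKΩ hK
  mem_twist _ hY := diagIso_mem g hY
  mem_twist_symm _ hY := diagIso_symm_mem g hY
  twist t _ hY := gradient_twist (isOpen_nonColl w) (contDiffOn_pot w hV)
    (fun _ hY => diagIso_mem g hY) hW t hY
  strong b := strong_cfg hP w hV hV3 hV4 hV5 B b

end NBody

/-! ### Critical points of arbitrarily high action -/

section HighCritical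

/-- A path bounded below in norm by `δ` which alternates between the two half-lines spanned by
`ζ 0` has length at least `2 δ` between consecutive alternations. -/
lemma alternation_bound {F : Type*} [NormedAddCommGroup F] [NormedSpace ℝ F] [CompleteSpace F]
    {ζ ζ' : ℝ → F} (hζ : ∀ t, HasDerivAt ζ (ζ' t) t) (hc : Continuous ζ') {P δ : ℝ}
    (hδ : ∀ t ∈ Set.Icc 0 P, δ ≤ ‖ζ t‖) {k : ℕ} {s : Fin k → ℝ} (hs : StrictMono s)
    (hsP : ∀ i, s i ∈ Set.Icc 0 P) {z : F}
    (h : ∀ i : Fin k, ∃ μ : ℝ, 0 < μ ∧ ζ (s i) = (sgn i * μ) • z) (i : Fin k) :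
    2 * δ * (i : ℕ) ≤ ∫ t in (0 : ℝ)..P, ‖ζ' t‖ := by
  have h_int : ∀ a b, IntervalIntegrable (fun t => ‖ζ' t‖) MeasureTheory.volume a b :=
    fun a b => hc.norm.intervalIntegrable a b
  have key : ∀ j : ℕ, ∀ hj : j < k, 2 * δ * j ≤ ∫ t in (0 : ℝ)..s ⟨j, hj⟩, ‖ζ' t‖ := by
    intro j
    induction j with
    | zero =>
      intro hj
      simp only [Nat.cast_zero, mul_zero]
      exact intervalIntegral.integral_nonneg (hsP _).1 fun _ _ => norm_nonneg _
    | succ j ih =>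
      intro hj
      have hj0 : j < k := (Nat.lt_succ_self j).trans hj
      have h1 := ih hj0
      have hlt : s ⟨j, hj0⟩ < s ⟨j + 1, hj⟩ := hs (Fin.mk_lt_mk.2 (Nat.lt_succ_self j))
      have h2 : 2 * δ ≤ ∫ t in s ⟨j, hj0⟩..s ⟨j + 1, hj⟩, ‖ζ' t‖ := by
        refine le_trans ?_ (intervalIntegral.norm_integral_le_integral_norm hlt.le)
        rw [intervalIntegral.integral_eq_sub_of_hasDerivAt (fun t _ => hζ t)
          (hc.intervalIntegrable _ _)]
        obtain ⟨μ, hμ, e1⟩ := h ⟨j, hj0⟩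
        obtain ⟨ν, hν, e2⟩ := h ⟨j + 1, hj⟩
        have d1 := hδ _ (hsP ⟨j, hj0⟩)
        have d2 := hδ _ (hsP ⟨j + 1, hj⟩)
        have hsg : |sgn j| = 1 := by simp [sgn]
        rw [e1, norm_smul, Real.norm_eq_abs, abs_mul] at d1
        rw [e2, norm_smul, Real.norm_eq_abs, abs_mul] at d2
        rw [e1, e2]
        simp only [sgn_succ, abs_neg, hsg, one_mul, abs_of_pos hμ, abs_of_pos hν] at d1 d2 ⊢
        have e3 : (-sgn j * ν) • z - (sgn j * μ) • z = (-(sgn j * (μ + ν))) • z := by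
          rw [← sub_smul]; congr 1; ring
        rw [e3, norm_smul, Real.norm_eq_abs, abs_neg, abs_mul, hsg, abs_of_pos (add_pos hμ hν)]
        linarith
      rw [← intervalIntegral.integral_add_adjacent_intervals (h_int 0 (s ⟨j, hj0⟩)) (h_int _ _)]
      push_cast
      linarith
  refine (key i i.2).trans ?_
  exact intervalIntegral.integral_mono_interval le_rfl (hsP i).1 (hsP i).2
    (Filter.Eventually.of_forall fun _ => norm_nonneg _) (h_int _ _)

/-- A twisted path is recovered from its velocity. -/
lemma X_eq_of_hasDerivAt {E : Type*} [NormedAddCommGroup E] [InnerProductSpace ℝ E]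
    [ProperSpace E] {P : ℝ} {A : E ≃ₗᵢ[ℝ] E} {B : E →L[ℝ] E} (hB : ∀ v, A (B v) = B v + v)
    {x v : ℝ → E} (hx : ∀ t, HasDerivAt x (v t) t) (hv : Continuous v) (hxP : x P = A (x 0))
    (t : ℝ) : X P B v t = x t := by
  have h : ∀ t, ∫ s in (0 : ℝ)..t, v s = x t - x 0 := fun t =>
    intervalIntegral.integral_eq_sub_of_hasDerivAt (fun s _ => hx s) (hv.intervalIntegrable _ _)
  rw [X, h, h, hxP, map_sub, B_comm A hB]
  abel

variable {q N : ℕ} {P : ℝ}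
  {g : EuclideanSpace ℝ (Fin (q + 2)) ≃ₗᵢ[ℝ] EuclideanSpace ℝ (Fin (q + 2))}

lemma hasDerivAt_toLp {F : Type*} [NormedAddCommGroup F] [NormedSpace ℝ F] {x : ℝ → Fin N → F}
    {v : Fin N → F} {t : ℝ} (h : HasDerivAt x v t) :
    HasDerivAt (fun t => (WithLp.toLp 2 (x t) : PiLp 2 (fun _ : Fin N => F))) (WithLp.toLp 2 v) t :=
  (PiLp.hasFDerivAt_toLp (𝕜 := ℝ) 2 (x t)).comp_hasDerivAt t h

/-- Twisted paths for which the difference of particles `i` and `j` is `(i - j) • y`. -/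
lemma exists_initial {Z : Type*} [TopologicalSpace Z] (hP : 0 < P) {w : Fin N → ℝ}
    (hw : ∀ i, w i ≠ 0) {B : Cfg (q + 2) N →L[ℝ] Cfg (q + 2) N}
    (hB : ∀ v, diagIso N g (B v) = B v + v) {y v : Z → ℝ → EuclideanSpace ℝ (Fin (q + 2))}
    (hvc : Continuous fun p : Z × ℝ => v p.1 p.2) (hyv : ∀ ω t, HasDerivAt (y ω) (v ω t) t)
    (hyg : ∀ ω, y ω 1 = g (y ω 0)) :
    ∃ U : Z → ℝ → Cfg (q + 2) N, (Continuous fun p : Z × ℝ => U p.1 p.2) ∧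
      ∀ i j ω t, pd w i j (X P B (U ω) t)
        = (((i : ℕ) : ℝ) - ((j : ℕ) : ℝ)) • y ω (t / P) := by
  set U : Z → ℝ → Cfg (q + 2) N := fun ω t =>
    WithLp.toLp 2 fun i => (((i : ℕ) : ℝ) / w i * P⁻¹) • v ω (t / P) with hU
  set Y : Z → ℝ → Cfg (q + 2) N := fun ω t =>
    WithLp.toLp 2 fun i => (((i : ℕ) : ℝ) / w i) • y ω (t / P) with hY
  have hUc : Continuous fun p : Z × ℝ => U p.1 p.2 := by
    refine (PiLp.continuous_toLp 2 _).comp (continuous_pi fun i => ?_)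
    have h : Continuous fun p : Z × ℝ => v p.1 (p.2 / P) :=
      hvc.comp (continuous_fst.prodMk (continuous_snd.div_const P))
    exact h.const_smul (((i : ℕ) : ℝ) / w i * P⁻¹)
  have hYd : ∀ ω t, HasDerivAt (Y ω) (U ω t) t := by
    intro ω t
    have h1 : HasDerivAt (fun t (i : Fin N) => (((i : ℕ) : ℝ) / w i) • y ω (t / P))
        (fun i => (((i : ℕ) : ℝ) / w i * P⁻¹) • v ω (t / P)) t := by
      refine hasDerivAt_pi.2 fun i => ?_
      have h2 : HasDerivAt (fun t : ℝ => t / P) P⁻¹ t := by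
        simpa using (hasDerivAt_id t).div_const P
      rw [mul_smul]
      exact ((hyv ω (t / P)).scomp t h2).const_smul (((i : ℕ) : ℝ) / w i)
    exact hasDerivAt_toLp h1
  refine ⟨U, hUc, fun i j ω t => ?_⟩
  rw [X_eq_of_hasDerivAt hB (hYd ω) (hUc.comp (Continuous.prodMk_right ω))]
  · simp only [hY, pd_apply, smul_smul, sub_smul, mul_div_cancel₀ _ (hw _)]
  · ext1 i
    simp only [hY, diagIso_apply, map_smul, div_self hP.ne', zero_div, hyg]

/-- There are critical points of arbitrarily high action. Otherwise, with `c` above all critical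
levels, the family of `alternating_family`, with as many alternations as desired, could be pushed
below the level `c`, where the number of alternations is bounded. -/
theorem exists_high_crit (hN : 2 ≤ N) (S : Pot (Cfg (q + 2) N) P (diagIso N g)) {w : Fin N → ℝ}
    (hw : ∀ i, w i ≠ 0) (hΩ : S.Ω = nonColl (q + 2) w) (hg : ∀ v, v ≠ 0 → g v ≠ v) (c : ℝ) :
    ∃ u, Crit S u ∧ c ≤ act P S.B S.W u := by
  by_contra hcon
  push Not at hcon
  have hP := S.hP
  let i₀ : Fin N := ⟨0, by omega⟩
  let i₁ : Fin N := ⟨1, by omega⟩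
  have hi : i₁ ≠ i₀ := by simp [i₀, i₁]
  set L := pd (n := q + 2) w i₁ i₀ with hL
  obtain ⟨K, hKΩ, hK, hKu⟩ := S.strong c
  obtain ⟨δ, hδ, hδK⟩ : ∃ δ > 0, ∀ Y ∈ K, δ ≤ ‖L Y‖ := by
    refine hK.exists_forall_le' (a := 0) L.continuous.norm.continuousOn fun Y hY => ?_
    have h1 := hKΩ hY
    rw [hΩ] at h1
    exact norm_pos_iff.2 (h1 i₁ i₀ hi)
  set C : ℝ := ‖L‖ * Real.sqrt (P * (2 * c)) with hC
  obtain ⟨M, hM⟩ := exists_nat_gt (C / (2 * δ))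
  obtain ⟨k, hk, hlast⟩ : ∃ k, Even k ∧ M < k := ⟨2 * (M + 1), even_two_mul _, by omega⟩
  obtain ⟨y, v, hyc, hvc, hyv, hy0, hyg, hyH⟩ :=
    alternating_family (k := k) hk g hg
  obtain ⟨U, hUc, hpd⟩ := exists_initial hP hw S.hB hvc hyv hyg
  have hmem : ∀ t ∈ Set.Icc 0 P, t / P ∈ Set.Icc (0 : ℝ) 1 := fun t ht =>
    ⟨div_nonneg ht.1 hP.le, (div_le_one hP).2 ht.2⟩
  have hmem2 : ∀ t ∈ Set.Icc (0 : ℝ) 1, P * t ∈ Set.Icc 0 P := fun t ht =>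
    ⟨mul_nonneg hP.le ht.1, mul_le_of_le_one_right hP.le ht.2⟩
  have hUA : ∀ ω, Adm P S.B S.Ω (U ω) := by
    refine fun ω => ⟨hUc.comp (Continuous.prodMk_right ω), fun t ht => ?_⟩
    rw [hΩ]
    intro i j hij
    rw [hpd]
    refine smul_ne_zero ?_ (hy0 ω _ (hmem t ht))
    rw [sub_ne_zero]
    exact_mod_cast fun h => hij (Fin.ext h)
  obtain ⟨V, hVA, hVc, H, hHc, hH0, hH1, hHΩ, hHP⟩ := exists_deform hcon hUc hUA
  obtain ⟨ω, s, hs, hs01, hsz⟩ := hyH (fun τ ω t => L (H τ ω (P * t)))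
    (L.continuous.comp (hHc.comp (f := fun p : ℝ × (Fin k → Fin (q + 2) → Circle) × ℝ => (p.1, p.2.1, P * p.2.2))
      (by fun_prop)))
    (fun ω t ht => by
      beta_reduce
      rw [hH0 ω _ (hmem2 t ht), hL, hpd, mul_div_cancel_left₀ _ hP.ne']
      simp [i₀, i₁])
    (fun τ hτ ω t ht => by
      have := hHΩ τ hτ ω _ (hmem2 t ht)
      rw [hΩ] at this
      exact this i₁ i₀ hi)
    (fun τ hτ ω => by
      beta_reduce
      rw [mul_one, mul_zero, hHP τ hτ, hL, pd_diagIso])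
  have hVω := (hVA ω).1
  have hb := alternation_bound (ζ := fun t => L (X P S.B (V ω) t)) (ζ' := fun t => L (V ω t))
    (fun t => L.hasFDerivAt.comp_hasDerivAt t (hasDerivAt_X hVω t)) (by fun_prop)
    (P := P) (δ := δ) (fun t ht => hδK _ (hKu _ (hVA ω) (hVc ω) t ht))
    (s := fun i => P * s i) (fun i j hij => mul_lt_mul_of_pos_left (hs hij) hP)
    (fun i => hmem2 _ (hs01 i)) (z := L (H 1 ω (P * 0)))
    (fun i => by
      obtain ⟨μ, hμ, e⟩ := hsz i
      refine ⟨μ, hμ, ?_⟩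
      beta_reduce at e ⊢
      rw [← hH1 ω _ (hmem2 _ (hs01 i)), e]) ⟨M, hlast⟩
  have h1 : ∫ t in (0 : ℝ)..P, ‖L (V ω t)‖ ≤ ‖L‖ * ∫ t in (0 : ℝ)..P, ‖V ω t‖ := by
    rw [← intervalIntegral.integral_const_mul]
    exact intervalIntegral.integral_mono_on hP.le
      (Continuous.intervalIntegrable (by fun_prop) _ _)
      (Continuous.intervalIntegrable (by fun_prop) _ _) fun t _ => L.le_opNorm _
  have h2 : ∫ t in (0 : ℝ)..P, ‖V ω t‖ ≤ Real.sqrt (P * (2 * c)) :=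
    Real.le_sqrt_of_sq_le ((sq_integral_norm_le hP hVω).trans
      (mul_le_mul_of_nonneg_left (energy_le (hVA ω) (hVc ω)) hP.le))
  have h3 := mul_le_mul_of_nonneg_left h2 (norm_nonneg L)
  rw [div_lt_iff₀ (by positivity)] at hM
  simp only at hb
  linarith

end HighCritical

/-! ### Solutions from critical points -/

section Solutions

lemma gradient_single {N : ℕ} {F : Type*} [NormedAddCommGroup F] [InnerProductSpace ℝ F]
    [CompleteSpace F] {f : PiLp 2 (fun _ : Fin N => F) → ℝ} {Y : PiLp 2 (fun _ : Fin N => F)}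
    (hf : DifferentiableAt ℝ f Y) (i : Fin N) (a : ℝ) (y₀ : F) :
    gradient (fun y => f (Y + a • WithLp.toLp 2 (Pi.single i (y - y₀)))) y₀
      = a • gradient f Y i := by
  let ℓ : F →L[ℝ] PiLp 2 (fun _ : Fin N => F) :=
    a • ((PiLp.continuousLinearEquiv 2 ℝ (fun _ : Fin N => F)).symm.toContinuousLinearMap.comp
      (ContinuousLinearMap.single ℝ (fun _ : Fin N => F) i))
  have hℓ : ∀ y, ℓ y = a • WithLp.toLp 2 (Pi.single i y) := fun y => rfl
  have h1 : HasFDerivAt (fun y => Y + ℓ (y - y₀)) ℓ y₀ := by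
    simp only [map_sub]
    exact (ℓ.hasFDerivAt.sub_const (ℓ y₀)).const_add Y
  have h2 : HasFDerivAt f (fderiv ℝ f Y) (Y + ℓ (y₀ - y₀)) := by
    rw [sub_self, map_zero, add_zero]; exact hf.hasFDerivAt
  have h3 := h2.comp y₀ h1
  refine ext_inner_right ℝ fun z => ?_
  have e : (fun y => f (Y + a • WithLp.toLp 2 (Pi.single i (y - y₀))))
      = f ∘ fun y => Y + ℓ (y - y₀) := rfl
  rw [e, gradient, InnerProductSpace.toDual_symm_apply, h3.fderiv,
    ContinuousLinearMap.comp_apply, hℓ, map_smul]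
  have h4 : fderiv ℝ f Y (WithLp.toLp 2 (Pi.single i z))
      = inner ℝ (gradient f Y) (WithLp.toLp 2 (Pi.single i z)) := by
    rw [gradient, InnerProductSpace.toDual_symm_apply]
  rw [h4, PiLp.inner_apply, Finset.sum_eq_single i]
  · simp [inner_smul_left]
  · intro j _ hj
    simp [Pi.single_eq_of_ne hj]
  · simp

variable {n N : ℕ}

/-- The partial gradients of `Vtot` in terms of the gradient in rescaled coordinates. -/
lemma gradient_update {w : Fin N → ℝ} (hw : ∀ i, w i ≠ 0)
    {V : Fin N → Fin N → ℝ → EuclideanSpace ℝ (Fin n) → ℝ}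
    (hV : ∀ i j, i ≠ j → ContDiffOn ℝ 2 (fun p : ℝ × EuclideanSpace ℝ (Fin n) => V i j p.1 p.2)
        {p : ℝ × EuclideanSpace ℝ (Fin n) | p.2 ≠ 0})
    {Vtot : ℝ → (Fin N → EuclideanSpace ℝ (Fin n)) → ℝ}
    (hVw : ∀ t (Y : Cfg n N), Vtot t (fun i => w i • Y i) = pot w V t Y)
    (t : ℝ) {Y : Cfg n N} (hY : Y ∈ nonColl n w) (i : Fin N) :
    gradient (fun y => Vtot t (Function.update (fun j => w j • Y j) i y)) (w i • Y i)
      = (w i)⁻¹ • gradient (pot w V t) Y i := by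
  have hd : DifferentiableAt ℝ (pot w V t) Y :=
    (hasFDerivAt_slice (isOpen_nonColl w) (contDiffOn_pot w hV) t hY).differentiableAt
  rw [← gradient_single hd i (w i)⁻¹ (w i • Y i)]
  congr 1
  funext y
  rw [← hVw]
  congr 1
  funext j
  by_cases hj : j = i
  · subst hj
    simp [smul_sub, smul_smul, hw]
  · simp [hj]

lemma contDiff_two_of_hasDerivAt {F : Type*} [NormedAddCommGroup F] [NormedSpace ℝ F]
    {f f' f'' : ℝ → F} (h1 : ∀ t, HasDerivAt f (f' t) t) (h2 : ∀ t, HasDerivAt f' (f'' t) t)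
    (hc : Continuous f'') : ContDiff ℝ 2 f := by
  have e1 : deriv f = f' := funext fun t => (h1 t).deriv
  have e2 : deriv f' = f'' := funext fun t => (h2 t).deriv
  rw [show (2 : WithTop ℕ∞) = 1 + 1 by norm_num, contDiff_succ_iff_deriv]
  refine ⟨fun t => (h1 t).differentiableAt, by simp, ?_⟩
  rw [e1, contDiff_one_iff_deriv, e2]
  exact ⟨fun t => (h2 t).differentiableAt, hc⟩

/-- A critical point of the action yields, in the original coordinates `x i = w i • Y i`, a
symmetric solution of the equations of motion; its action is determined by the solution. -/
lemma solution_of_crit {P : ℝ} {g : EuclideanSpace ℝ (Fin n) ≃ₗᵢ[ℝ] EuclideanSpace ℝ (Fin n)}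
    (S : Pot (Cfg n N) P (diagIso N g)) {w m : Fin N → ℝ} (hw : ∀ i, w i ≠ 0)
    (hm : ∀ i, m i * w i = (w i)⁻¹)
    {V : Fin N → Fin N → ℝ → EuclideanSpace ℝ (Fin n) → ℝ}
    (hV : ∀ i j, i ≠ j → ContDiffOn ℝ 2 (fun p : ℝ × EuclideanSpace ℝ (Fin n) => V i j p.1 p.2)
        {p : ℝ × EuclideanSpace ℝ (Fin n) | p.2 ≠ 0})
    {Vtot : ℝ → (Fin N → EuclideanSpace ℝ (Fin n)) → ℝ}
    (hVw : ∀ t (Y : Cfg n N), Vtot t (fun i => w i • Y i) = pot w V t Y)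
    (hDW : S.DW = fun t => gradient (pot w V t)) (hΩ : S.Ω = nonColl n w)
    {u : ℝ → Cfg n N} (hu : Crit S u) :
    ∃ x : ℝ → Fin N → EuclideanSpace ℝ (Fin n), ContDiff ℝ 2 x ∧
      (∀ t i j, i ≠ j → x t i ≠ x t j) ∧ (∀ t i, x (t + P) i = g (x t i)) ∧
      (∀ t i, m i • deriv (deriv (fun τ => x τ i)) t
          + gradient (fun y => Vtot t (Function.update (x t) i y)) (x t i) = 0) ∧
      act P S.B S.W u
        = act P S.B S.W fun t => WithLp.toLp 2 fun i => (w i)⁻¹ • deriv (fun τ => x τ i) t := by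
  obtain ⟨Y, v, hY, hv, hc, hYΩ, hYg, hYu⟩ := exists_solution hu
  rw [hΩ] at hYΩ
  simp only [hDW] at hv hc
  have hP := S.hP
  let p : Fin N → Cfg n N →L[ℝ] EuclideanSpace ℝ (Fin n) := fun i =>
    w i • PiLp.proj 2 (fun _ : Fin N => EuclideanSpace ℝ (Fin n)) i
  have hp : ∀ i Z, p i Z = w i • Z i := fun i Z => rfl
  have h1 : ∀ i t, HasDerivAt (fun t => w i • Y t i) (w i • v t i) t := fun i t =>
    (p i).hasFDerivAt.comp_hasDerivAt t (hY t)
  have h2 : ∀ i t, HasDerivAt (fun t => w i • v t i) (p i (-gradient (pot w V t) (Y t))) t :=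
    fun i t => (p i).hasFDerivAt.comp_hasDerivAt t (hv t)
  have hcg : ∀ i, Continuous fun t => p i (-gradient (pot w V t) (Y t)) := fun i =>
    (p i).continuous.comp hc.neg
  have e1 : ∀ i, deriv (fun t => w i • Y t i) = fun t => w i • v t i := fun i =>
    funext fun t => (h1 i t).deriv
  refine ⟨fun t i => w i • Y t i, contDiff_pi.2 fun i =>
    contDiff_two_of_hasDerivAt (h1 i) (h2 i) (hcg i), ?_, ?_, ?_, ?_⟩
  · intro t i j hij h
    exact hYΩ t i j hij (sub_eq_zero.2 h)
  · intro t i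
    simp [hYg]
  · intro t i
    beta_reduce
    rw [e1, (h2 i t).deriv, gradient_update hw hV hVw t (hYΩ t) i, hp, smul_smul, hm]
    simp
  · have e : ∀ t ∈ Set.Icc 0 P, u t
        = WithLp.toLp 2 fun i => (w i)⁻¹ • deriv (fun τ => w i • Y τ i) t := by
      intro t ht
      ext1 i
      simp only [e1, smul_smul, inv_mul_cancel₀ (hw _), one_smul, ← (hYu t ht).2]
    unfold act
    congr 1
    · congr 1
      refine intervalIntegral.integral_congr fun t ht => ?_
      rw [Set.uIcc_of_le hP.le] at ht
      beta_reduce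
      rw [e t ht]
    · refine intervalIntegral.integral_congr fun t ht => ?_
      rw [Set.uIcc_of_le hP.le] at ht
      beta_reduce
      rw [X_congr hP.le e ht]

end Solutions

end ZhangZhou

open Finset

/-- **Theorem (Zhang–Zhou)**. Under (V1)–(V6), for any `T > 0` the time-dependent
N-body type system has infinitely many `(g,T)`-symmetric T-periodic non-collision
solutions. -/
theorem zhang_zhou_infinitely_many_symmetric_solutions
    (n N : ℕ) (hn : 2 ≤ n) (hN : 2 ≤ N)
    (T : ℝ) (hT : 0 < T)
    (m : Fin N → ℝ) (hm : ∀ i, 0 < m i)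
    (V : Fin N → Fin N → ℝ → EuclideanSpace ℝ (Fin n) → ℝ)
    -- (V2): each `V i j` is C² in `(t, ξ)` away from the collision set `ξ = 0`
    (hV_C2 : ∀ i j, i ≠ j →
      ContDiffOn ℝ 2 (fun p : ℝ × EuclideanSpace ℝ (Fin n) => V i j p.1 p.2)
        {p : ℝ × EuclideanSpace ℝ (Fin n) | p.2 ≠ 0})
    -- the total potential `V(t, x₁, …, x_N) = (1/2) ∑_{i ≠ j} V_{ij}(t, x_i - x_j)`
    (Vtot : ℝ → (Fin N → EuclideanSpace ℝ (Fin n)) → ℝ)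
    (hVtot : ∀ t X, Vtot t X =
      (1/2) * ∑ i, ∑ j ∈ univ.filter (fun j => j ≠ i), V i j t (X i - X j))
    -- (V3): `V i j t ξ → -∞` uniformly in `t` as `‖ξ‖ → 0`
    (hV3 : ∀ i j, i ≠ j → ∀ M : ℝ, ∃ δ > (0:ℝ),
      ∀ t : ℝ, ∀ ξ : EuclideanSpace ℝ (Fin n), ξ ≠ 0 → ‖ξ‖ < δ → V i j t ξ < M)
    -- (V4)
    (hV4 : ∀ i j, i ≠ j → ∀ t : ℝ, ∀ ξ : EuclideanSpace ℝ (Fin n), ξ ≠ 0 →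
      V i j t ξ ≤ 0)
    -- (V5): Gordon's strong force condition, uniformly in `t`
    (hV5 : ∀ i j, i ≠ j → ∃ r₀ > (0:ℝ), ∃ U : EuclideanSpace ℝ (Fin n) → ℝ,
      ContDiffOn ℝ 1 U {ξ | 0 < ‖ξ‖ ∧ ‖ξ‖ < r₀} ∧
      Filter.Tendsto U (nhdsWithin 0 {ξ | ξ ≠ 0}) Filter.atBot ∧
      ∀ t : ℝ, ∀ ξ : EuclideanSpace ℝ (Fin n), 0 < ‖ξ‖ → ‖ξ‖ < r₀ →
        -V i j t ξ ≥ ‖gradient U ξ‖ ^ 2)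
    -- (V6): the symmetry by a fixed-point-free isometry of finite order `s`
    (g : EuclideanSpace ℝ (Fin n) ≃ₗᵢ[ℝ] EuclideanSpace ℝ (Fin n))
    (s : ℕ) (hs : 1 ≤ s)
    (hgs : ∀ v : EuclideanSpace ℝ (Fin n), (⇑g)^[s] v = v)
    (hg_fix : ∀ v : EuclideanSpace ℝ (Fin n), v ≠ 0 → g v ≠ v)
    (hV6 : ∀ t : ℝ, ∀ X : Fin N → EuclideanSpace ℝ (Fin n),
      (∀ i j, i ≠ j → X i ≠ X j) →
      Vtot (t + T / s) (fun i => g (X i)) = Vtot t X) :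
    {x : ℝ → Fin N → EuclideanSpace ℝ (Fin n) |
      ContDiff ℝ 2 x ∧
      (∀ t : ℝ, x (t + T) = x t) ∧
      (∀ t : ℝ, ∀ i j, i ≠ j → x t i ≠ x t j) ∧
      (∀ t : ℝ, ∀ i, x (t + T / s) i = g (x t i)) ∧
      (∀ t : ℝ, ∀ i,
        m i • deriv (deriv (fun τ => x τ i)) t
          + gradient (fun y => Vtot t (Function.update (x t) i y)) (x t i)
          = 0)}.Infinite := by
  obtain ⟨q, rfl⟩ : ∃ q, n = q + 2 := ⟨n - 2, by omega⟩
  have hs0 : (0 : ℝ) < s := by exact_mod_cast hs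
  have hP : 0 < T / s := div_pos hT hs0
  -- mass-weighted coordinates: `x i = w i • Y i` with `m i * w i ^ 2 = 1`
  let w : Fin N → ℝ := fun i => (Real.sqrt (m i))⁻¹
  have hw : ∀ i, w i ≠ 0 := fun i => inv_ne_zero (Real.sqrt_pos.2 (hm i)).ne'
  have hmw : ∀ i, m i * w i = (w i)⁻¹ := by
    intro i
    have h1 := Real.mul_self_sqrt (hm i).le
    have h2 := (Real.sqrt_pos.2 (hm i)).ne'
    simp only [w, inv_inv]
    nth_rewrite 1 [← h1]
    field_simp
  have hVw : ∀ t (Y : ZhangZhou.Cfg (q + 2) N),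
      Vtot t (fun i => w i • Y i) = ZhangZhou.pot w V t Y := by
    intro t Y
    rw [hVtot]
    rfl
  have hW : ∀ t, ∀ Y ∈ ZhangZhou.nonColl (q + 2) w,
      ZhangZhou.pot w V (t + T / s) (ZhangZhou.diagIso N g Y) = ZhangZhou.pot w V t Y := by
    intro t Y hY
    rw [← hVw, ← hVw, ← hV6 t (fun i => w i • Y i) fun i j hij h => hY i j hij (sub_eq_zero.2 h)]
    congr 1
    funext i
    simp
  obtain ⟨B, hB⟩ := ZhangZhou.exists_B (ZhangZhou.diagIso N g) (fun Y hY => by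
    ext1 i
    by_contra h
    exact hg_fix (Y i) h (congrArg (fun Z : ZhangZhou.Cfg (q + 2) N => Z i) hY))
  let S := ZhangZhou.cfgPot hP w hV_C2 hV3 hV4 hV5 g hB hW
  intro hfin
  -- the action of a solution, as a function of the solution
  let J : (ℝ → Fin N → EuclideanSpace ℝ (Fin (q + 2))) → ℝ := fun x =>
    ZhangZhou.act (T / s) S.B S.W fun t =>
      WithLp.toLp 2 fun i => (w i)⁻¹ • deriv (fun τ => x τ i) t
  obtain ⟨c, hc⟩ := (hfin.image J).bddAbove
  obtain ⟨u, hu, huc⟩ := ZhangZhou.exists_high_crit hN S hw rfl hg_fix (c + 1)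
  obtain ⟨x, hx2, hxne, hxg, hxeq, hxJ⟩ :=
    ZhangZhou.solution_of_crit S hw hmw hV_C2 hVw rfl rfl hu
  have hiter : ∀ k : ℕ, ∀ t i, x (t + k * (T / s)) i = (⇑g)^[k] (x t i) := by
    intro k
    induction k with
    | zero => intro t i; simp
    | succ k ih =>
      intro t i
      rw [Function.iterate_succ_apply', ← ih, ← hxg]
      congr 1
      push_cast
      ring_nf
  have hxT : ∀ t, x (t + T) = x t := by
    intro t
    funext i
    have h1 := hiter s t i
    rwa [hgs, mul_div_cancel₀ _ hs0.ne'] at h1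
  have h2 : J x ≤ c := hc ⟨x, ⟨hx2, hxT, hxne, hxg, hxeq⟩, rfl⟩
  have h3 : ZhangZhou.act (T / s) S.B S.W u = J x := hxJ
  linarith
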